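/- For all integers m ≥ 1 and n ≥ 0, the number of rooted simple 2-connected triangulations of an (m+2)-gon with n interior vertices equals φ_{m,n} = 2(2m+1)!(4n+2m−1)! / ((m−1)!(m+1)!n!(3n+2m+1)!). -/

import Mathlib

/-! **Statement 3.** Brown's formula: for all `m ≥ 1` and `n ≥ 0`, the number of rooted simple
2-connected triangulations of an `(m+2)`-gon with `n` interior vertices equals
`φ_{m,n} = 2(2m+1)!(4n+2m−1)! / ((m−1)!(m+1)!n!(3n+2m+1)!)`.

Triangulations are encoded as rooted combinatorial maps on darts: `σ` is the rotation of the
darts around each vertex (recording the planar embedding), `α` is the fixed-point-free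
involution pairing the two darts of each edge, and `root` is the root dart.  Vertices are the
orbits of `σ`, edges the orbits of `α`, and faces the orbits of `φ = σ * α`.  A triangulation
of the `(m+2)`-gon with `n` interior vertices has `n + m + 2` vertices and (by Euler's formula)
`3n + 2m + 1` edges; requiring one face of degree `m + 2` and all other faces of degree `3`
forces genus `0`, i.e. planarity.  Rooted triangulations are counted up to root-preserving
isomorphism of maps. -/

/-- `d'` lies on the `g`-orbit of `d`. -/
def SameOrbit {X : Type} (g : Equiv.Perm X) (d d' : X) : Prop := ∃ k : ℤ, (g ^ k) d = d'

/-- The number of orbits of a permutation. -/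
noncomputable def numOrbits {X : Type} (g : Equiv.Perm X) : ℕ :=
  Set.ncard (Set.range fun d : X => {x | SameOrbit g d x})

/-- The data of a rooted combinatorial map on `2 * (3n + 2m + 1)` darts. -/
structure RootedMapData (m n : ℕ) where
  /-- rotation of the darts around each vertex -/
  σ : Equiv.Perm (Fin (2 * (3 * n + 2 * m + 1)))
  /-- pairing of the two darts of each edge -/
  α : Equiv.Perm (Fin (2 * (3 * n + 2 * m + 1)))
  /-- the root dart -/
  root : Fin (2 * (3 * n + 2 * m + 1))

/-- The face permutation of a combinatorial map. -/
def RootedMapData.φ {m n : ℕ} (T : RootedMapData m n) :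
    Equiv.Perm (Fin (2 * (3 * n + 2 * m + 1))) := T.σ * T.α

/-- `T` is a rooted simple 2-connected triangulation of an `(m+2)`-gon with `n` interior
vertices. -/
def IsRootedTriangulation {m n : ℕ} (T : RootedMapData m n) : Prop :=
  -- `α` is a fixed-point-free involution: darts pair up into edges
  (∀ d, T.α d ≠ d) ∧ (∀ d, T.α (T.α d) = d) ∧
  -- the map is connected
  (∀ d d', ∃ g ∈ Subgroup.closure ({T.σ, T.α} : Set (Equiv.Perm (Fin (2 * (3 * n + 2 * m + 1))))),
      g d = d') ∧
  -- there are `n + m + 2` vertices (`n` interior ones and `m + 2` on the boundary)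
  numOrbits T.σ = n + m + 2 ∧
  -- one face of degree `m + 2`, and `2n + m` triangular faces (forcing genus 0)
  T.φ.cycleType = (m + 2) ::ₘ Multiset.replicate (2 * n + m) 3 ∧
  -- the root dart lies on the distinguished outer face of degree `m + 2`
  (T.φ.cycleOf T.root).support.card = m + 2 ∧
  -- simple: no loops
  (∀ d, ¬ SameOrbit T.σ d (T.α d)) ∧
  -- simple: no parallel edges
  (∀ d d', SameOrbit T.σ d d' → SameOrbit T.σ (T.α d) (T.α d') → d' = d ∨ d' = T.α d) ∧
  -- 2-connected: deleting the vertex (σ-orbit) of any dart `v` leaves the map connected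
  (∀ v d d' : Fin (2 * (3 * n + 2 * m + 1)), ¬ SameOrbit T.σ v d → ¬ SameOrbit T.σ v d' →
    Relation.ReflTransGen
      (fun a b => ¬ SameOrbit T.σ v a ∧ ¬ SameOrbit T.σ v b ∧ (b = T.σ a ∨ b = T.α a)) d d')

/-- Root-preserving isomorphism of rooted maps. -/
def MapIso {m n : ℕ} (T T' : RootedMapData m n) : Prop :=
  ∃ π : Equiv.Perm (Fin (2 * (3 * n + 2 * m + 1))),
    (∀ d, π (T.σ d) = T'.σ (π d)) ∧ (∀ d, π (T.α d) = T'.α (π d)) ∧ π T.root = T'.root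

/-! Deleting the root edge of a triangulation of a polygon leaves either a triangulation of a
polygon with one more side, or, if the apex of the root triangle lies on the boundary, two
triangulations joined at a vertex, where a single edge counts as a triangulation of a 2-gon.
Conversely, a triangle can be closed over the root edge and its successor unless that would create
a loop or a double edge. So a rooted triangulation amounts, up to isomorphism, to a code recording
these steps, in which only the first boundary neighbor of the root vertex has to be tracked. The
generating series `S m` of the triangulations of an `(m+2)`-gon by number of interior vertices are
then determined by `S 0 = 1` and

  `S (m + 1) = ∑ i + j = m, S i * S j + X * S (m + 2) - X * S 1 * S (m + 1)`.

With the Catalan numbers `C m` and the series `B = 1 + X * B ^ 4` of quaternary trees, the solution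
is `S m = B ^ (2 * m) * (C (m + 1) - (C (m + 1) - C m) * B)`, and the coefficients of the powers of
`B` are explicit. -/

namespace BrownFormula

open Equiv Equiv.Perm

section Orbits

variable {X : Type*}

/-- `S` is a union of orbits of the group generated by `s` and `a`. -/
def Invariant (s a : Perm X) (S : X → Prop) : Prop :=
  (∀ d, S (s d) ↔ S d) ∧ ∀ d, S (a d) ↔ S d

/-- `x` and `y` lie in the same orbit of the group generated by `s` and `a`, phrased as: no
invariant predicate separates them. For the rotation and the edge involution of a map this says
that two darts lie in the same component. -/
def Linked (s a : Perm X) (x y : X) : Prop := ∀ S : X → Prop, Invariant s a S → (S x ↔ S y)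

theorem Linked.refl (s a : Perm X) (x : X) : Linked s a x x := fun _ _ => Iff.rfl

theorem Linked.symm {s a : Perm X} {x y : X} (h : Linked s a x y) : Linked s a y x :=
  fun S hS => (h S hS).symm

theorem Linked.trans {s a : Perm X} {x y z : X} (hxy : Linked s a x y) (hyz : Linked s a y z) :
    Linked s a x z :=
  fun S hS => (hxy S hS).trans (hyz S hS)

/-- The partition into orbits of the group generated by `s` and `a`. -/
def linkedSetoid (s a : Perm X) : Setoid X where
  r := Linked s a
  iseqv := ⟨Linked.refl s a, Linked.symm, Linked.trans⟩

/-- The number of connected components of the map with rotation `s` and edge involution `a`. -/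
noncomputable def numComponents (s a : Perm X) : ℕ := Nat.card (Quotient (linkedSetoid s a))

/-- The number of cycles of a permutation, fixed points included. -/
noncomputable def numCycles (g : Perm X) : ℕ := Nat.card (Quotient (SameCycle.setoid g))

theorem linked_apply_left_perm (s a : Perm X) (x : X) : Linked s a x (s x) :=
  fun _ hS => (hS.1 x).symm

theorem linked_apply_right_perm (s a : Perm X) (x : X) : Linked s a x (a x) :=
  fun _ hS => (hS.2 x).symm

theorem invariant_linked (s a : Perm X) (x : X) : Invariant s a (Linked s a x) :=
  ⟨fun d => ⟨fun h => h.trans (linked_apply_left_perm s a d).symm,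
      fun h => h.trans (linked_apply_left_perm s a d)⟩,
    fun d => ⟨fun h => h.trans (linked_apply_right_perm s a d).symm,
      fun h => h.trans (linked_apply_right_perm s a d)⟩⟩

theorem invariant_one_right {g : Perm X} {S : X → Prop} :
    Invariant g 1 S ↔ ∀ d, S (g d) ↔ S d :=
  ⟨And.left, fun h => ⟨h, fun _ => Iff.rfl⟩⟩

theorem iff_of_sameCycle {g : Perm X} {S : X → Prop} (hS : ∀ d, S (g d) ↔ S d) {x y : X}
    (h : g.SameCycle x y) : S x ↔ S y := by
  obtain ⟨k, rfl⟩ := h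
  induction k using Int.induction_on with
  | zero => rfl
  | succ k ih => rw [add_comm, zpow_add, zpow_one, mul_apply, hS, ih]
  | pred k ih =>
    rw [ih, ← hS ((g ^ (-(k : ℤ) - 1)) x), ← mul_apply, ← zpow_one_add, add_sub_cancel]

theorem linked_one_right {g : Perm X} {x y : X} : Linked g 1 x y ↔ g.SameCycle x y :=
  ⟨fun h => (h _ (invariant_one_right.2 fun _ => sameCycle_apply_right)).1 SameCycle.rfl,
    fun h _ hS => iff_of_sameCycle hS.1 h⟩

theorem numComponents_one_right (g : Perm X) : numComponents g 1 = numCycles g := by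
  have h : linkedSetoid g 1 = SameCycle.setoid g := Setoid.ext fun _ _ => linked_one_right
  rw [numComponents, numCycles, h]

theorem numCycles_one : numCycles (1 : Perm X) = Nat.card X :=
  Nat.card_congr (Equiv.ofBijective (Quotient.mk (SameCycle.setoid 1))
    ⟨fun _ _ h => sameCycle_one.1 (Quotient.exact h), Quotient.mk_surjective⟩).symm

theorem linked_iff_exists_mem_closure {s a : Perm X} {x y : X} :
    Linked s a x y ↔ ∃ g ∈ Subgroup.closure ({s, a} : Set (Perm X)), g x = y := by
  have hs : s ∈ Subgroup.closure ({s, a} : Set (Perm X)) := Subgroup.subset_closure (by simp)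
  have ha : a ∈ Subgroup.closure ({s, a} : Set (Perm X)) := Subgroup.subset_closure (by simp)
  constructor
  · intro h
    refine (h (fun z => ∃ g ∈ Subgroup.closure ({s, a} : Set (Perm X)), g x = z) ?_).1
      ⟨1, one_mem _, rfl⟩
    have step : ∀ p ∈ Subgroup.closure ({s, a} : Set (Perm X)), ∀ z,
        (∃ g ∈ Subgroup.closure ({s, a} : Set (Perm X)), g x = p z) ↔
          ∃ g ∈ Subgroup.closure ({s, a} : Set (Perm X)), g x = z := fun p hp z =>
      ⟨fun ⟨g, hg, e⟩ => ⟨p⁻¹ * g, mul_mem (inv_mem hp) hg, by simp [e]⟩,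
        fun ⟨g, hg, e⟩ => ⟨p * g, mul_mem hp hg, by rw [mul_apply, e]⟩⟩
    exact ⟨step s hs, step a ha⟩
  · rintro ⟨g, hg, rfl⟩ S hS
    have hinv : ∀ z, S (g z) ↔ S z := by
      induction hg using Subgroup.closure_induction with
      | mem p hp =>
        rcases hp with rfl | rfl
        exacts [hS.1, hS.2]
      | one => exact fun _ => Iff.rfl
      | mul p q _ _ hp hq => exact fun z => (hp (q z)).trans (hq z)
      | inv p _ hp => exact fun z => by simpa using (hp (p.symm z)).symm
    exact (hinv x).symm

theorem apply_iff_of_apply_imp [Finite X] {g : Perm X} {S : X → Prop} (hS : ∀ d, S d → S (g d))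
    (d : X) : S (g d) ↔ S d :=
  ⟨fun h => by simpa using perm_symm_mapsTo_of_mapsTo g (s := {d | S d}) hS h, hS d⟩

theorem sameCycle_induction [Finite X] {g : Perm X} {x y : X} (h : g.SameCycle x y)
    (S : X → Prop) (hx : S x) (hS : ∀ d, S d → S (g d)) : S y :=
  (iff_of_sameCycle (apply_iff_of_apply_imp hS) h).1 hx

theorem sameCycle_self_apply (g : Perm X) (x : X) : g.SameCycle x (g x) :=
  sameCycle_apply_right.2 SameCycle.rfl

theorem not_sameCycle_of_apply_eq {g : Perm X} {x y : X} (hx : g x = x) (hne : x ≠ y) :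
    ¬ g.SameCycle x y :=
  fun h => hne (h.eq_of_left hx)

/-- The orbits of `s'` and `a'` are those of `s` and `a`, with the orbits of `p` and `q` united. -/
def MergesAt (s a s' a' : Perm X) (p q : X) : Prop :=
  ∀ S, Invariant s' a' S ↔ Invariant s a S ∧ (S p ↔ S q)

namespace MergesAt

variable {s a s' a' : Perm X} {p q : X}

theorem linked_iff (h : MergesAt s a s' a' p q) (x y : X) :
    Linked s' a' x y ↔ Linked s a x y ∨ Linked s a x p ∧ Linked s a q y ∨
      Linked s a x q ∧ Linked s a p y := by
  constructor
  · intro hxy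
    have hinv : Invariant s a (fun z => Linked s a x z ∨ Linked s a x p ∧ Linked s a q z ∨
        Linked s a x q ∧ Linked s a p z) := by
      have hx := invariant_linked s a x
      have hp := invariant_linked s a p
      have hq := invariant_linked s a q
      exact ⟨fun d => by simp only [hx.1 d, hp.1 d, hq.1 d],
        fun d => by simp only [hx.2 d, hp.2 d, hq.2 d]⟩
    refine (hxy _ ((h _).2 ⟨hinv, ?_⟩)).1 (Or.inl (Linked.refl _ _ _))
    have hp := Linked.refl s a p
    have hq := Linked.refl s a q
    tauto
  · intro hxy S hS
    obtain ⟨hinv, hpq⟩ := (h S).1 hS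
    rcases hxy with hxy | ⟨hxp, hqy⟩ | ⟨hxq, hpy⟩
    · exact hxy S hinv
    · rw [hxp S hinv, hpq, hqy S hinv]
    · rw [hxq S hinv, ← hpq, hpy S hinv]

theorem of_one_right {g g' : Perm X} (h : MergesAt g 1 g' 1 p q) (a : Perm X) :
    MergesAt g a g' a p q := by
  intro S
  have hS := h S
  simp only [invariant_one_right] at hS
  simp only [Invariant, hS]
  tauto

end MergesAt

theorem card_quotient_add_one_of_merge [Finite X] (R R' : Setoid X) {p q : X} (hpq : ¬ R p q)
    (hR' : ∀ x y, R' x y ↔ R x y ∨ R x p ∧ R q y ∨ R x q ∧ R p y) :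
    Nat.card (Quotient R') + 1 = Nat.card (Quotient R) := by
  have hle : R ≤ R' := fun {x y} hxy => (hR' x y).2 (Or.inl hxy)
  let f : Quotient R → Quotient R' := Quotient.map id fun _ _ hxy => hle hxy
  have hinj : Set.InjOn f {Quotient.mk R q}ᶜ := by
    intro u hu v hv huv
    induction u using Quotient.inductionOn with | _ x
    induction v using Quotient.inductionOn with | _ y
    rcases (hR' x y).1 (Quotient.exact huv) with hxy | ⟨-, hqy⟩ | ⟨hxq, -⟩
    · exact Quotient.sound hxy
    · exact absurd (Quotient.sound (R.symm hqy)) hv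
    · exact absurd (Quotient.sound hxq) hu
  have himage : f '' {Quotient.mk R q}ᶜ = Set.univ := by
    refine Set.eq_univ_of_forall fun u => ?_
    induction u using Quotient.inductionOn with | _ x
    by_cases hx : R x q
    · exact ⟨Quotient.mk R p, fun h => hpq (Quotient.exact h),
        Quotient.sound ((hR' p x).2 (Or.inr (Or.inl ⟨R.refl _, R.symm hx⟩)))⟩
    · exact ⟨Quotient.mk R x, fun h => hx (Quotient.exact h), rfl⟩
  have hcard := hinj.ncard_image
  rw [himage, Set.ncard_univ] at hcard
  rw [hcard, add_comm, ← Set.ncard_singleton (Quotient.mk R q), Set.ncard_add_ncard_compl]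

theorem MergesAt.numComponents_add_one [Finite X] {s a s' a' : Perm X} {p q : X}
    (h : MergesAt s a s' a' p q) (hpq : ¬ Linked s a p q) :
    numComponents s' a' + 1 = numComponents s a :=
  card_quotient_add_one_of_merge (linkedSetoid s a) (linkedSetoid s' a') hpq h.linked_iff

theorem MergesAt.numComponents_eq {s a s' a' : Perm X} {p q : X}
    (h : MergesAt s a s' a' p q) (hpq : Linked s a p q) :
    numComponents s' a' = numComponents s a := by
  have hsetoid : linkedSetoid s' a' = linkedSetoid s a := by
    refine Setoid.ext fun x y => (h.linked_iff x y).trans ⟨?_, Or.inl⟩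
    rintro (hxy | ⟨hxp, hqy⟩ | ⟨hxq, hpy⟩)
    · exact hxy
    · exact (hxp.trans hpq).trans hqy
    · exact (hxq.trans hpq.symm).trans hpy
  rw [numComponents, numComponents, hsetoid]

end Orbits

section Transpositions

variable {X : Type*} [DecidableEq X]

theorem sameCycle_swap_mul [Finite X] {g : Perm X} {a b : X} (h : ¬ g.SameCycle a b) :
    (swap a b * g).SameCycle a b := by
  have hcycle : ∀ d, g.SameCycle a d → (swap a b * g).SameCycle a d := by
    intro d hd
    refine (sameCycle_induction hd (fun e => g.SameCycle a e ∧ (swap a b * g).SameCycle a e)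
      ⟨SameCycle.rfl, SameCycle.rfl⟩ ?_).2
    rintro e ⟨hg, hsg⟩
    refine ⟨sameCycle_apply_right.2 hg, ?_⟩
    by_cases hea : g e = a
    · rw [hea]
    have heb : g e ≠ b := fun heb => h (heb ▸ sameCycle_apply_right.2 hg)
    rw [← swap_apply_of_ne_of_ne hea heb, ← mul_apply]
    exact sameCycle_apply_right.2 hsg
  have hlast := hcycle (g⁻¹ a) (sameCycle_inv.1 (sameCycle_self_apply g⁻¹ a))
  simpa using sameCycle_apply_right.2 hlast

theorem not_sameCycle_swap_mul [Finite X] {g : Perm X} {a b : X} (hne : a ≠ b)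
    (h : g.SameCycle a b) : ¬ (swap a b * g).SameCycle a b := by
  classical
  have hex : ∃ k : ℕ, (g ^ k) a = b := h.exists_nat_pow_eq
  obtain ⟨k, hk, hmin⟩ : ∃ k : ℕ, (g ^ k) a = b ∧ ∀ j < k, (g ^ j) a ≠ b :=
    ⟨Nat.find hex, Nat.find_spec hex, fun _ => Nat.find_min hex⟩
  have hk_pos : 0 < k := Nat.pos_of_ne_zero fun hk_zero => hne (by simpa [hk_zero] using hk)
  intro hswap
  -- The first `k` iterates of `a` are closed under `swap a b * g` and do not contain `b`.
  obtain ⟨j, hj, hjb⟩ := sameCycle_induction hswap (fun d => ∃ j < k, (g ^ j) a = d)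
    ⟨0, hk_pos, rfl⟩ (by
      rintro _ ⟨j, hj, rfl⟩
      rw [mul_apply, ← mul_apply g, ← pow_succ']
      by_cases hjk : j + 1 = k
      · exact ⟨0, hk_pos, by rw [hjk, hk, swap_apply_right, pow_zero, one_apply]⟩
      have hja : (g ^ (j + 1)) a ≠ a := fun hja => hmin (k - (j + 1)) (by omega) <| by
        rw [← hk]
        conv_rhs => rw [← Nat.sub_add_cancel (show j + 1 ≤ k by omega), pow_add, mul_apply, hja]
      exact ⟨j + 1, by omega, by rw [swap_apply_of_ne_of_ne hja (hmin (j + 1) (by omega))]⟩)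
  exact hmin j hj hjb

theorem swap_apply_iff_of_iff {a b : X} {S : X → Prop} (hab : S a ↔ S b) (d : X) :
    S (swap a b d) ↔ S d := by
  rcases eq_or_ne d a with rfl | hda
  · rw [swap_apply_left, hab]
  rcases eq_or_ne d b with rfl | hdb
  · rw [swap_apply_right, hab]
  rw [swap_apply_of_ne_of_ne hda hdb]

theorem mergesAt_swap_mul [Finite X] {g : Perm X} {a b : X} (h : ¬ g.SameCycle a b) :
    MergesAt g 1 (swap a b * g) 1 a b := by
  intro S
  simp only [invariant_one_right]
  constructor
  · intro hS
    have hab : S a ↔ S b := iff_of_sameCycle hS (sameCycle_swap_mul h)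
    exact ⟨fun d => by rw [← swap_apply_iff_of_iff hab, ← mul_apply, hS], hab⟩
  · rintro ⟨hS, hab⟩ d
    rw [mul_apply, swap_apply_iff_of_iff hab, hS]

theorem mergesAt_edge {s a : Perm X} {x y : X} (hx : a x = x) :
    MergesAt s a s (swap x y * a) x y := by
  intro S
  constructor
  · intro hS
    have hxy : S x ↔ S y := by simpa [hx] using (hS.2 x).symm
    exact ⟨⟨hS.1, fun d => by rw [← swap_apply_iff_of_iff hxy, ← mul_apply, hS.2]⟩, hxy⟩
  · rintro ⟨hS, hxy⟩
    exact ⟨hS.1, fun d => by rw [mul_apply, swap_apply_iff_of_iff hxy, hS.2]⟩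

theorem numCycles_swap_mul_add_one [Finite X] {g : Perm X} {a b : X} (h : ¬ g.SameCycle a b) :
    numCycles (swap a b * g) + 1 = numCycles g := by
  simpa only [numComponents_one_right] using
    (mergesAt_swap_mul h).numComponents_add_one (mt linked_one_right.1 h)

theorem numCycles_swap_mul_of_sameCycle [Finite X] {g : Perm X} {a b : X} (hne : a ≠ b)
    (h : g.SameCycle a b) : numCycles (swap a b * g) = numCycles g + 1 := by
  simpa only [← mul_assoc, swap_mul_self, one_mul] using
    (numCycles_swap_mul_add_one (not_sameCycle_swap_mul hne h)).symm

end Transpositions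

section Genus

variable {X : Type*}

theorem swap_mul_involutive [DecidableEq X] {a : Perm X} (ha : Function.Involutive a) (x : X) :
    Function.Involutive (swap x (a x) * a) := by
  have hcomm : a * swap x (a x) = swap x (a x) * a := by
    rw [mul_swap_eq_swap_mul, ha, swap_comm]
  have hsq : a * a = 1 := Equiv.ext ha
  refine fun d => ?_
  rw [← mul_apply, mul_assoc, ← mul_assoc a, hcomm, mul_assoc, hsq, mul_one, swap_mul_self,
    one_apply]

variable [Finite X]

theorem euler_defect_swap_mul_le [DecidableEq X] (s : Perm X) {a : Perm X} {x y : X} (hx : a x = x)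
    (hne : x ≠ y) :
    numCycles (swap x y * a) + numCycles (s * (swap x y * a)) + 2 * numComponents s a ≤
      numCycles a + numCycles (s * a) + 2 * numComponents s (swap x y * a) := by
  have hedges := numCycles_swap_mul_add_one (not_sameCycle_of_apply_eq hx hne)
  have hmerge := mergesAt_edge (s := s) (y := y) hx
  have hface : s * (swap x y * a) = swap (s x) (s y) * (s * a) := by
    rw [← mul_assoc, mul_swap_eq_swap_mul, mul_assoc]
  by_cases hlinked : Linked s a x y
  · have hcomponents := hmerge.numComponents_eq hlinked
    have hfaces : numCycles (s * (swap x y * a)) ≤ numCycles (s * a) + 1 := by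
      rw [hface]
      by_cases hcycle : (s * a).SameCycle (s x) (s y)
      · exact (numCycles_swap_mul_of_sameCycle (s.injective.ne hne) hcycle).le
      · have := numCycles_swap_mul_add_one hcycle
        omega
    omega
  · have hcomponents := hmerge.numComponents_add_one hlinked
    have hcycle : ¬ (s * a).SameCycle (s x) (s y) := fun hcycle => hlinked fun S hS => by
      rw [← hS.1 x, ← hS.1 y]
      exact iff_of_sameCycle (fun d => by rw [mul_apply, hS.1, hS.2]) hcycle
    have hfaces := numCycles_swap_mul_add_one hcycle
    rw [← hface] at hfaces
    omega

theorem card_moved_swap_mul_lt [DecidableEq X] {a : Perm X} (ha : Function.Involutive a) {x : X}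
    (hx : a x ≠ x) :
    Set.ncard {d | (swap x (a x) * a) d ≠ d} < Set.ncard {d | a d ≠ d} := by
  refine Set.ncard_lt_ncard ⟨fun d hd had => hd ?_, fun hsub => hsub hx ?_⟩
  · have hdx : d ≠ x := fun e => hx (e ▸ had)
    have hdy : d ≠ a x := fun e => hx <| by rw [e, ha] at had; exact had.symm
    rw [mul_apply, had, swap_apply_of_ne_of_ne hdx hdy]
  · rw [mul_apply, swap_apply_right]

/-- The genus inequality `V - E + F ≤ 2 C`; the edges and the fixed points of `a` are the cycles
of `a`, so `E = |X| - numCycles a`. -/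
theorem euler_inequality (s a : Perm X) (ha : Function.Involutive a) :
    numCycles s + numCycles a + numCycles (s * a) ≤ Nat.card X + 2 * numComponents s a := by
  classical
  induction hN : Set.ncard {d | a d ≠ d} using Nat.strong_induction_on generalizing a with
  | _ N ih =>
  by_cases ha_one : a = 1
  · rw [ha_one, numCycles_one, mul_one, numComponents_one_right]
    omega
  obtain ⟨x, hx⟩ : ∃ x, a x ≠ x := by
    by_contra! h
    exact ha_one (Equiv.ext h)
  have hdeleted := ih _ (hN ▸ card_moved_swap_mul_lt ha hx) _ (swap_mul_involutive ha x) rfl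
  have hfix : (swap x (a x) * a) x = x := by rw [mul_apply, swap_apply_right]
  have hstep := euler_defect_swap_mul_le s hfix hx.symm
  rw [← mul_assoc, swap_mul_self, one_mul] at hstep
  omega

end Genus

section ClassCounting

variable {X : Type*}

theorem card_quotient_eq_sum [Fintype X] (R : Setoid X) :
    (Nat.card (Quotient R) : ℚ) = ∑ x : X, (Nat.card {y // R x y} : ℚ)⁻¹ := by
  classical
  rw [← Finset.sum_fiberwise (s := Finset.univ) (g := Quotient.mk R), Nat.card_eq_fintype_card,
    Fintype.card_eq_sum_ones, Nat.cast_sum]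
  refine Finset.sum_congr rfl fun q _ => ?_
  induction q using Quotient.inductionOn with | _ z
  have hsize : ∀ x ∈ Finset.univ.filter (fun x => Quotient.mk R x = Quotient.mk R z),
      (Nat.card {y // R x y} : ℚ)⁻¹ = (Nat.card {y // R z y} : ℚ)⁻¹ := by
    intro x hx
    have hxz : R x z := Quotient.exact (Finset.mem_filter.1 hx).2
    rw [Nat.card_congr (Equiv.subtypeEquivRight fun y =>
      ⟨fun h => R.trans (R.symm hxz) h, fun h => R.trans hxz h⟩)]
  have hfiber : (Finset.univ.filter (fun x => Quotient.mk R x = Quotient.mk R z)).card =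
      Nat.card {y // R z y} := by
    rw [Nat.card_eq_fintype_card, Fintype.card_subtype]
    congr 1
    ext x
    simp only [Finset.mem_filter, Finset.mem_univ, true_and]
    exact Quotient.eq.trans ⟨R.symm, R.symm⟩
  have hpos : Nat.card {y // R z y} ≠ 0 :=
    Nat.card_ne_zero.2 ⟨⟨⟨z, R.refl z⟩⟩, inferInstance⟩
  rw [Finset.sum_congr rfl hsize, Finset.sum_const, nsmul_eq_mul, hfiber,
    mul_inv_cancel₀ (Nat.cast_ne_zero.2 hpos), Nat.cast_one]

theorem card_class_eq_one {R : Setoid X} {x : X} (h : ∀ y, R x y → y = x) :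
    Nat.card {y // R x y} = 1 :=
  Nat.card_eq_one_iff_unique.2
    ⟨⟨fun a b => Subtype.ext ((h _ a.2).trans (h _ b.2).symm)⟩, ⟨⟨x, R.refl x⟩⟩⟩

theorem card_quotient_add_card_of_disjoint [Finite X] {R RA RB : Setoid X}
    (h : ∀ x y, R x y ↔ RA x y ∨ RB x y)
    (hdisj : ∀ x, (∀ y, RA x y → y = x) ∨ (∀ y, RB x y → y = x)) :
    Nat.card (Quotient R) + Nat.card X = Nat.card (Quotient RA) + Nat.card (Quotient RB) := by
  have := Fintype.ofFinite X
  have hclass : ∀ x, (Nat.card {y // R x y} : ℚ)⁻¹ + 1 =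
      (Nat.card {y // RA x y} : ℚ)⁻¹ + (Nat.card {y // RB x y} : ℚ)⁻¹ := by
    intro x
    rcases hdisj x with hA | hB
    · have hRB : ∀ y, R x y ↔ RB x y := fun y =>
        (h x y).trans ⟨fun hy => hy.elim (fun e => hA y e ▸ RB.refl x) id, Or.inr⟩
      rw [card_class_eq_one hA, Nat.card_congr (Equiv.subtypeEquivRight hRB), Nat.cast_one,
        inv_one, add_comm]
    · have hRA : ∀ y, R x y ↔ RA x y := fun y =>
        (h x y).trans ⟨fun hy => hy.elim id fun e => hB y e ▸ RA.refl x, Or.inl⟩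
      rw [card_class_eq_one hB, Nat.card_congr (Equiv.subtypeEquivRight hRA), Nat.cast_one,
        inv_one]
  have hsum : (Nat.card (Quotient R) + Nat.card X : ℚ) =
      Nat.card (Quotient RA) + Nat.card (Quotient RB) := by
    rw [card_quotient_eq_sum R, card_quotient_eq_sum RA, card_quotient_eq_sum RB,
      ← Finset.sum_add_distrib, ← Finset.sum_congr rfl fun x _ => hclass x,
      Finset.sum_add_distrib]
    simp
  exact_mod_cast hsum

theorem ncard_sameCycle_eq_minimalPeriod [Finite X] (g : Perm X) (x : X) :
    Set.ncard {y | g.SameCycle x y} = Function.minimalPeriod g x := by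
  have := Fintype.ofFinite X
  classical
  have hcard := MulAction.minimalPeriod_eq_card (a := g) (b := x)
  rw [← Nat.card_eq_fintype_card] at hcard
  change _ = Function.minimalPeriod (g • ·) x
  rw [hcard]
  change Set.ncard _ = Set.ncard _
  congr 1
  ext d
  simp only [MulAction.mem_orbit_iff, Set.mem_ofPred_eq, Subgroup.exists_zpowers]
  rfl

end ClassCounting

/-- A rooted map living on some of the darts of `X`. The darts outside the map, called ghosts, are
the fixed points of `α`; in all maps considered below they are also fixed by `σ`. Keeping `X` fixed
lets edges be deleted and maps be split without changing the type of darts. -/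
@[ext]
structure DartMap (X : Type*) where
  /-- The rotation of the darts around each vertex. -/
  σ : Perm X
  /-- The involution exchanging the two darts of each edge. -/
  α : Perm X
  /-- The root dart. -/
  root : X

namespace DartMap

section Basic

variable {X : Type*}

/-- The face permutation. -/
def φ (M : DartMap X) : Perm X := M.σ * M.α

/-- `d` lies on the outer face, which is the face of the root. -/
def OnOuter (M : DartMap X) (d : X) : Prop := M.φ.SameCycle M.root d

/-- The vertices of `x` and `y` are joined by an edge. -/
def VertexAdj (M : DartMap X) (x y : X) : Prop :=
  ∃ e, M.α e ≠ e ∧ M.σ.SameCycle x e ∧ M.σ.SameCycle y (M.α e)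

theorem φ_apply (M : DartMap X) (d : X) : M.φ d = M.σ (M.α d) := rfl

/-- `M` is a connected simple plane map all of whose inner faces are triangles, and whose outer
boundary walk may visit a vertex twice only at the head of the root. Deleting the root edge of a
disk triangulation yields such a map. -/
structure IsNearTriangulation (M : DartMap X) : Prop where
  α_involutive : ∀ d, M.α (M.α d) = d
  σ_ghost : ∀ d, M.α d = d → M.σ d = d
  α_root_ne : M.α M.root ≠ M.root
  linked_root : ∀ d, M.α d ≠ d → Linked M.σ M.α M.root d
  inner_face : ∀ d, M.α d ≠ d → ¬ M.OnOuter d → M.φ (M.φ (M.φ d)) = d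
  no_loop : ∀ d, M.α d ≠ d → ¬ M.σ.SameCycle d (M.α d)
  no_parallel : ∀ d d', M.α d ≠ d → M.α d' ≠ d' → M.σ.SameCycle d d' →
    M.σ.SameCycle (M.α d) (M.α d') → d = d'
  euler : numCycles M.σ + numCycles M.α + numCycles M.φ =
    Nat.card X + 2 * numComponents M.σ M.α
  outer_simple_off_head : ∀ d d', M.OnOuter d → M.OnOuter d' → M.σ.SameCycle d d' →
    d ≠ M.φ M.root → d' ≠ M.φ M.root → d = d'

/-- The outer boundary walk visits every vertex at most once. -/
def OuterSimple (M : DartMap X) : Prop :=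
  ∀ d d', M.OnOuter d → M.OnOuter d' → M.σ.SameCycle d d' → d = d'

/-- A triangulation of a polygon; a single edge, with an outer face of degree two, counts as one. -/
def IsDiskTriangulation (M : DartMap X) : Prop := M.IsNearTriangulation ∧ M.OuterSimple

/-- A triangle can be closed over the root and its successor on the outer face: the outer ends of
these two edges are distinct and not adjacent. -/
def IsAddable (M : DartMap X) : Prop :=
  ¬ M.σ.SameCycle M.root (M.φ (M.φ M.root)) ∧ ¬ M.VertexAdj M.root (M.φ (M.φ M.root))

theorem onOuter_root (M : DartMap X) : M.OnOuter M.root := SameCycle.refl _ _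

variable {M : DartMap X} {d e : X}

theorem onOuter_φ : M.OnOuter (M.φ d) ↔ M.OnOuter d := sameCycle_apply_right

theorem α_σ_ne (ghost : ∀ d, M.α d = d → M.σ d = d) (h : M.α d ≠ d) : M.α (M.σ d) ≠ M.σ d :=
  fun hσ => h (by rwa [M.σ.injective (ghost _ hσ)] at hσ)

theorem α_α_ne (h : M.α d ≠ d) : M.α (M.α d) ≠ M.α d := fun hα => h (M.α.injective hα)

theorem α_φ_ne (ghost : ∀ d, M.α d = d → M.σ d = d) (h : M.α d ≠ d) : M.α (M.φ d) ≠ M.φ d :=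
  α_σ_ne ghost (α_α_ne h)

theorem IsNearTriangulation.α_ne_of_onOuter [Finite X] (hM : M.IsNearTriangulation)
    (hd : M.OnOuter d) : M.α d ≠ d :=
  sameCycle_induction hd (fun d => M.α d ≠ d) hM.α_root_ne fun _ => α_φ_ne hM.σ_ghost

theorem φ_ne (no_loop : ∀ d, M.α d ≠ d → ¬ M.σ.SameCycle d (M.α d)) (h : M.α d ≠ d) :
    M.φ d ≠ d := fun hφ => by
  have hcycle : M.σ.SameCycle (M.α d) (M.φ d) := sameCycle_self_apply _ _
  rw [hφ] at hcycle
  exact no_loop d h hcycle.symm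

end Basic

/-- `M` is `N` with a new edge, of darts `x` and `y`, closing the triangle `y b t` over the root
`b` of `N` and its successor `t` on the outer face; `s` is the outer dart of `N` after `t`. Thus `x`
is inserted at the vertex of `b` and `y` at that of `s`, and `x` becomes the root. -/
structure EdgeClosing {X : Type*} [DecidableEq X] (N M : DartMap X) (x y b t s : X) : Prop where
  x_ne_y : x ≠ y
  x_ne_b : x ≠ b
  x_ne_t : x ≠ t
  x_ne_s : x ≠ s
  y_ne_b : y ≠ b
  y_ne_t : y ≠ t
  y_ne_s : y ≠ s
  b_ne_t : b ≠ t
  b_ne_s : b ≠ s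
  t_ne_s : t ≠ s
  σN_x : N.σ x = x
  σN_y : N.σ y = y
  αN_x : N.α x = x
  αN_y : N.α y = y
  φN_b : N.φ b = t
  φN_t : N.φ t = s
  σM_eq : M.σ = swap x b * swap y s * N.σ
  αM_eq : M.α = swap x y * N.α
  rootN : N.root = b
  rootM : M.root = x

/-- Contracts the new darts of an edge closing: each is sent to the old dart it was inserted
before. -/
def contract {X : Type*} [DecidableEq X] (x y b s d : X) : X :=
  if d = x then b else if d = y then s else d

namespace EdgeClosing

variable {X : Type*} [DecidableEq X] {N M : DartMap X} {x y b t s d e : X}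

theorem contract_of_ne (hx : d ≠ x) (hy : d ≠ y) : contract x y b s d = d := by
  rw [contract, if_neg hx, if_neg hy]

section Values

variable (c : EdgeClosing N M x y b t s)
include c

theorem φN_x : N.φ x = x := by rw [φ_apply, c.αN_x, c.σN_x]

theorem φN_y : N.φ y = y := by rw [φ_apply, c.αN_y, c.σN_y]

theorem αN_ne_x (h : d ≠ x) : N.α d ≠ x := fun e => h (N.α.injective (e.trans c.αN_x.symm))

theorem αN_ne_y (h : d ≠ y) : N.α d ≠ y := fun e => h (N.α.injective (e.trans c.αN_y.symm))

theorem σN_ne_x (h : d ≠ x) : N.σ d ≠ x := fun e => h (N.σ.injective (e.trans c.σN_x.symm))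

theorem σN_ne_y (h : d ≠ y) : N.σ d ≠ y := fun e => h (N.σ.injective (e.trans c.σN_y.symm))

theorem φN_ne_x (h : d ≠ x) : N.φ d ≠ x := fun e => h (N.φ.injective (e.trans c.φN_x.symm))

theorem φN_ne_y (h : d ≠ y) : N.φ d ≠ y := fun e => h (N.φ.injective (e.trans c.φN_y.symm))

theorem αM_x : M.α x = y := by rw [c.αM_eq, mul_apply, c.αN_x, swap_apply_left]

theorem αM_y : M.α y = x := by rw [c.αM_eq, mul_apply, c.αN_y, swap_apply_right]

theorem αM_of_ne (hx : d ≠ x) (hy : d ≠ y) : M.α d = N.α d := by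
  rw [c.αM_eq, mul_apply, swap_apply_of_ne_of_ne (c.αN_ne_x hx) (c.αN_ne_y hy)]

theorem σM_x : M.σ x = b := by
  rw [c.σM_eq, mul_apply, mul_apply, c.σN_x, swap_apply_of_ne_of_ne c.x_ne_y c.x_ne_s,
    swap_apply_left]

theorem σM_y : M.σ y = s := by
  rw [c.σM_eq, mul_apply, mul_apply, c.σN_y, swap_apply_left,
    swap_apply_of_ne_of_ne c.x_ne_s.symm c.b_ne_s.symm]

theorem φM_x : M.φ x = s := by rw [φ_apply, c.αM_x, c.σM_y]

theorem φM_y : M.φ y = b := by rw [φ_apply, c.αM_y, c.σM_x]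

theorem φM_eq_swap_swap (hx : d ≠ x) (hy : d ≠ y) :
    M.φ d = swap x b (swap y s (N.φ d)) := by
  rw [φ_apply, c.αM_of_ne hx hy, c.σM_eq, mul_apply, mul_apply, φ_apply]

theorem φM_b : M.φ b = t := by
  rw [c.φM_eq_swap_swap c.x_ne_b.symm c.y_ne_b.symm, c.φN_b,
    swap_apply_of_ne_of_ne c.y_ne_t.symm c.t_ne_s,
    swap_apply_of_ne_of_ne c.x_ne_t.symm c.b_ne_t.symm]

theorem φM_t : M.φ t = y := by
  rw [c.φM_eq_swap_swap c.x_ne_t.symm c.y_ne_t.symm, c.φN_t, swap_apply_right,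
    swap_apply_of_ne_of_ne c.x_ne_y.symm c.y_ne_b]

theorem φM_of_φN_eq_b (h : N.φ d = b) : M.φ d = x := by
  have hx : d ≠ x := fun e => c.x_ne_b (by rwa [e, c.φN_x] at h)
  have hy : d ≠ y := fun e => c.y_ne_b (by rwa [e, c.φN_y] at h)
  rw [c.φM_eq_swap_swap hx hy, h, swap_apply_of_ne_of_ne c.y_ne_b.symm c.b_ne_s,
    swap_apply_right]

theorem φM_of_ne (hx : d ≠ x) (hy : d ≠ y) (ht : d ≠ t) (hb : N.φ d ≠ b) : M.φ d = N.φ d := by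
  have hs : N.φ d ≠ s := fun e => ht (N.φ.injective (e.trans c.φN_t.symm))
  rw [c.φM_eq_swap_swap hx hy, swap_apply_of_ne_of_ne (c.φN_ne_y hy) hs,
    swap_apply_of_ne_of_ne (c.φN_ne_x hx) hb]

theorem onOuterN_b : N.OnOuter b := by
  rw [← c.rootN]
  exact N.onOuter_root

theorem onOuterN_t : N.OnOuter t := by
  rw [← c.φN_b, onOuter_φ]
  exact c.onOuterN_b

theorem onOuterN_s : N.OnOuter s := by
  rw [← c.φN_t, onOuter_φ]
  exact c.onOuterN_t

theorem φM_of_not_onOuter (hx : d ≠ x) (hy : d ≠ y) (h : ¬ N.OnOuter d) : M.φ d = N.φ d :=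
  c.φM_of_ne hx hy (fun e => h (e ▸ c.onOuterN_t))
    fun e => h (onOuter_φ.1 (e ▸ c.onOuterN_b))

theorem αM_ne_iff : M.α d ≠ d ↔ d = x ∨ d = y ∨ N.α d ≠ d := by
  by_cases hx : d = x
  · simp [hx, c.αM_x, c.x_ne_y.symm]
  by_cases hy : d = y
  · simp [hy, c.αM_y, c.x_ne_y]
  simp [hx, hy, c.αM_of_ne hx hy]

theorem ne_of_αN_ne (h : N.α d ≠ d) : d ≠ x ∧ d ≠ y :=
  ⟨fun e => h (e ▸ c.αN_x), fun e => h (e ▸ c.αN_y)⟩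

theorem not_sameCycle_σN_y_s : ¬ N.σ.SameCycle y s := not_sameCycle_of_apply_eq c.σN_y c.y_ne_s

theorem not_sameCycle_x_b : ¬ (swap y s * N.σ).SameCycle x b :=
  not_sameCycle_of_apply_eq
    (by rw [mul_apply, c.σN_x, swap_apply_of_ne_of_ne c.x_ne_y c.x_ne_s]) c.x_ne_b

omit c in
theorem contract_x : contract x y b s x = b := if_pos rfl

theorem contract_y : contract x y b s y = s := by
  rw [contract, if_neg c.x_ne_y.symm, if_pos rfl]

theorem contract_s : contract x y b s s = s := contract_of_ne c.x_ne_s.symm c.y_ne_s.symm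

theorem contract_b : contract x y b s b = b := contract_of_ne c.x_ne_b.symm c.y_ne_b.symm

theorem contract_σN_iff {S : X → Prop} (hS : ∀ d, S (N.σ d) ↔ S d) (d : X) :
    S (contract x y b s (N.σ d)) ↔ S (contract x y b s d) := by
  by_cases hx : d = x
  · rw [hx, c.σN_x]
  by_cases hy : d = y
  · rw [hy, c.σN_y]
  rw [contract_of_ne hx hy, contract_of_ne (c.σN_ne_x hx) (c.σN_ne_y hy), hS]

theorem contract_αN_iff {S : X → Prop} (hS : ∀ d, S (N.α d) ↔ S d) (d : X) :
    S (contract x y b s (N.α d)) ↔ S (contract x y b s d) := by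
  by_cases hx : d = x
  · rw [hx, c.αN_x]
  by_cases hy : d = y
  · rw [hy, c.αN_y]
  rw [contract_of_ne hx hy, contract_of_ne (c.αN_ne_x hx) (c.αN_ne_y hy), hS]

theorem contract_iff {S : X → Prop} (hy : S y ↔ S s) (hx : S x ↔ S b) (d : X) :
    S (contract x y b s d) ↔ S d := by
  by_cases hdx : d = x
  · rw [hdx, contract_x, hx]
  by_cases hdy : d = y
  · rw [hdy, c.contract_y, hy]
  rw [contract_of_ne hdx hdy]

theorem iff_of_invariantN {S : X → Prop} (h : Invariant N.σ N.α S) : S b ↔ S s := by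
  rw [← c.φN_t, ← c.φN_b]
  simp only [φ_apply, h.1, h.2]

end Values

section Orbits

variable [Finite X] (c : EdgeClosing N M x y b t s)
include c

theorem mergesAt_y_s : MergesAt N.σ 1 (swap y s * N.σ) 1 y s :=
  mergesAt_swap_mul c.not_sameCycle_σN_y_s

theorem mergesAt_x_b : MergesAt (swap y s * N.σ) 1 M.σ 1 x b := by
  rw [c.σM_eq, mul_assoc]
  exact mergesAt_swap_mul c.not_sameCycle_x_b

omit [Finite X] in
theorem mergesAt_x_y : MergesAt M.σ N.α M.σ M.α x y := by
  rw [c.αM_eq]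
  exact mergesAt_edge c.αN_x

theorem invariant_σM_iff (S : X → Prop) :
    Invariant M.σ 1 S ↔ (Invariant N.σ 1 S ∧ (S y ↔ S s)) ∧ (S x ↔ S b) := by
  rw [c.mergesAt_x_b S, c.mergesAt_y_s S]

theorem invariantM_iff (S : X → Prop) : Invariant M.σ M.α S ↔
    ((Invariant N.σ N.α S ∧ (S y ↔ S s)) ∧ (S x ↔ S b)) ∧ (S x ↔ S y) := by
  rw [c.mergesAt_x_y S, c.mergesAt_x_b.of_one_right N.α S, c.mergesAt_y_s.of_one_right N.α S]

theorem sameCycle_σM_iff_contract (d e : X) :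
    M.σ.SameCycle d e ↔ N.σ.SameCycle (contract x y b s d) (contract x y b s e) := by
  rw [← linked_one_right, ← linked_one_right]
  constructor
  · intro h S hS
    refine h (fun d => S (contract x y b s d)) ((c.invariant_σM_iff _).2
      ⟨⟨⟨c.contract_σN_iff hS.1, fun _ => Iff.rfl⟩, ?_⟩, ?_⟩)
    · rw [c.contract_y, c.contract_s]
    · rw [contract_x, c.contract_b]
  · intro h S hS
    obtain ⟨⟨hSN, hy⟩, hx⟩ := (c.invariant_σM_iff S).1 hS
    rw [← c.contract_iff hy hx d, ← c.contract_iff hy hx e]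
    exact h S hSN

theorem linkedM_iff_contract (d e : X) :
    Linked M.σ M.α d e ↔ Linked N.σ N.α (contract x y b s d) (contract x y b s e) := by
  constructor
  · intro h S hS
    refine h (fun d => S (contract x y b s d)) ((c.invariantM_iff _).2
      ⟨⟨⟨⟨c.contract_σN_iff hS.1, c.contract_αN_iff hS.2⟩, ?_⟩, ?_⟩, ?_⟩)
    · rw [c.contract_y, c.contract_s]
    · rw [contract_x, c.contract_b]
    · rw [contract_x, c.contract_y, c.iff_of_invariantN hS]
  · intro h S hS
    obtain ⟨⟨⟨hSN, hy⟩, hx⟩, -⟩ := (c.invariantM_iff S).1 hS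
    rw [← c.contract_iff hy hx d, ← c.contract_iff hy hx e]
    exact h S hSN

theorem sameCycle_σM_iff (hdx : d ≠ x) (hdy : d ≠ y) (hex : e ≠ x) (hey : e ≠ y) :
    M.σ.SameCycle d e ↔ N.σ.SameCycle d e := by
  rw [c.sameCycle_σM_iff_contract, contract_of_ne hdx hdy, contract_of_ne hex hey]

theorem sameCycle_σM_x_iff (hex : e ≠ x) (hey : e ≠ y) :
    M.σ.SameCycle x e ↔ N.σ.SameCycle b e := by
  rw [c.sameCycle_σM_iff_contract, contract_x, contract_of_ne hex hey]

theorem sameCycle_σM_y_iff (hex : e ≠ x) (hey : e ≠ y) :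
    M.σ.SameCycle y e ↔ N.σ.SameCycle s e := by
  rw [c.sameCycle_σM_iff_contract, c.contract_y, contract_of_ne hex hey]

theorem sameCycle_σM_x_y_iff : M.σ.SameCycle x y ↔ N.σ.SameCycle b s := by
  rw [c.sameCycle_σM_iff_contract, contract_x, c.contract_y]

omit [Finite X] in
theorem not_onOuterN_x : ¬ N.OnOuter x := fun h =>
  not_sameCycle_of_apply_eq c.φN_x c.x_ne_b (c.rootN ▸ SameCycle.symm h)

omit [Finite X] in
theorem not_onOuterN_y : ¬ N.OnOuter y := fun h =>
  not_sameCycle_of_apply_eq c.φN_y c.y_ne_b (c.rootN ▸ SameCycle.symm h)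

omit [Finite X] in
theorem onOuterM_x : M.OnOuter x := by
  rw [← c.rootM]
  exact M.onOuter_root

theorem eq_x_or_onOuterN_of_onOuterM (h : M.OnOuter d) :
    d = x ∨ (N.OnOuter d ∧ d ≠ b ∧ d ≠ t) := by
  rw [OnOuter, c.rootM] at h
  refine sameCycle_induction h (fun d => d = x ∨ (N.OnOuter d ∧ d ≠ b ∧ d ≠ t)) (Or.inl rfl) ?_
  rintro e (rfl | ⟨he, heb, het⟩)
  · rw [c.φM_x]
    exact Or.inr ⟨c.onOuterN_s, c.b_ne_s.symm, c.t_ne_s.symm⟩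
  · by_cases hφ : N.φ e = b
    · exact Or.inl (c.φM_of_φN_eq_b hφ)
    · rw [c.φM_of_ne (fun h => c.not_onOuterN_x (h ▸ he)) (fun h => c.not_onOuterN_y (h ▸ he))
        het hφ]
      exact Or.inr ⟨onOuter_φ.2 he, hφ, fun h => heb (N.φ.injective (h.trans c.φN_b.symm))⟩

theorem eq_b_or_eq_t_or_onOuterM_of_onOuterN (h : N.OnOuter d) :
    d = b ∨ d = t ∨ M.OnOuter d := by
  rw [OnOuter, c.rootN] at h
  refine sameCycle_induction h (fun d => d = b ∨ d = t ∨ M.OnOuter d) (Or.inl rfl) ?_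
  have hs : M.OnOuter s := c.φM_x ▸ onOuter_φ.2 c.onOuterM_x
  rintro e (rfl | rfl | he)
  · exact Or.inr (Or.inl c.φN_b)
  · exact Or.inr (Or.inr (c.φN_t ▸ hs))
  · by_cases hex : e = x
    · rw [hex, c.φN_x]
      exact Or.inr (Or.inr c.onOuterM_x)
    by_cases hey : e = y
    · rw [hey, c.φN_y, ← hey]
      exact Or.inr (Or.inr he)
    by_cases het : e = t
    · exact Or.inr (Or.inr (het ▸ c.φN_t ▸ hs))
    by_cases hφ : N.φ e = b
    · exact Or.inl hφ
    · exact Or.inr (Or.inr (c.φM_of_ne hex hey het hφ ▸ onOuter_φ.2 he))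

theorem onOuterM_iff (d : X) : M.OnOuter d ↔ d = x ∨ (N.OnOuter d ∧ d ≠ b ∧ d ≠ t) := by
  refine ⟨c.eq_x_or_onOuterN_of_onOuterM, ?_⟩
  rintro (rfl | ⟨hd, hdb, hdt⟩)
  · exact c.onOuterM_x
  · exact ((c.eq_b_or_eq_t_or_onOuterM_of_onOuterN hd).resolve_left hdb).resolve_left hdt

theorem numCycles_σM : numCycles M.σ + 2 = numCycles N.σ := by
  have hys := numCycles_swap_mul_add_one c.not_sameCycle_σN_y_s
  have hxb := numCycles_swap_mul_add_one c.not_sameCycle_x_b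
  rw [c.σM_eq, mul_assoc]
  omega

theorem numCycles_αM : numCycles M.α + 1 = numCycles N.α := by
  rw [c.αM_eq]
  exact numCycles_swap_mul_add_one (not_sameCycle_of_apply_eq c.αN_x c.x_ne_y)

omit [Finite X] in
theorem φM_eq : M.φ = swap x b * (swap y s * (swap x y * N.φ)) := by
  ext d
  by_cases hx : d = x
  · rw [hx, c.φM_x, mul_apply, mul_apply, mul_apply, c.φN_x, swap_apply_left, swap_apply_left,
      swap_apply_of_ne_of_ne c.x_ne_s.symm c.b_ne_s.symm]
  by_cases hy : d = y
  · rw [hy, c.φM_y, mul_apply, mul_apply, mul_apply, c.φN_y, swap_apply_right,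
      swap_apply_of_ne_of_ne c.x_ne_y c.x_ne_s, swap_apply_left]
  rw [c.φM_eq_swap_swap hx hy, mul_apply, mul_apply, mul_apply,
    swap_apply_of_ne_of_ne (c.φN_ne_x hx) (c.φN_ne_y hy)]

theorem numCycles_φM : numCycles M.φ + 1 = numCycles N.φ := by
  have hxy : ¬ N.φ.SameCycle x y := not_sameCycle_of_apply_eq c.φN_x c.x_ne_y
  have hys : ¬ (swap x y * N.φ).SameCycle y s := by
    intro h
    refine (sameCycle_induction h (fun d => d = x ∨ d = y) (Or.inr rfl) ?_).elim
      c.x_ne_s.symm c.y_ne_s.symm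
    rintro e (rfl | rfl)
    · exact Or.inr (by rw [mul_apply, c.φN_x, swap_apply_left])
    · exact Or.inl (by rw [mul_apply, c.φN_y, swap_apply_right])
  have hxb : (swap y s * (swap x y * N.φ)).SameCycle x b := by
    rw [← linked_one_right]
    intro S hS
    obtain ⟨hS', hys'⟩ := (mergesAt_swap_mul hys S).1 hS
    obtain ⟨hSN, hxy'⟩ := (mergesAt_swap_mul hxy S).1 hS'
    rw [hxy', hys', ← c.φN_t, hSN.1, ← c.φN_b, hSN.1]
  have h₁ := numCycles_swap_mul_add_one hxy
  have h₂ := numCycles_swap_mul_add_one hys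
  have h₃ := numCycles_swap_mul_of_sameCycle c.x_ne_b hxb
  rw [c.φM_eq]
  omega

theorem numComponentsM : numComponents M.σ M.α + 2 = numComponents N.σ N.α := by
  have invariant_eq : ∀ z, N.σ z = z → N.α z = z → Invariant N.σ N.α (fun d => d = z) :=
    fun z hσ hα => ⟨fun d => ⟨fun e => N.σ.injective (e.trans hσ.symm), fun e => e ▸ hσ⟩,
      fun d => ⟨fun e => N.α.injective (e.trans hα.symm), fun e => e ▸ hα⟩⟩
  have hys : ¬ Linked N.σ N.α y s := fun h =>
    c.y_ne_s ((h _ (invariant_eq y c.σN_y c.αN_y)).1 rfl).symm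
  have hxb : ¬ Linked (swap y s * N.σ) N.α x b := fun h =>
    c.x_ne_b ((h _ ((c.mergesAt_y_s.of_one_right N.α _).2 ⟨invariant_eq x c.σN_x c.αN_x,
      by simp only [c.x_ne_y.symm, c.x_ne_s.symm]⟩)).1 rfl).symm
  have hxy : Linked M.σ N.α x y := by
    intro S hS
    rw [c.mergesAt_x_b.of_one_right N.α S, c.mergesAt_y_s.of_one_right N.α S] at hS
    rw [hS.2, hS.1.2, c.iff_of_invariantN hS.1.1]
  have h₁ := (c.mergesAt_y_s.of_one_right N.α).numComponents_add_one hys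
  have h₂ := (c.mergesAt_x_b.of_one_right N.α).numComponents_add_one hxb
  have h₃ := c.mergesAt_x_y.numComponents_eq hxy
  omega

theorem euler_iff :
    numCycles M.σ + numCycles M.α + numCycles M.φ = Nat.card X + 2 * numComponents M.σ M.α ↔
      numCycles N.σ + numCycles N.α + numCycles N.φ =
        Nat.card X + 2 * numComponents N.σ N.α := by
  have := c.numComponentsM
  have := c.numCycles_σM
  have := c.numCycles_αM
  have := c.numCycles_φM
  omega

end Orbits

end EdgeClosing

end DartMap

namespace DartMap

variable {X : Type*} [DecidableEq X]

/-- Closes a triangle over the root and its successor on the outer face by a new edge with darts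
`x` and `y`. -/
def addEdge (N : DartMap X) (x y : X) : DartMap X where
  σ := swap x N.root * swap y (N.φ (N.φ N.root)) * N.σ
  α := swap x y * N.α
  root := x

/-- Deletes the root edge, whose darts become ghosts, and reroots the map at the next dart around
the root vertex. -/
def deleteRoot (M : DartMap X) : DartMap X where
  σ := swap (M.α M.root) (M.φ M.root) * (swap M.root (M.σ M.root) * M.σ)
  α := swap M.root (M.α M.root) * M.α
  root := M.σ M.root

theorem edgeClosing_addEdge {N : DartMap X} (hN : N.IsNearTriangulation) (hadd : N.IsAddable)
    {x y : X} (hxy : x ≠ y) (hx : N.α x = x) (hy : N.α y = y) :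
    EdgeClosing N (N.addEdge x y) x y N.root (N.φ N.root) (N.φ (N.φ N.root)) := by
  have ht : N.α (N.φ N.root) ≠ N.φ N.root := α_φ_ne hN.σ_ghost hN.α_root_ne
  have hs : N.α (N.φ (N.φ N.root)) ≠ N.φ (N.φ N.root) := α_φ_ne hN.σ_ghost ht
  have ne_of_ghost : ∀ {u v : X}, N.α u = u → N.α v ≠ v → u ≠ v := fun hu hv e => hv (e ▸ hu)
  exact
  { x_ne_y := hxy
    x_ne_b := ne_of_ghost hx hN.α_root_ne
    x_ne_t := ne_of_ghost hx ht
    x_ne_s := ne_of_ghost hx hs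
    y_ne_b := ne_of_ghost hy hN.α_root_ne
    y_ne_t := ne_of_ghost hy ht
    y_ne_s := ne_of_ghost hy hs
    b_ne_t := (φ_ne hN.no_loop hN.α_root_ne).symm
    b_ne_s := fun e => hadd.1 (e ▸ SameCycle.refl _ _)
    t_ne_s := (φ_ne hN.no_loop ht).symm
    σN_x := hN.σ_ghost _ hx
    σN_y := hN.σ_ghost _ hy
    αN_x := hx
    αN_y := hy
    φN_b := rfl
    φN_t := rfl
    σM_eq := rfl
    αM_eq := rfl
    rootN := rfl
    rootM := rfl }

namespace EdgeClosing

variable {N M : DartMap X} {x y b t s d d' : X} (c : EdgeClosing N M x y b t s)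
include c

theorem φN_φN_root : N.φ (N.φ N.root) = s := by rw [c.rootN, c.φN_b, c.φN_t]

theorem eq_addEdge : M = N.addEdge x y := by
  rw [addEdge, c.φN_φN_root, c.rootN, ← c.σM_eq, ← c.αM_eq, ← c.rootM]

theorem ne_of_onOuterN (h : N.OnOuter d) : d ≠ x ∧ d ≠ y :=
  ⟨fun e => c.not_onOuterN_x (e ▸ h), fun e => c.not_onOuterN_y (e ▸ h)⟩

theorem αN_ne_of_αM_ne (hx : d ≠ x) (hy : d ≠ y) (h : M.α d ≠ d) : N.α d ≠ d :=
  ((c.αM_ne_iff.1 h).resolve_left hx).resolve_left hy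

theorem αM_ne_of_αN_ne (h : N.α d ≠ d) : M.α d ≠ d := c.αM_ne_iff.2 (Or.inr (Or.inr h))

theorem φM_φM_φM_of_not_onOuter (hx : d ≠ x) (hy : d ≠ y) (h : ¬ N.OnOuter d) :
    M.φ (M.φ (M.φ d)) = N.φ (N.φ (N.φ d)) := by
  have hφ : ¬ N.OnOuter (N.φ d) := mt onOuter_φ.1 h
  rw [c.φM_of_not_onOuter hx hy h, c.φM_of_not_onOuter (c.φN_ne_x hx) (c.φN_ne_y hy) hφ,
    c.φM_of_not_onOuter (c.φN_ne_x (c.φN_ne_x hx)) (c.φN_ne_y (c.φN_ne_y hy))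
      (mt onOuter_φ.1 hφ)]

theorem αM_involutive (h : ∀ d, N.α (N.α d) = d) (d : X) : M.α (M.α d) = d := by
  by_cases hx : d = x
  · rw [hx, c.αM_x, c.αM_y]
  by_cases hy : d = y
  · rw [hy, c.αM_y, c.αM_x]
  rw [c.αM_of_ne hx hy, c.αM_of_ne (c.αN_ne_x hx) (c.αN_ne_y hy), h]

theorem αN_involutive (h : ∀ d, M.α (M.α d) = d) (d : X) : N.α (N.α d) = d := by
  by_cases hx : d = x
  · rw [hx, c.αN_x, c.αN_x]
  by_cases hy : d = y
  · rw [hy, c.αN_y, c.αN_y]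
  rw [← c.αM_of_ne (c.αN_ne_x hx) (c.αN_ne_y hy), ← c.αM_of_ne hx hy, h]

variable [Finite X]

section Adding

variable (hN : N.IsNearTriangulation)
include hN

theorem σM_ghost (hd : M.α d = d) : M.σ d = d := by
  have hx : d ≠ x := fun e => c.x_ne_y (by rw [e, c.αM_x] at hd; exact hd.symm)
  have hy : d ≠ y := fun e => c.x_ne_y (by rwa [e, c.αM_y] at hd)
  have hdN : N.α d = d := by rwa [c.αM_of_ne hx hy] at hd
  have hb : d ≠ b := fun e => hN.α_ne_of_onOuter c.onOuterN_b (e ▸ hdN)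
  have hs : d ≠ s := fun e => hN.α_ne_of_onOuter c.onOuterN_s (e ▸ hdN)
  rw [c.σM_eq, mul_apply, mul_apply, hN.σ_ghost d hdN, swap_apply_of_ne_of_ne hy hs,
    swap_apply_of_ne_of_ne hx hb]

theorem linkedM_root (hd : M.α d ≠ d) : Linked M.σ M.α M.root d := by
  rw [c.rootM, c.linkedM_iff_contract, contract_x]
  by_cases hx : d = x
  · rw [hx, contract_x]
    exact Linked.refl _ _ _
  by_cases hy : d = y
  · rw [hy, c.contract_y, ← c.rootN]
    exact hN.linked_root s (hN.α_ne_of_onOuter c.onOuterN_s)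
  rw [contract_of_ne hx hy, ← c.rootN]
  exact hN.linked_root d (c.αN_ne_of_αM_ne hx hy hd)

theorem inner_faceM (hd : M.α d ≠ d) (hO : ¬ M.OnOuter d) : M.φ (M.φ (M.φ d)) = d := by
  rw [c.onOuterM_iff] at hO
  push Not at hO
  obtain ⟨hx, hO⟩ := hO
  by_cases hy : d = y
  · rw [hy, c.φM_y, c.φM_b, c.φM_t]
  by_cases hb : d = b
  · rw [hb, c.φM_b, c.φM_t, c.φM_y]
  by_cases ht : d = t
  · rw [ht, c.φM_t, c.φM_y, c.φM_b]
  have hON : ¬ N.OnOuter d := fun h => ht (hO h hb)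
  rw [c.φM_φM_φM_of_not_onOuter hx hy hON]
  exact hN.inner_face d (c.αN_ne_of_αM_ne hx hy hd) hON

theorem not_sameCycle_σM_αM (hbs : ¬ N.σ.SameCycle b s) (hd : M.α d ≠ d) :
    ¬ M.σ.SameCycle d (M.α d) := by
  by_cases hx : d = x
  · rwa [hx, c.αM_x, c.sameCycle_σM_x_y_iff]
  by_cases hy : d = y
  · rwa [hy, c.αM_y, sameCycle_comm, c.sameCycle_σM_x_y_iff]
  rw [c.αM_of_ne hx hy, c.sameCycle_σM_iff hx hy (c.αN_ne_x hx) (c.αN_ne_y hy)]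
  exact hN.no_loop d (c.αN_ne_of_αM_ne hx hy hd)

omit hN in
theorem not_parallel_x (hadj : ¬ N.VertexAdj b s) (hd : N.α d ≠ d) (hxd : M.σ.SameCycle x d) :
    ¬ M.σ.SameCycle y (N.α d) := by
  obtain ⟨hx, hy⟩ := c.ne_of_αN_ne hd
  rw [c.sameCycle_σM_y_iff (c.αN_ne_x hx) (c.αN_ne_y hy)]
  exact fun hyd => hadj ⟨d, hd, (c.sameCycle_σM_x_iff hx hy).1 hxd, hyd⟩

theorem not_parallel_new (hadj : ¬ N.VertexAdj b s) (hd' : d' = x ∨ d' = y) (hd : N.α d ≠ d)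
    (hdd' : M.σ.SameCycle d' d) : ¬ M.σ.SameCycle (M.α d') (M.α d) := by
  obtain ⟨hx, hy⟩ := c.ne_of_αN_ne hd
  rw [c.αM_of_ne hx hy]
  rcases hd' with rfl | rfl
  · rw [c.αM_x]
    exact c.not_parallel_x hadj hd hdd'
  · rw [c.αM_y]
    intro h
    exact c.not_parallel_x hadj (α_α_ne hd) h (by rwa [hN.α_involutive])

theorem eq_of_parallelM (hbs : ¬ N.σ.SameCycle b s) (hadj : ¬ N.VertexAdj b s)
    (hd : M.α d ≠ d) (hd' : M.α d' ≠ d') (htail : M.σ.SameCycle d d')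
    (hhead : M.σ.SameCycle (M.α d) (M.α d')) : d = d' := by
  have hxy : ¬ M.σ.SameCycle x y := by rwa [c.sameCycle_σM_x_y_iff]
  by_cases hnew : d = x ∨ d = y
  · by_cases hnew' : d' = x ∨ d' = y
    · rcases hnew with rfl | rfl <;> rcases hnew' with rfl | rfl
      exacts [rfl, absurd htail hxy, absurd htail.symm hxy, rfl]
    · rw [not_or] at hnew'
      exact absurd hhead (c.not_parallel_new hN hadj hnew
        (c.αN_ne_of_αM_ne hnew'.1 hnew'.2 hd') htail)
  rw [not_or] at hnew
  have hdN := c.αN_ne_of_αM_ne hnew.1 hnew.2 hd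
  by_cases hnew' : d' = x ∨ d' = y
  · exact absurd hhead.symm (c.not_parallel_new hN hadj hnew' hdN htail.symm)
  rw [not_or] at hnew'
  rw [c.sameCycle_σM_iff hnew.1 hnew.2 hnew'.1 hnew'.2] at htail
  rw [c.αM_of_ne hnew.1 hnew.2, c.αM_of_ne hnew'.1 hnew'.2,
    c.sameCycle_σM_iff (c.αN_ne_x hnew.1) (c.αN_ne_y hnew.2) (c.αN_ne_x hnew'.1)
      (c.αN_ne_y hnew'.2)] at hhead
  exact hN.no_parallel d d' hdN (c.αN_ne_of_αM_ne hnew'.1 hnew'.2 hd') htail hhead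

theorem outerSimpleM : M.OuterSimple := by
  have ne_head : ∀ {d}, d ≠ t → d ≠ N.φ N.root := fun h => by rwa [c.rootN, c.φN_b]
  have not_sameCycle_x : ∀ d, N.OnOuter d → d ≠ b → d ≠ t → ¬ M.σ.SameCycle x d := by
    intro d hd hb ht hxd
    rw [c.sameCycle_σM_x_iff (c.ne_of_onOuterN hd).1 (c.ne_of_onOuterN hd).2] at hxd
    exact hb (hN.outer_simple_off_head b d c.onOuterN_b hd hxd (ne_head c.b_ne_t)
      (ne_head ht)).symm
  intro d d' hd hd' hdd'
  rcases (c.onOuterM_iff d).1 hd with rfl | ⟨hdN, hb, ht⟩ <;>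
    rcases (c.onOuterM_iff d').1 hd' with rfl | ⟨hdN', hb', ht'⟩
  · rfl
  · exact absurd hdd' (not_sameCycle_x d' hdN' hb' ht')
  · exact absurd hdd'.symm (not_sameCycle_x d hdN hb ht)
  · obtain ⟨hx, hy⟩ := c.ne_of_onOuterN hdN
    obtain ⟨hx', hy'⟩ := c.ne_of_onOuterN hdN'
    rw [c.sameCycle_σM_iff hx hy hx' hy'] at hdd'
    exact hN.outer_simple_off_head d d' hdN hdN' hdd' (ne_head ht) (ne_head ht')

theorem isDiskTriangulation (hadd : N.IsAddable) : M.IsDiskTriangulation := by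
  rw [IsAddable, c.φN_φN_root, c.rootN] at hadd
  obtain ⟨hbs, hadj⟩ := hadd
  have houter := c.outerSimpleM hN
  exact ⟨{
    α_involutive := c.αM_involutive hN.α_involutive
    σ_ghost := fun _ => c.σM_ghost hN
    α_root_ne := by rw [c.rootM, c.αM_x]; exact c.x_ne_y.symm
    linked_root := fun _ => c.linkedM_root hN
    inner_face := fun _ => c.inner_faceM hN
    no_loop := fun _ => c.not_sameCycle_σM_αM hN hbs
    no_parallel := fun _ _ => c.eq_of_parallelM hN hbs hadj
    euler := c.euler_iff.2 hN.euler
    outer_simple_off_head := fun d d' hd hd' h _ _ => houter d d' hd hd' h }, houter⟩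

end Adding

section Deleting

variable (hM : M.IsDiskTriangulation)
include hM

omit [Finite X] hM in
theorem αM_x_ne : M.α x ≠ x := by
  rw [c.αM_x]
  exact c.x_ne_y.symm

omit [Finite X] in
theorem αN_b_ne : N.α b ≠ b := by
  rw [← c.αM_of_ne c.x_ne_b.symm c.y_ne_b.symm, ← c.σM_x]
  exact α_σ_ne hM.1.σ_ghost c.αM_x_ne

omit [Finite X] in
theorem αN_s_ne : N.α s ≠ s := by
  rw [← c.αM_of_ne c.x_ne_s.symm c.y_ne_s.symm, ← c.φM_x]
  exact α_φ_ne hM.1.σ_ghost c.αM_x_ne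

omit [Finite X] in
theorem σN_ghost (hd : N.α d = d) : N.σ d = d := by
  by_cases hx : d = x
  · rw [hx, c.σN_x]
  by_cases hy : d = y
  · rw [hy, c.σN_y]
  have hb : d ≠ b := fun e => c.αN_b_ne hM (e ▸ hd)
  have hs : d ≠ s := fun e => c.αN_s_ne hM (e ▸ hd)
  have hσN : N.σ = swap y s * (swap x b * M.σ) := by
    rw [c.σM_eq, mul_assoc, swap_mul_self_mul, swap_mul_self_mul]
  rw [hσN, mul_apply, mul_apply, hM.1.σ_ghost d (by rw [c.αM_of_ne hx hy, hd]),
    swap_apply_of_ne_of_ne hx hb, swap_apply_of_ne_of_ne hy hs]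

theorem linkedN_root (hd : N.α d ≠ d) : Linked N.σ N.α N.root d := by
  obtain ⟨hx, hy⟩ := c.ne_of_αN_ne hd
  have h := hM.1.linked_root d (c.αM_ne_of_αN_ne hd)
  rwa [c.rootM, c.linkedM_iff_contract, contract_x, contract_of_ne hx hy, ← c.rootN] at h

theorem inner_faceN (hd : N.α d ≠ d) (hO : ¬ N.OnOuter d) : N.φ (N.φ (N.φ d)) = d := by
  obtain ⟨hx, hy⟩ := c.ne_of_αN_ne hd
  rw [← c.φM_φM_φM_of_not_onOuter hx hy hO]
  refine hM.1.inner_face d (c.αM_ne_of_αN_ne hd) ?_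
  rw [c.onOuterM_iff]
  tauto

theorem not_sameCycle_σN_αN (hd : N.α d ≠ d) : ¬ N.σ.SameCycle d (N.α d) := by
  obtain ⟨hx, hy⟩ := c.ne_of_αN_ne hd
  rw [← c.sameCycle_σM_iff hx hy (c.αN_ne_x hx) (c.αN_ne_y hy), ← c.αM_of_ne hx hy]
  exact hM.1.no_loop d (c.αM_ne_of_αN_ne hd)

theorem eq_of_parallelN (hd : N.α d ≠ d) (hd' : N.α d' ≠ d') (htail : N.σ.SameCycle d d')
    (hhead : N.σ.SameCycle (N.α d) (N.α d')) : d = d' := by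
  obtain ⟨hx, hy⟩ := c.ne_of_αN_ne hd
  obtain ⟨hx', hy'⟩ := c.ne_of_αN_ne hd'
  refine hM.1.no_parallel d d' (c.αM_ne_of_αN_ne hd) (c.αM_ne_of_αN_ne hd') ?_ ?_
  · rwa [c.sameCycle_σM_iff hx hy hx' hy']
  · rwa [c.αM_of_ne hx hy, c.αM_of_ne hx' hy', c.sameCycle_σM_iff (c.αN_ne_x hx)
      (c.αN_ne_y hy) (c.αN_ne_x hx') (c.αN_ne_y hy')]

theorem outer_simple_off_headN (hd : N.OnOuter d) (hd' : N.OnOuter d')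
    (hdd' : N.σ.SameCycle d d') (hne : d ≠ N.φ N.root) (hne' : d' ≠ N.φ N.root) : d = d' := by
  rw [c.rootN, c.φN_b] at hne hne'
  have eq_b : ∀ d, N.OnOuter d → d ≠ t → N.σ.SameCycle b d → d = b := by
    intro d hO ht hbd
    by_contra hb
    obtain ⟨hx, hy⟩ := c.ne_of_onOuterN hO
    exact hx (hM.2 d x ((c.onOuterM_iff d).2 (Or.inr ⟨hO, hb, ht⟩)) c.onOuterM_x
      ((c.sameCycle_σM_x_iff hx hy).2 hbd).symm)
  by_cases hb : d = b
  · rw [hb] at hdd' ⊢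
    exact (eq_b d' hd' hne' hdd').symm
  by_cases hb' : d' = b
  · rw [hb'] at hdd' ⊢
    exact eq_b d hd hne hdd'.symm
  obtain ⟨hx, hy⟩ := c.ne_of_onOuterN hd
  obtain ⟨hx', hy'⟩ := c.ne_of_onOuterN hd'
  exact hM.2 d d' ((c.onOuterM_iff d).2 (Or.inr ⟨hd, hb, hne⟩))
    ((c.onOuterM_iff d').2 (Or.inr ⟨hd', hb', hne'⟩))
    ((c.sameCycle_σM_iff hx hy hx' hy').2 hdd')

theorem isNearTriangulation : N.IsNearTriangulation where
  α_involutive := c.αN_involutive hM.1.α_involutive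
  σ_ghost _ := c.σN_ghost hM
  α_root_ne := by rw [c.rootN]; exact c.αN_b_ne hM
  linked_root _ := c.linkedN_root hM
  inner_face _ := c.inner_faceN hM
  no_loop _ := c.not_sameCycle_σN_αN hM
  no_parallel _ _ := c.eq_of_parallelN hM
  euler := c.euler_iff.1 hM.1.euler
  outer_simple_off_head _ _ := c.outer_simple_off_headN hM

theorem isAddable : N.IsAddable := by
  rw [IsAddable, c.φN_φN_root, c.rootN]
  constructor
  · rw [← c.sameCycle_σM_x_y_iff, ← c.αM_x]
    exact hM.1.no_loop x c.αM_x_ne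
  · rintro ⟨e, he, hbe, hse⟩
    obtain ⟨hx, hy⟩ := c.ne_of_αN_ne he
    refine hx (hM.1.no_parallel x e c.αM_x_ne (c.αM_ne_of_αN_ne he)
      ((c.sameCycle_σM_x_iff hx hy).2 hbe) ?_).symm
    rwa [c.αM_x, c.αM_of_ne hx hy, c.sameCycle_σM_y_iff (c.αN_ne_x hx) (c.αN_ne_y hy)]

end Deleting

end EdgeClosing

section DeleteRoot

variable {M : DartMap X} (hM : M.IsDiskTriangulation) (hroot : M.φ (M.φ M.root) ≠ M.root)
include hM hroot

omit [DecidableEq X] in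
theorem IsDiskTriangulation.not_onOuter_α_root : ¬ M.OnOuter (M.α M.root) := by
  intro hα
  have hφ : M.OnOuter (M.φ M.root) := onOuter_φ.2 M.onOuter_root
  have hαφ : M.α M.root = M.φ M.root := hM.2 _ _ hα hφ (sameCycle_self_apply _ _)
  have hσ : M.φ (M.φ M.root) = M.σ M.root := by rw [← hαφ, φ_apply, hM.1.α_involutive]
  rw [hσ] at hroot
  exact hroot (hM.2 _ _ M.onOuter_root (hσ ▸ onOuter_φ.2 hφ) (sameCycle_self_apply _ _)).symm

omit hM hroot in
theorem deleteRoot_φ_of_ne (hα : ∀ d, M.α (M.α d) = d) {d : X} (hx : d ≠ M.root)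
    (hy : d ≠ M.α M.root) : M.deleteRoot.φ d =
      swap (M.α M.root) (M.φ M.root) (swap M.root (M.σ M.root) (M.φ d)) := by
  have hαd : M.deleteRoot.α d = M.α d :=
    swap_apply_of_ne_of_ne (fun e => hy (by rw [← e, hα])) fun e => hx (M.α.injective e)
  rw [φ_apply, hαd]
  rfl

theorem edgeClosing_deleteRoot : EdgeClosing M.deleteRoot M M.root (M.α M.root) (M.σ M.root)
    (M.φ (M.σ M.root)) (M.φ M.root) := by
  obtain ⟨hp, -⟩ := id hM
  have hy_inner := hM.not_onOuter_α_root hroot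
  set x := M.root
  have hφy : M.φ (M.α x) = M.σ x := by rw [φ_apply, hp.α_involutive]
  have hφt : M.φ (M.φ (M.σ x)) = M.α x := hφy ▸ hp.inner_face _ (α_α_ne hp.α_root_ne) hy_inner
  have hb_inner : ¬ M.OnOuter (M.σ x) := hφy ▸ mt onOuter_φ.1 hy_inner
  have ht_inner : ¬ M.OnOuter (M.φ (M.σ x)) := mt onOuter_φ.1 hb_inner
  have hx_outer : M.OnOuter x := M.onOuter_root
  have hs_outer : M.OnOuter (M.φ x) := onOuter_φ.2 hx_outer
  have ne : ∀ {u v : X}, M.OnOuter u → ¬ M.OnOuter v → u ≠ v := fun hu hv e => hv (e ▸ hu)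
  have hb_live := α_σ_ne hp.σ_ghost hp.α_root_ne
  have hxy : x ≠ M.α x := hp.α_root_ne.symm
  have hyb : M.α x ≠ M.σ x := hφy ▸ (φ_ne hp.no_loop (α_α_ne hp.α_root_ne)).symm
  have hbt : M.σ x ≠ M.φ (M.σ x) := (φ_ne hp.no_loop hb_live).symm
  have hyt : M.α x ≠ M.φ (M.σ x) := hφt ▸ φ_ne hp.no_loop (α_φ_ne hp.σ_ghost hb_live)
  have hxs : x ≠ M.φ x := (φ_ne hp.no_loop hp.α_root_ne).symm
  exact
  { x_ne_y := hxy
    x_ne_b := ne hx_outer hb_inner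
    x_ne_t := ne hx_outer ht_inner
    x_ne_s := hxs
    y_ne_b := hyb
    y_ne_t := hyt
    y_ne_s := (ne hs_outer hy_inner).symm
    b_ne_t := hbt
    b_ne_s := (ne hs_outer hb_inner).symm
    t_ne_s := (ne hs_outer ht_inner).symm
    σN_x := by
      change swap (M.α x) (M.φ x) (swap x (M.σ x) (M.σ x)) = x
      rw [swap_apply_right, swap_apply_of_ne_of_ne hxy hxs]
    σN_y := by
      change swap (M.α x) (M.φ x) (swap x (M.σ x) (M.φ x)) = M.α x
      rw [swap_apply_of_ne_of_ne hxs.symm (ne hs_outer hb_inner), swap_apply_right]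
    αN_x := swap_apply_right _ _
    αN_y := by
      change swap x (M.α x) (M.α (M.α x)) = M.α x
      rw [hp.α_involutive, swap_apply_left]
    φN_b := by
      rw [deleteRoot_φ_of_ne hp.α_involutive (ne hx_outer hb_inner).symm hyb.symm,
        swap_apply_of_ne_of_ne (ne hx_outer ht_inner).symm hbt.symm,
        swap_apply_of_ne_of_ne hyt.symm (ne hs_outer ht_inner).symm]
    φN_t := by
      rw [deleteRoot_φ_of_ne hp.α_involutive (ne hx_outer ht_inner).symm hyt.symm, hφt,
        swap_apply_of_ne_of_ne hxy.symm hyb, swap_apply_left]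
    σM_eq := by rw [deleteRoot, mul_assoc, swap_mul_self_mul, swap_mul_self_mul]
    αM_eq := by rw [deleteRoot, swap_mul_self_mul]
    rootN := rfl
    rootM := rfl }

end DeleteRoot

end DartMap

section Union

variable {X : Type*}

/-- `f` acts as `g` on the darts satisfying `L` and as `h` on all others, where `g` and `h` fix the
darts on which they are not used. -/
structure IsUnionOn (L : X → Prop) (f g h : Perm X) : Prop where
  eq_left : ∀ d, L d → f d = g d
  eq_right : ∀ d, ¬ L d → f d = h d
  left_fixed : ∀ d, ¬ L d → g d = d
  right_fixed : ∀ d, L d → h d = d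

namespace IsUnionOn

variable {L : X → Prop} {f g h f' g' h' : Perm X} {a o x y : X}

theorem one (L : X → Prop) : IsUnionOn L 1 1 1 where
  eq_left _ _ := rfl
  eq_right _ _ := rfl
  left_fixed _ _ := rfl
  right_fixed _ _ := rfl

theorem symm (u : IsUnionOn L f g h) : IsUnionOn (fun d => ¬ L d) f h g where
  eq_left := u.eq_right
  eq_right d hd := u.eq_left d (not_not.1 hd)
  left_fixed d hd := u.right_fixed d (not_not.1 hd)
  right_fixed := u.left_fixed

theorem left_mem_iff (u : IsUnionOn L f g h) {d : X} : L (g d) ↔ L d := by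
  by_cases hd : L d
  · refine iff_of_true (by_contra fun hgd => hgd ?_) hd
    rwa [g.injective (u.left_fixed _ hgd)]
  · rw [u.left_fixed d hd]

theorem right_mem_iff (u : IsUnionOn L f g h) {d : X} : L (h d) ↔ L d :=
  not_iff_not.1 u.symm.left_mem_iff

theorem mem_iff (u : IsUnionOn L f g h) {d : X} : L (f d) ↔ L d := by
  by_cases hd : L d
  · rw [u.eq_left d hd, u.left_mem_iff]
  · rw [u.eq_right d hd, u.right_mem_iff]

theorem mul (u : IsUnionOn L f g h) (u' : IsUnionOn L f' g' h') :
    IsUnionOn L (f * f') (g * g') (h * h') where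
  eq_left d hd := by rw [mul_apply, mul_apply, u'.eq_left d hd, u.eq_left _ (u'.left_mem_iff.2 hd)]
  eq_right d hd := by
    rw [mul_apply, mul_apply, u'.eq_right d hd, u.eq_right _ (mt u'.right_mem_iff.1 hd)]
  left_fixed d hd := by rw [mul_apply, u'.left_fixed d hd, u.left_fixed d hd]
  right_fixed d hd := by rw [mul_apply, u'.right_fixed d hd, u.right_fixed d hd]

theorem of_fixed (left_fixed : ∀ d, ¬ L d → g d = d) (right_fixed : ∀ d, L d → h d = d) :
    IsUnionOn L (g * h) g h where
  eq_left d hd := by rw [mul_apply, right_fixed d hd]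
  eq_right d hd := by
    rw [mul_apply, left_fixed]
    intro hhd
    rw [h.injective (right_fixed _ hhd)] at hhd
    exact hd hhd
  left_fixed := left_fixed
  right_fixed := right_fixed

theorem eq_mul (u : IsUnionOn L f g h) : f = g * h := by
  have u' := of_fixed u.left_fixed u.right_fixed
  ext d
  by_cases hd : L d
  · rw [u.eq_left d hd, u'.eq_left d hd]
  · rw [u.eq_right d hd, u'.eq_right d hd]

theorem forall_apply_eq_iff (u : IsUnionOn L f g h) :
    (∀ d, f d = d) ↔ (∀ d, g d = d) ∧ ∀ d, h d = d := by
  constructor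
  · intro hf
    exact ⟨fun d => (em (L d)).elim (fun hd => u.eq_left d hd ▸ hf d) (u.left_fixed d),
      fun d => (em (L d)).elim (u.right_fixed d) fun hd => u.eq_right d hd ▸ hf d⟩
  · rintro ⟨hg, hh⟩ d
    by_cases hd : L d
    · rw [u.eq_left d hd, hg]
    · rw [u.eq_right d hd, hh]

theorem left_iff_of_iff (u : IsUnionOn L f g h) {S : X → Prop} (hS : ∀ d, S (f d) ↔ S d) (d : X) :
    S (g d) ↔ S d := by
  by_cases hd : L d
  · rw [← u.eq_left d hd, hS]
  · rw [u.left_fixed d hd]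

theorem mem_of_linked (u : IsUnionOn L f g h) (u' : IsUnionOn L f' g' h') (hxy : Linked f f' x y)
    (hx : L x) : L y :=
  (hxy L ⟨fun _ => u.mem_iff, fun _ => u'.mem_iff⟩).1 hx

theorem eq_of_linked_right (u : IsUnionOn L f g h) (u' : IsUnionOn L f' g' h') (hx : L x)
    (hxy : Linked h h' x y) : x = y := by
  have key : ∀ {k : Perm X}, k x = x → ∀ d, k d = x ↔ d = x := fun {k} hk d =>
    ⟨fun e => k.injective (e.trans hk.symm), fun e => e ▸ hk⟩
  exact ((hxy (· = x) ⟨key (u.right_fixed x hx), key (u'.right_fixed x hx)⟩).1 rfl).symm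

theorem linked_iff_left (u : IsUnionOn L f g h) (u' : IsUnionOn L f' g' h') (hx : L x) :
    Linked f f' x y ↔ Linked g g' x y := by
  refine ⟨fun hxy => ?_, fun hxy S hS => hxy S ⟨u.left_iff_of_iff hS.1, u'.left_iff_of_iff hS.2⟩⟩
  have hinv := invariant_linked g g' x
  have hmem : ∀ d, Linked g g' x d → L d := fun d hd =>
    (hd L ⟨fun _ => u.left_mem_iff, fun _ => u'.left_mem_iff⟩).1 hx
  have key : ∀ {k l m : Perm X}, IsUnionOn L k l m →
      (∀ d, Linked g g' x (l d) ↔ Linked g g' x d) →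
      ∀ d, Linked g g' x (k d) ↔ Linked g g' x d := by
    intro k l m v hl d
    by_cases hd : L d
    · rw [v.eq_left d hd, hl]
    · exact iff_of_false (fun e => hd (v.mem_iff.1 (hmem _ e))) fun e => hd (hmem d e)
  exact (hxy _ ⟨key u hinv.1, key u' hinv.2⟩).1 (Linked.refl g g' x)

theorem linked_iff_right (u : IsUnionOn L f g h) (u' : IsUnionOn L f' g' h') (hx : ¬ L x) :
    Linked f f' x y ↔ Linked h h' x y :=
  u.symm.linked_iff_left u'.symm hx

theorem numComponents_add_card [Finite X] (u : IsUnionOn L f g h) (u' : IsUnionOn L f' g' h') :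
    numComponents f f' + Nat.card X = numComponents g g' + numComponents h h' := by
  have right_eq : ∀ {x y}, L x → Linked h h' x y → x = y := fun hx => u.eq_of_linked_right u' hx
  have left_eq : ∀ {x y}, ¬ L x → Linked g g' x y → x = y :=
    fun hx => u.symm.eq_of_linked_right u'.symm hx
  refine card_quotient_add_card_of_disjoint (R := linkedSetoid f f') (RA := linkedSetoid g g')
    (RB := linkedSetoid h h') (fun x y => ?_) fun x => ?_
  · change Linked f f' x y ↔ Linked g g' x y ∨ Linked h h' x y
    by_cases hx : L x
    · rw [u.linked_iff_left u' hx]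
      exact ⟨Or.inl, Or.rec id fun hh => right_eq hx hh ▸ Linked.refl g g' x⟩
    · rw [u.linked_iff_right u' hx]
      exact ⟨Or.inr, Or.rec (fun hg => left_eq hx hg ▸ Linked.refl h h' x) id⟩
  · exact (em (L x)).elim (fun hx => Or.inr fun y hy => (right_eq hx hy).symm)
      fun hx => Or.inl fun y hy => (left_eq hx hy).symm

section SwapMul

variable (u : IsUnionOn L f g h) (u' : IsUnionOn L f' g' h') (ha : L a) (ho : ¬ L o)
include u ha ho

theorem not_sameCycle : ¬ f.SameCycle a o := fun hao =>
  ho (u.mem_of_linked (one L) (linked_one_right.2 hao) ha)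

variable [DecidableEq X] [Finite X]

theorem numCycles_swap_mul : numCycles (swap a o * f) + 1 + Nat.card X =
    numCycles g + numCycles h := by
  rw [numCycles_swap_mul_add_one (u.not_sameCycle ha ho), ← numComponents_one_right,
    ← numComponents_one_right, ← numComponents_one_right, u.numComponents_add_card (one L)]

theorem linked_swap_mul_iff : Linked (swap a o * f) f' x y ↔
    Linked f f' x y ∨ Linked f f' x a ∧ Linked f f' o y ∨ Linked f f' x o ∧ Linked f f' a y :=
  ((mergesAt_swap_mul (u.not_sameCycle ha ho)).of_one_right f').linked_iff x y

include u'

theorem linked_swap_mul_left (hx : L x) (hy : L y) :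
    Linked (swap a o * f) f' x y ↔ Linked g g' x y := by
  rw [u.linked_swap_mul_iff ha ho, ← u.linked_iff_left u' hx]
  refine ⟨?_, Or.inl⟩
  rintro (hxy | ⟨-, hoy⟩ | ⟨hxo, -⟩)
  · exact hxy
  · exact (ho (u.mem_of_linked u' hoy.symm hy)).elim
  · exact (ho (u.mem_of_linked u' hxo hx)).elim

theorem linked_swap_mul_right (hx : ¬ L x) (hy : ¬ L y) :
    Linked (swap a o * f) f' x y ↔ Linked h h' x y := by
  rw [swap_comm]
  exact u.symm.linked_swap_mul_left u'.symm ho (not_not.2 ha) hx hy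

theorem linked_swap_mul_left_right (hx : L x) (hy : ¬ L y) :
    Linked (swap a o * f) f' x y ↔ Linked g g' x a ∧ Linked h h' o y := by
  rw [u.linked_swap_mul_iff ha ho, ← u.linked_iff_left u' hx, ← u.linked_iff_right u' ho]
  refine ⟨?_, fun hxy => Or.inr (Or.inl hxy)⟩
  rintro (hxy | hxy | ⟨hxo, -⟩)
  · exact (hy (u.mem_of_linked u' hxy hx)).elim
  · exact hxy
  · exact (ho (u.mem_of_linked u' hxo hx)).elim

theorem numComponents_swap_mul : numComponents (swap a o * f) f' + 1 + Nat.card X =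
    numComponents g g' + numComponents h h' := by
  have hao : ¬ Linked f f' a o := fun hao => ho (u.mem_of_linked u' hao ha)
  rw [((mergesAt_swap_mul (u.not_sameCycle ha ho)).of_one_right f').numComponents_add_one hao,
    u.numComponents_add_card u']

omit u'

theorem sameCycle_swap_mul_left (hx : L x) (hy : L y) :
    (swap a o * f).SameCycle x y ↔ g.SameCycle x y := by
  simpa only [linked_one_right] using u.linked_swap_mul_left (one L) ha ho hx hy

theorem sameCycle_swap_mul_right (hx : ¬ L x) (hy : ¬ L y) :
    (swap a o * f).SameCycle x y ↔ h.SameCycle x y := by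
  simpa only [linked_one_right] using u.linked_swap_mul_right (one L) ha ho hx hy

theorem sameCycle_swap_mul_left_right (hx : L x) (hy : ¬ L y) :
    (swap a o * f).SameCycle x y ↔ g.SameCycle x a ∧ h.SameCycle o y := by
  simpa only [linked_one_right] using u.linked_swap_mul_left_right (one L) ha ho hx hy

end SwapMul

end IsUnionOn

theorem exists_isUnionOn {L : X → Prop} {f : Perm X} (hL : ∀ d, L (f d) ↔ L d) :
    ∃ g h, IsUnionOn L f g h := by
  classical
  have hL' : ∀ d, ¬ L (f d) ↔ ¬ L d := fun d => not_congr (hL d)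
  exact ⟨ofSubtype (f.subtypePerm hL), ofSubtype (f.subtypePerm hL'), {
    eq_left := fun d hd => (ofSubtype_apply_of_mem (f.subtypePerm hL) hd).symm
    eq_right := fun d hd => (ofSubtype_apply_of_mem (f.subtypePerm hL') hd).symm
    left_fixed := fun d hd => ofSubtype_apply_of_not_mem _ hd
    right_fixed := fun d hd => ofSubtype_apply_of_not_mem (f.subtypePerm hL') (not_not.2 hd) }⟩

end Union

namespace DartMap

variable {X : Type*}

/-- `A` and `B` glued at a vertex: the vertex of the root of `A` is identified with the head of the
root of `B`, in such a way that the outer boundary of `A` follows the root of `B`. -/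
def wedge [DecidableEq X] (A B : DartMap X) : DartMap X where
  σ := swap A.root (B.φ B.root) * (A.σ * B.σ)
  α := A.α * B.α
  root := B.root

/-- All darts of `A` satisfy `L` and no dart of `B` does. -/
structure Separates (L : X → Prop) (A B : DartMap X) : Prop where
  root_left : L A.root
  root_right : ¬ L B.root
  unionσ : IsUnionOn L (A.σ * B.σ) A.σ B.σ
  unionα : IsUnionOn L (A.α * B.α) A.α B.α

variable {L : X → Prop} {A B W : DartMap X} {d e : X}

theorem separates_of_ghost (hA : A.IsNearTriangulation) (hB : B.IsNearTriangulation)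
    (h : ∀ d, A.α d ≠ d → B.α d = d) : Separates (fun d => A.α d ≠ d) A B where
  root_left := hA.α_root_ne
  root_right e := hB.α_root_ne (h _ e)
  unionσ := .of_fixed (fun d hd => hA.σ_ghost d (not_not.1 hd)) fun d hd => hB.σ_ghost d (h d hd)
  unionα := .of_fixed (fun _ => not_not.1) h

namespace Separates

section Basic

variable (c : Separates L A B)
include c

theorem unionφ : IsUnionOn L (A.σ * B.σ * (A.α * B.α)) A.φ B.φ := c.unionσ.mul c.unionα

theorem mem_of_α_ne (hd : A.α d ≠ d) : L d := by_contra fun hL => hd (c.unionα.left_fixed d hL)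

theorem not_mem_of_α_ne (hd : B.α d ≠ d) : ¬ L d := fun hL => hd (c.unionα.right_fixed d hL)

theorem not_mem_φ_root : ¬ L (B.φ B.root) := mt c.unionφ.right_mem_iff.1 c.root_right

theorem root_ne_φ_root : A.root ≠ B.φ B.root := fun e => c.not_mem_φ_root (e ▸ c.root_left)

theorem mem_of_onOuter (hd : A.OnOuter d) : L d :=
  (iff_of_sameCycle (fun _ => c.unionφ.left_mem_iff) hd).1 c.root_left

theorem not_mem_of_onOuter (hd : B.OnOuter d) : ¬ L d :=
  mt (iff_of_sameCycle (fun _ => c.unionφ.right_mem_iff) hd).2 c.root_right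

end Basic

variable [DecidableEq X]

theorem wedge_φ_eq (A B : DartMap X) :
    (A.wedge B).φ = swap A.root (B.φ B.root) * (A.σ * B.σ * (A.α * B.α)) := rfl

variable (c : Separates L A B)
include c

theorem wedge_α_left (hd : L d) : (A.wedge B).α d = A.α d := c.unionα.eq_left d hd

theorem wedge_α_right (hd : ¬ L d) : (A.wedge B).α d = B.α d := c.unionα.eq_right d hd

theorem mem_wedge_α_iff : L ((A.wedge B).α d) ↔ L d := c.unionα.mem_iff

theorem wedge_φ_left (hd : L d) (hroot : A.φ d ≠ A.root) : (A.wedge B).φ d = A.φ d := by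
  rw [wedge_φ_eq, mul_apply, c.unionφ.eq_left d hd, swap_apply_of_ne_of_ne hroot]
  exact fun e => c.not_mem_φ_root (e ▸ c.unionφ.left_mem_iff.2 hd)

theorem wedge_φ_right (hd : ¬ L d) (hroot : d ≠ B.root) : (A.wedge B).φ d = B.φ d := by
  rw [wedge_φ_eq, mul_apply, c.unionφ.eq_right d hd, swap_apply_of_ne_of_ne]
  · exact fun e => hd (c.unionφ.right_mem_iff.1 (e.symm ▸ c.root_left))
  · exact fun e => hroot (B.φ.injective e)

theorem wedge_φ_root : (A.wedge B).φ B.root = A.root := by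
  rw [wedge_φ_eq, mul_apply, c.unionφ.eq_right _ c.root_right, swap_apply_right]

theorem wedge_φ_last (hd : A.φ d = A.root) : (A.wedge B).φ d = B.φ B.root := by
  have hL : L d := c.unionφ.left_mem_iff.1 (hd.symm ▸ c.root_left)
  rw [wedge_φ_eq, mul_apply, c.unionφ.eq_left d hL, hd, swap_apply_left]

theorem forall_wedge_iff {P PA PB : X → Prop} (hA : ∀ d, L d → (P d ↔ PA d))
    (hB : ∀ d, ¬ L d → (P d ↔ PB d)) : (∀ d, (A.wedge B).α d ≠ d → P d) ↔
      (∀ d, A.α d ≠ d → PA d) ∧ ∀ d, B.α d ≠ d → PB d := by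
  constructor
  · intro hW
    constructor
    · intro d hd
      have hL := c.mem_of_α_ne hd
      exact (hA d hL).1 (hW d (by rwa [c.wedge_α_left hL]))
    · intro d hd
      have hL := c.not_mem_of_α_ne hd
      exact (hB d hL).1 (hW d (by rwa [c.wedge_α_right hL]))
  · rintro ⟨hPA, hPB⟩ d hd
    by_cases hL : L d
    · exact (hA d hL).2 (hPA d (by rwa [c.wedge_α_left hL] at hd))
    · exact (hB d hL).2 (hPB d (by rwa [c.wedge_α_right hL] at hd))

variable [Finite X]

theorem sameCycle_left (hd : L d) (he : L e) :
    (A.wedge B).σ.SameCycle d e ↔ A.σ.SameCycle d e :=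
  c.unionσ.sameCycle_swap_mul_left c.root_left c.not_mem_φ_root hd he

theorem sameCycle_right (hd : ¬ L d) (he : ¬ L e) :
    (A.wedge B).σ.SameCycle d e ↔ B.σ.SameCycle d e :=
  c.unionσ.sameCycle_swap_mul_right c.root_left c.not_mem_φ_root hd he

theorem sameCycle_left_right (hd : L d) (he : ¬ L e) : (A.wedge B).σ.SameCycle d e ↔
    A.σ.SameCycle d A.root ∧ B.σ.SameCycle (B.φ B.root) e :=
  c.unionσ.sameCycle_swap_mul_left_right c.root_left c.not_mem_φ_root hd he

theorem onOuter_left (hd : L d) : (A.wedge B).OnOuter d ↔ A.OnOuter d := by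
  have hB : B.φ.SameCycle (B.φ B.root) B.root := (sameCycle_self_apply _ _).symm
  rw [OnOuter, sameCycle_comm, wedge_φ_eq]
  exact (c.unionφ.sameCycle_swap_mul_left_right c.root_left c.not_mem_φ_root hd c.root_right).trans
    ⟨fun h => h.1.symm, fun h => ⟨h.symm, hB⟩⟩

theorem onOuter_right (hd : ¬ L d) : (A.wedge B).OnOuter d ↔ B.OnOuter d :=
  c.unionφ.sameCycle_swap_mul_right c.root_left c.not_mem_φ_root c.root_right hd

omit [Finite X] in
theorem φ_φ_φ_left (hd : L d) (houter : ¬ A.OnOuter d) :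
    (A.wedge B).φ ((A.wedge B).φ ((A.wedge B).φ d)) = A.φ (A.φ (A.φ d)) := by
  have hφ : ∀ {e}, L e → ¬ A.OnOuter e → (A.wedge B).φ e = A.φ e := fun he hout =>
    c.wedge_φ_left he fun hroot => hout (onOuter_φ.1 (hroot ▸ A.onOuter_root))
  rw [hφ hd houter, hφ (c.unionφ.left_mem_iff.2 hd) (mt onOuter_φ.1 houter),
    hφ (c.unionφ.left_mem_iff.2 (c.unionφ.left_mem_iff.2 hd))
      (mt onOuter_φ.1 (mt onOuter_φ.1 houter))]

omit [Finite X] in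
theorem φ_φ_φ_right (hd : ¬ L d) (houter : ¬ B.OnOuter d) :
    (A.wedge B).φ ((A.wedge B).φ ((A.wedge B).φ d)) = B.φ (B.φ (B.φ d)) := by
  have hφ : ∀ {e}, ¬ L e → ¬ B.OnOuter e → (A.wedge B).φ e = B.φ e := fun he hout =>
    c.wedge_φ_right he fun hroot => hout (hroot ▸ B.onOuter_root)
  have hmem : ∀ {e}, ¬ L e → ¬ L (B.φ e) := mt c.unionφ.right_mem_iff.1
  rw [hφ hd houter, hφ (hmem hd) (mt onOuter_φ.1 houter),
    hφ (hmem (hmem hd)) (mt onOuter_φ.1 (mt onOuter_φ.1 houter))]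

omit [Finite X] in
theorem α_involutive_iff : (∀ d, (A.wedge B).α ((A.wedge B).α d) = d) ↔
    (∀ d, A.α (A.α d) = d) ∧ ∀ d, B.α (B.α d) = d :=
  (c.unionα.mul c.unionα).forall_apply_eq_iff

omit [Finite X] in
theorem σ_ghost_wedge (hA : ∀ d, A.α d = d → A.σ d = d) (hB : ∀ d, B.α d = d → B.σ d = d)
    (hrootA : A.α A.root ≠ A.root) (hrootB : B.α (B.φ B.root) ≠ B.φ B.root)
    (hd : (A.wedge B).α d = d) : (A.wedge B).σ d = d := by
  have hs : (A.σ * B.σ) d = d ∧ d ≠ A.root ∧ d ≠ B.φ B.root := by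
    by_cases hL : L d
    · rw [c.wedge_α_left hL] at hd
      exact ⟨by rw [c.unionσ.eq_left d hL, hA d hd], fun e => hrootA (e ▸ hd),
        fun e => c.not_mem_φ_root (e ▸ hL)⟩
    · rw [c.wedge_α_right hL] at hd
      exact ⟨by rw [c.unionσ.eq_right d hL, hB d hd], fun e => hL (e ▸ c.root_left),
        fun e => hrootB (e ▸ hd)⟩
  exact (congrArg _ hs.1).trans (swap_apply_of_ne_of_ne hs.2.1 hs.2.2)

omit [Finite X] in
theorem σ_ghost_left (hW : ∀ d, (A.wedge B).α d = d → (A.wedge B).σ d = d) (hd : A.α d = d) :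
    A.σ d = d := by
  by_cases hL : L d
  · have hσ : swap A.root (B.φ B.root) (A.σ d) = d := by
      rw [← c.unionσ.eq_left d hL]
      exact hW d (by rwa [c.wedge_α_left hL])
    rw [swap_apply_eq_iff, eq_comm] at hσ
    rcases eq_or_ne d A.root with rfl | hroot
    · rw [swap_apply_left] at hσ
      exact (c.not_mem_φ_root (hσ ▸ c.unionσ.left_mem_iff.2 hL)).elim
    · have hφ : d ≠ B.φ B.root := fun e => c.not_mem_φ_root (e ▸ hL)
      rwa [swap_apply_of_ne_of_ne hroot hφ, eq_comm] at hσ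
  · exact c.unionσ.left_fixed d hL

omit [Finite X] in
theorem σ_ghost_right (hW : ∀ d, (A.wedge B).α d = d → (A.wedge B).σ d = d) (hd : B.α d = d) :
    B.σ d = d := by
  by_cases hL : L d
  · exact c.unionσ.right_fixed d hL
  · have hσ : swap A.root (B.φ B.root) (B.σ d) = d := by
      rw [← c.unionσ.eq_right d hL]
      exact hW d (by rwa [c.wedge_α_right hL])
    rw [swap_apply_eq_iff, eq_comm] at hσ
    rcases eq_or_ne d (B.φ B.root) with rfl | hφ
    · rw [swap_apply_right] at hσ
      exact (hL (c.unionσ.right_mem_iff.1 (hσ ▸ c.root_left))).elim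
    · have hroot : d ≠ A.root := fun e => hL (e ▸ c.root_left)
      rwa [swap_apply_of_ne_of_ne hroot hφ, eq_comm] at hσ

theorem linked_root_iff :
    (∀ d, (A.wedge B).α d ≠ d → Linked (A.wedge B).σ (A.wedge B).α B.root d) ↔
      (∀ d, A.α d ≠ d → Linked A.σ A.α A.root d) ∧ ∀ d, B.α d ≠ d → Linked B.σ B.α B.root d := by
  have hB : Linked B.σ B.α (B.φ B.root) B.root :=
    ((linked_apply_right_perm _ _ _).trans (linked_apply_left_perm _ _ _)).symm
  refine c.forall_wedge_iff (fun d hd => ?_) fun d hd =>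
    c.unionσ.linked_swap_mul_right c.unionα c.root_left c.not_mem_φ_root c.root_right hd
  have h := c.unionσ.linked_swap_mul_left_right c.unionα c.root_left c.not_mem_φ_root hd
    c.root_right
  exact ⟨fun hW => (h.1 hW.symm).1.symm, fun hA => (h.2 ⟨hA.symm, hB⟩).symm⟩

theorem inner_face_iff : (∀ d, (A.wedge B).α d ≠ d → ¬ (A.wedge B).OnOuter d →
      (A.wedge B).φ ((A.wedge B).φ ((A.wedge B).φ d)) = d) ↔
    (∀ d, A.α d ≠ d → ¬ A.OnOuter d → A.φ (A.φ (A.φ d)) = d) ∧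
      ∀ d, B.α d ≠ d → ¬ B.OnOuter d → B.φ (B.φ (B.φ d)) = d := by
  refine c.forall_wedge_iff (fun d hd => ?_) fun d hd => ?_
  · rw [c.onOuter_left hd]
    exact forall_congr' fun houter => by rw [c.φ_φ_φ_left hd houter]
  · rw [c.onOuter_right hd]
    exact forall_congr' fun houter => by rw [c.φ_φ_φ_right hd houter]

theorem no_loop_iff : (∀ d, (A.wedge B).α d ≠ d →
      ¬ (A.wedge B).σ.SameCycle d ((A.wedge B).α d)) ↔
    (∀ d, A.α d ≠ d → ¬ A.σ.SameCycle d (A.α d)) ∧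
      ∀ d, B.α d ≠ d → ¬ B.σ.SameCycle d (B.α d) := by
  refine c.forall_wedge_iff (fun d hd => ?_) fun d hd => ?_
  · rw [c.sameCycle_left hd (c.mem_wedge_α_iff.2 hd), c.wedge_α_left hd]
  · rw [c.sameCycle_right hd (mt c.mem_wedge_α_iff.1 hd), c.wedge_α_right hd]

theorem mem_iff_mem_of_parallel (no_loop : ∀ d, A.α d ≠ d → ¬ A.σ.SameCycle d (A.α d))
    (hd : (A.wedge B).α d ≠ d) (he : (A.wedge B).α e ≠ e) (h : (A.wedge B).σ.SameCycle d e)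
    (hα : (A.wedge B).σ.SameCycle ((A.wedge B).α d) ((A.wedge B).α e)) : L d ↔ L e := by
  have key : ∀ {d e}, (A.wedge B).α d ≠ d → (A.wedge B).σ.SameCycle d e →
      (A.wedge B).σ.SameCycle ((A.wedge B).α d) ((A.wedge B).α e) → L d → L e := by
    intro d e hd h hα hL
    by_contra hLe
    have hrootd := ((c.sameCycle_left_right hL hLe).1 h).1
    have hrootα := ((c.sameCycle_left_right (c.mem_wedge_α_iff.2 hL)
      (mt c.mem_wedge_α_iff.1 hLe)).1 hα).1
    rw [c.wedge_α_left hL] at hd hrootα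
    exact no_loop d hd (hrootd.trans hrootα.symm)
  exact ⟨key hd h hα, key he h.symm hα.symm⟩

theorem no_parallel_iff (no_loop : ∀ d, A.α d ≠ d → ¬ A.σ.SameCycle d (A.α d)) :
    (∀ d d', (A.wedge B).α d ≠ d → (A.wedge B).α d' ≠ d' → (A.wedge B).σ.SameCycle d d' →
      (A.wedge B).σ.SameCycle ((A.wedge B).α d) ((A.wedge B).α d') → d = d') ↔
    (∀ d d', A.α d ≠ d → A.α d' ≠ d' → A.σ.SameCycle d d' →
      A.σ.SameCycle (A.α d) (A.α d') → d = d') ∧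
    (∀ d d', B.α d ≠ d → B.α d' ≠ d' → B.σ.SameCycle d d' →
      B.σ.SameCycle (B.α d) (B.α d') → d = d') := by
  have left : ∀ {d d'}, L d → L d' → ((A.wedge B).σ.SameCycle ((A.wedge B).α d)
      ((A.wedge B).α d') ↔ A.σ.SameCycle (A.α d) (A.α d')) := fun hd hd' => by
    rw [c.sameCycle_left (c.mem_wedge_α_iff.2 hd) (c.mem_wedge_α_iff.2 hd'), c.wedge_α_left hd,
      c.wedge_α_left hd']
  have right : ∀ {d d'}, ¬ L d → ¬ L d' → ((A.wedge B).σ.SameCycle ((A.wedge B).α d)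
      ((A.wedge B).α d') ↔ B.σ.SameCycle (B.α d) (B.α d')) := fun hd hd' => by
    rw [c.sameCycle_right (mt c.mem_wedge_α_iff.1 hd) (mt c.mem_wedge_α_iff.1 hd'),
      c.wedge_α_right hd, c.wedge_α_right hd']
  constructor
  · refine fun hW => ⟨fun d d' hd hd' h hα => ?_, fun d d' hd hd' h hα => ?_⟩
    · have hL := c.mem_of_α_ne hd
      have hL' := c.mem_of_α_ne hd'
      exact hW d d' (by rwa [c.wedge_α_left hL]) (by rwa [c.wedge_α_left hL'])
        ((c.sameCycle_left hL hL').2 h) ((left hL hL').2 hα)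
    · have hL := c.not_mem_of_α_ne hd
      have hL' := c.not_mem_of_α_ne hd'
      exact hW d d' (by rwa [c.wedge_α_right hL]) (by rwa [c.wedge_α_right hL'])
        ((c.sameCycle_right hL hL').2 h) ((right hL hL').2 hα)
  · rintro ⟨hA, hB⟩ d d' hd hd' h hα
    have hLL := c.mem_iff_mem_of_parallel no_loop hd hd' h hα
    by_cases hL : L d
    · have hL' := hLL.1 hL
      rw [c.wedge_α_left ‹_›] at hd hd'
      exact hA d d' hd hd' ((c.sameCycle_left hL hL').1 h) ((left hL hL').1 hα)
    · have hL' := mt hLL.2 hL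
      rw [c.wedge_α_right ‹_›] at hd hd'
      exact hB d d' hd hd' ((c.sameCycle_right hL hL').1 h) ((right hL hL').1 hα)

/-- The Euler defects of `A` and `B` add up to that of the wedge, and none of them is negative. -/
theorem euler_iff (hA : ∀ d, A.α (A.α d) = d) (hB : ∀ d, B.α (B.α d) = d) :
    numCycles (A.wedge B).σ + numCycles (A.wedge B).α + numCycles (A.wedge B).φ =
        Nat.card X + 2 * numComponents (A.wedge B).σ (A.wedge B).α ↔
      numCycles A.σ + numCycles A.α + numCycles A.φ =
        Nat.card X + 2 * numComponents A.σ A.α ∧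
      numCycles B.σ + numCycles B.α + numCycles B.φ =
        Nat.card X + 2 * numComponents B.σ B.α := by
  have hgenusA : _ + _ + numCycles A.φ ≤ _ := euler_inequality A.σ A.α hA
  have hgenusB : _ + _ + numCycles B.φ ≤ _ := euler_inequality B.σ B.α hB
  have hσ : numCycles (A.wedge B).σ + _ + _ = _ :=
    c.unionσ.numCycles_swap_mul c.root_left c.not_mem_φ_root
  have hφ : numCycles (A.wedge B).φ + _ + _ = _ :=
    c.unionφ.numCycles_swap_mul c.root_left c.not_mem_φ_root
  have hcomp : numComponents (A.wedge B).σ (A.wedge B).α + _ + _ = _ :=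
    c.unionσ.numComponents_swap_mul c.unionα c.root_left c.not_mem_φ_root
  have hα : numCycles (A.wedge B).α + Nat.card X = numCycles A.α + numCycles B.α := by
    change numCycles (A.α * B.α) + _ = _
    simpa only [numComponents_one_right] using c.unionα.numComponents_add_card (.one L)
  omega

theorem outer_simple_off_head_iff : (∀ d d', (A.wedge B).OnOuter d → (A.wedge B).OnOuter d' →
      (A.wedge B).σ.SameCycle d d' → d ≠ (A.wedge B).φ B.root →
        d' ≠ (A.wedge B).φ B.root → d = d') ↔ A.OuterSimple ∧ B.OuterSimple := by
  have hhead : (A.wedge B).OnOuter (B.φ B.root) :=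
    (c.onOuter_right c.not_mem_φ_root).2 (onOuter_φ.2 B.onOuter_root)
  have hroot_head : (A.wedge B).σ.SameCycle A.root (B.φ B.root) :=
    (c.sameCycle_left_right c.root_left c.not_mem_φ_root).2 ⟨.rfl, .rfl⟩
  rw [c.wedge_φ_root]
  constructor
  · refine fun hW => ⟨fun d d' hd hd' h => ?_, fun d d' hd hd' h => ?_⟩
    · have key : ∀ {e}, A.OnOuter e → A.σ.SameCycle A.root e → e = A.root := by
        intro e he h
        have hL := c.mem_of_onOuter he
        by_contra hne
        have := hW e _ ((c.onOuter_left hL).2 he) hhead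
          (((c.sameCycle_left c.root_left hL).2 h).symm.trans hroot_head) hne
          c.root_ne_φ_root.symm
        exact c.not_mem_φ_root (this ▸ hL)
      rcases eq_or_ne d A.root with rfl | hne
      · exact (key hd' h).symm
      rcases eq_or_ne d' A.root with rfl | hne'
      · exact key hd h.symm
      have hL := c.mem_of_onOuter hd
      have hL' := c.mem_of_onOuter hd'
      exact hW d d' ((c.onOuter_left hL).2 hd) ((c.onOuter_left hL').2 hd')
        ((c.sameCycle_left hL hL').2 h) hne hne'
    · have hL := c.not_mem_of_onOuter hd
      have hL' := c.not_mem_of_onOuter hd'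
      exact hW d d' ((c.onOuter_right hL).2 hd) ((c.onOuter_right hL').2 hd')
        ((c.sameCycle_right hL hL').2 h) (fun e => hL (e ▸ c.root_left))
        fun e => hL' (e ▸ c.root_left)
  · rintro ⟨hA, hB⟩
    have mixed : ∀ {d d'}, (A.wedge B).OnOuter d → (A.wedge B).σ.SameCycle d d' → d ≠ A.root →
        L d → L d' := fun {d d'} hd h hne hL => by_contra fun hL' =>
      hne (hA _ _ ((c.onOuter_left hL).1 hd) A.onOuter_root
        ((c.sameCycle_left_right hL hL').1 h).1)
    intro d d' hd hd' h hne hne'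
    by_cases hL : L d
    · have hL' := mixed hd h hne hL
      exact hA _ _ ((c.onOuter_left hL).1 hd) ((c.onOuter_left hL').1 hd')
        ((c.sameCycle_left hL hL').1 h)
    · have hL' := mt (mixed hd' h.symm hne') hL
      exact hB _ _ ((c.onOuter_right hL).1 hd) ((c.onOuter_right hL').1 hd')
        ((c.sameCycle_right hL hL').1 h)

theorem isNearTriangulation_wedge_iff : (A.wedge B).IsNearTriangulation ↔
    A.IsDiskTriangulation ∧ B.IsDiskTriangulation := by
  constructor
  · intro hW
    obtain ⟨α_involutiveA, α_involutiveB⟩ := c.α_involutive_iff.1 hW.α_involutive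
    obtain ⟨linkedA, linkedB⟩ := c.linked_root_iff.1 hW.linked_root
    obtain ⟨faceA, faceB⟩ := c.inner_face_iff.1 hW.inner_face
    obtain ⟨loopA, loopB⟩ := c.no_loop_iff.1 hW.no_loop
    obtain ⟨parA, parB⟩ := (c.no_parallel_iff loopA).1 hW.no_parallel
    obtain ⟨eulerA, eulerB⟩ := (c.euler_iff α_involutiveA α_involutiveB).1 hW.euler
    obtain ⟨outerA, outerB⟩ := c.outer_simple_off_head_iff.1 hW.outer_simple_off_head
    have rootA : A.α A.root ≠ A.root := by
      rw [← c.wedge_α_left c.root_left]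
      exact hW.α_ne_of_onOuter ((c.onOuter_left c.root_left).2 A.onOuter_root)
    have rootB : B.α B.root ≠ B.root := by
      rw [← c.wedge_α_right c.root_right]
      exact hW.α_root_ne
    exact ⟨⟨⟨α_involutiveA, fun _ => c.σ_ghost_left hW.σ_ghost, rootA, linkedA, faceA, loopA, parA,
        eulerA, fun d d' hd hd' h _ _ => outerA d d' hd hd' h⟩, outerA⟩,
      ⟨⟨α_involutiveB, fun _ => c.σ_ghost_right hW.σ_ghost, rootB, linkedB, faceB, loopB, parB,
        eulerB, fun d d' hd hd' h _ _ => outerB d d' hd hd' h⟩, outerB⟩⟩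
  · rintro ⟨⟨hA, outerA⟩, hB, outerB⟩
    exact {
      α_involutive := c.α_involutive_iff.2 ⟨hA.α_involutive, hB.α_involutive⟩
      σ_ghost := fun _ => c.σ_ghost_wedge hA.σ_ghost hB.σ_ghost hA.α_root_ne
        (hB.α_ne_of_onOuter (onOuter_φ.2 B.onOuter_root))
      α_root_ne := (c.wedge_α_right c.root_right).trans_ne hB.α_root_ne
      linked_root := c.linked_root_iff.2 ⟨hA.linked_root, hB.linked_root⟩
      inner_face := c.inner_face_iff.2 ⟨hA.inner_face, hB.inner_face⟩
      no_loop := c.no_loop_iff.2 ⟨hA.no_loop, hB.no_loop⟩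
      no_parallel := (c.no_parallel_iff hA.no_loop).2 ⟨hA.no_parallel, hB.no_parallel⟩
      euler := (c.euler_iff hA.α_involutive hB.α_involutive).2 ⟨hA.euler, hB.euler⟩
      outer_simple_off_head := c.outer_simple_off_head_iff.2 ⟨outerA, outerB⟩ }

theorem not_outerSimple_wedge : ¬ (A.wedge B).OuterSimple := fun h =>
  c.root_ne_φ_root (h _ _ ((c.onOuter_left c.root_left).2 A.onOuter_root)
    ((c.onOuter_right c.not_mem_φ_root).2 (onOuter_φ.2 B.onOuter_root))
    ((c.sameCycle_left_right c.root_left c.not_mem_φ_root).2 ⟨.rfl, .rfl⟩))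

theorem isAddable_wedge (hA : A.IsDiskTriangulation) (hB : B.IsDiskTriangulation) :
    (A.wedge B).IsAddable := by
  have hφA : A.φ A.root ≠ A.root := φ_ne hA.1.no_loop hA.1.α_root_ne
  have hφB : B.φ B.root ≠ B.root := φ_ne hB.1.no_loop hB.1.α_root_ne
  have hsecond : (A.wedge B).φ ((A.wedge B).φ (A.wedge B).root) = A.φ A.root :=
    (congrArg _ c.wedge_φ_root).trans (c.wedge_φ_left c.root_left hφA)
  have hL : L (A.φ A.root) := c.unionφ.left_mem_iff.2 c.root_left
  have hcycleA : ¬ A.σ.SameCycle (A.φ A.root) A.root := fun h =>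
    hφA (hA.2 _ _ (onOuter_φ.2 A.onOuter_root) A.onOuter_root h)
  have hcycleB : ¬ B.σ.SameCycle (B.φ B.root) B.root := fun h =>
    hφB (hB.2 _ _ (onOuter_φ.2 B.onOuter_root) B.onOuter_root h)
  rw [IsAddable, hsecond]
  constructor
  · exact fun h => hcycleA ((c.sameCycle_left_right hL c.root_right).1 h.symm).1
  · rintro ⟨e, -, hroot, hα⟩
    by_cases he : L e
    · exact hcycleB ((c.sameCycle_left_right he c.root_right).1 hroot.symm).2
    · exact hcycleA ((c.sameCycle_left_right hL (mt c.mem_wedge_α_iff.1 he)).1 hα).1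

end Separates

section Splitting

/-- Cutting a vertex visited twice by a face adds a vertex and a face, so by Euler's inequality
it must disconnect the map. -/
theorem not_linked_swap_mul [Finite X] [DecidableEq X] {M : DartMap X} {x y : X}
    (hα : Function.Involutive M.α)
    (euler : numCycles M.σ + numCycles M.α + numCycles M.φ =
      Nat.card X + 2 * numComponents M.σ M.α)
    (hne : x ≠ y) (hσ : M.σ.SameCycle x y) (hφ : M.φ.SameCycle x y) :
    ¬ Linked (swap x y * M.σ) M.α x y := by
  intro hlinked
  have hmerge := mergesAt_swap_mul (not_sameCycle_swap_mul hne hσ)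
  rw [swap_mul_self_mul] at hmerge
  have hcomp := (hmerge.of_one_right M.α).numComponents_eq hlinked
  have hgenus := euler_inequality (swap x y * M.σ) M.α hα
  rw [mul_assoc, ← φ.eq_def, numCycles_swap_mul_of_sameCycle hne hσ,
    numCycles_swap_mul_of_sameCycle hne hφ] at hgenus
  omega

namespace IsNearTriangulation

theorem exists_sameCycle_head (hW : W.IsNearTriangulation) (houter : ¬ W.OuterSimple) :
    ∃ o, W.OnOuter o ∧ o ≠ W.φ W.root ∧ W.σ.SameCycle (W.φ W.root) o := by
  rw [OuterSimple] at houter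
  push Not at houter
  obtain ⟨d, d', hd, hd', hcycle, hne⟩ := houter
  rcases eq_or_ne d (W.φ W.root) with rfl | hdh
  · exact ⟨d', hd', hne.symm, hcycle⟩
  rcases eq_or_ne d' (W.φ W.root) with rfl | hdh'
  · exact ⟨d, hd, hne, hcycle.symm⟩
  exact (hne (hW.outer_simple_off_head d d' hd hd' hcycle hdh hdh')).elim

variable [Finite X] [DecidableEq X]

theorem exists_eq_wedge (hW : W.IsNearTriangulation) (houter : ¬ W.OuterSimple) :
    ∃ L A B, Separates L A B ∧ W = A.wedge B := by
  obtain ⟨o, ho, hne, hcycle⟩ := hW.exists_sameCycle_head houter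
  have hhead : W.OnOuter (W.φ W.root) := onOuter_φ.2 W.onOuter_root
  set a := W.φ W.root with ha
  set s := swap a o * W.σ with hs
  have hunlinked : ¬ Linked s W.α a o :=
    not_linked_swap_mul hW.α_involutive hW.euler hne.symm hcycle (hhead.symm.trans ho)
  have hinv := invariant_linked s W.α a
  obtain ⟨σA, σB, uσ⟩ := exists_isUnionOn hinv.1
  obtain ⟨αA, αB, uα⟩ := exists_isUnionOn hinv.2
  have hso : s (W.α W.root) = o := by
    rw [hs, mul_apply, ← φ_apply, ← ha, swap_apply_left]
  have hroot : ¬ Linked s W.α a W.root := by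
    rwa [← hinv.2, ← hinv.1, hso]
  have hφ : σB (αB W.root) = o := by
    rw [← uα.eq_right _ hroot, ← uσ.eq_right _ (mt uα.mem_iff.1 hroot), hso]
  refine ⟨Linked s W.α a, ⟨σA, αA, a⟩, ⟨σB, αB, W.root⟩, {
    root_left := Linked.refl _ _ _
    root_right := hroot
    unionσ := uσ.eq_mul ▸ uσ
    unionα := uα.eq_mul ▸ uα }, ?_⟩
  have hσ : W.σ = swap a o * (σA * σB) := by rw [← uσ.eq_mul, hs, swap_mul_self_mul]
  calc W = ⟨W.σ, W.α, W.root⟩ := rfl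
    _ = _ := by rw [hσ, uα.eq_mul, ← hφ]; rfl

end IsNearTriangulation

end Splitting

end DartMap

namespace DartMap

section Size

variable {X : Type*}

/-- The number of edges on the outer face. -/
noncomputable def outerDegree (M : DartMap X) : ℕ := Set.ncard {d | M.OnOuter d}

/-- The number of darts that are not ghosts, which is twice the number of edges. -/
noncomputable def numDarts (M : DartMap X) : ℕ := Set.ncard {d | M.α d ≠ d}

/-- The map has `m + 2` outer edges and `n + (m + 2)` vertices. Every one of the
`Nat.card X - M.numDarts` ghosts is a cycle of `M.σ` of its own and has to be discounted. -/
def HasSize (M : DartMap X) (m n : ℕ) : Prop :=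
  M.outerDegree = m + 2 ∧ numCycles M.σ + M.numDarts = n + (m + 2) + Nat.card X

/-- Starting from the head of the root and following the outer face, the first vertex that is
adjacent to the tail of the root is reached after `k + 1` edges. -/
def IsFirstNeighbor (M : DartMap X) (k : ℕ) : Prop :=
  M.VertexAdj M.root (M.φ^[k + 2] M.root) ∧
    ∀ j < k, ¬ M.VertexAdj M.root (M.φ^[j + 2] M.root)

variable {M : DartMap X} {d : X} {i m n m' n' k k' : ℕ}

theorem HasSize.unique (h : M.HasSize m n) (h' : M.HasSize m' n') : m = m' ∧ n = n' := by
  obtain ⟨houter, hcycles⟩ := h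
  obtain ⟨houter', hcycles'⟩ := h'
  lia

theorem onOuter_iterate (M : DartMap X) (i : ℕ) : M.OnOuter (M.φ^[i] M.root) := by
  induction i with
  | zero => exact M.onOuter_root
  | succ i ih => rw [Function.iterate_succ_apply']; exact onOuter_φ.2 ih

theorem vertexAdj_φ (hd : M.α d ≠ d) : M.VertexAdj d (M.φ d) :=
  ⟨d, hd, SameCycle.refl _ _, (sameCycle_self_apply _ _).symm⟩

theorem φ_vertexAdj (α_involutive : ∀ d, M.α (M.α d) = d) (hd : M.α d ≠ d) :
    M.VertexAdj (M.φ d) d :=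
  ⟨M.α d, α_α_ne hd, (sameCycle_self_apply _ _).symm, by rw [α_involutive]⟩

variable [Finite X]

theorem outerDegree_eq_minimalPeriod (M : DartMap X) :
    M.outerDegree = Function.minimalPeriod M.φ M.root :=
  ncard_sameCycle_eq_minimalPeriod _ _

theorem iterate_φ_outerDegree (M : DartMap X) : M.φ^[M.outerDegree] M.root = M.root := by
  rw [outerDegree_eq_minimalPeriod]
  exact Function.isPeriodicPt_minimalPeriod M.φ M.root

theorem iterate_φ_ne_root (hpos : 0 < i) (hlt : i < M.outerDegree) : M.φ^[i] M.root ≠ M.root := by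
  rw [outerDegree_eq_minimalPeriod] at hlt
  exact Function.not_isPeriodicPt_of_pos_of_lt_minimalPeriod hpos.ne' hlt

theorem IsNearTriangulation.two_le_outerDegree (hM : M.IsNearTriangulation) :
    2 ≤ M.outerDegree := by
  have hsub : ({M.φ M.root, M.root} : Set X) ⊆ {d | M.OnOuter d} := by
    rintro d (rfl | rfl)
    · exact onOuter_φ.2 M.onOuter_root
    · exact M.onOuter_root
  have hle := Set.ncard_le_ncard hsub
  rwa [Set.ncard_pair (φ_ne hM.no_loop hM.α_root_ne)] at hle

end Size

namespace EdgeClosing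

variable {X : Type*} [DecidableEq X] [Finite X] {N M : DartMap X} {x y b t s d : X}
  {j k m n : ℕ} (c : EdgeClosing N M x y b t s)
include c

theorem outerDegree_eq : N.outerDegree = M.outerDegree + 1 := by
  have hset : insert x {d | N.OnOuter d} = insert b (insert t {d | M.OnOuter d}) := by
    ext d
    simp only [Set.mem_insert_iff, Set.mem_ofPred_eq, c.onOuterM_iff]
    have hb := c.onOuterN_b
    have ht := c.onOuterN_t
    by_cases hdb : d = b
    · subst hdb; tauto
    by_cases hdt : d = t
    · subst hdt; tauto
    tauto
  have hx : x ∉ {d | N.OnOuter d} := c.not_onOuterN_x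
  have ht : t ∉ {d | M.OnOuter d} := by
    simp [c.onOuterM_iff, c.x_ne_t.symm]
  have hb : b ∉ insert t {d | M.OnOuter d} := by
    simp [c.onOuterM_iff, c.b_ne_t, c.x_ne_b.symm]
  have hcard := congrArg Set.ncard hset
  rw [Set.ncard_insert_of_notMem hx, Set.ncard_insert_of_notMem hb,
    Set.ncard_insert_of_notMem ht] at hcard
  exact Nat.succ_injective hcard

theorem numDarts_eq : M.numDarts = N.numDarts + 2 := by
  have hset : {d | M.α d ≠ d} = insert x (insert y {d | N.α d ≠ d}) := by
    ext d
    simp only [Set.mem_insert_iff, Set.mem_ofPred_eq, c.αM_ne_iff]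
  rw [numDarts, hset, Set.ncard_insert_of_notMem, Set.ncard_insert_of_notMem, numDarts]
  · simp [c.αN_y]
  · simp [c.αN_x, c.x_ne_y]

theorem hasSize (h : N.HasSize m n) (hM : M.IsNearTriangulation) :
    1 ≤ m ∧ M.HasSize (m - 1) (n + 1) := by
  have hdegM := hM.two_le_outerDegree
  obtain ⟨houter, hcycles⟩ := h
  have hdeg := c.outerDegree_eq
  have hdarts := c.numDarts_eq
  have hσ := c.numCycles_σM
  unfold HasSize
  lia

theorem vertexAdj_iff (hbs : ¬ N.σ.SameCycle b s) (hx : d ≠ x) (hy : d ≠ y)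
    (hs : ¬ N.σ.SameCycle s d) : M.VertexAdj x d ↔ N.VertexAdj b d := by
  constructor
  · rintro ⟨e, he, htail, hhead⟩
    have hex : e ≠ x := by
      rintro rfl
      rw [c.αM_x] at hhead
      exact hs ((c.sameCycle_σM_y_iff hx hy).1 hhead.symm)
    have hey : e ≠ y := by
      rintro rfl
      exact hbs (c.sameCycle_σM_x_y_iff.1 htail)
    rw [c.αM_of_ne hex hey] at hhead
    exact ⟨e, c.αN_ne_of_αM_ne hex hey he, (c.sameCycle_σM_x_iff hex hey).1 htail,
      (c.sameCycle_σM_iff hx hy (c.αN_ne_x hex) (c.αN_ne_y hey)).1 hhead⟩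
  · rintro ⟨e, he, htail, hhead⟩
    obtain ⟨hex, hey⟩ := c.ne_of_αN_ne he
    refine ⟨e, c.αM_ne_of_αN_ne he, (c.sameCycle_σM_x_iff hex hey).2 htail, ?_⟩
    rw [c.αM_of_ne hex hey]
    exact (c.sameCycle_σM_iff hx hy (c.αN_ne_x hex) (c.αN_ne_y hey)).2 hhead

omit [Finite X] in
theorem iterate_onOuterN (i : ℕ) : N.OnOuter (N.φ^[i] b) := c.rootN ▸ N.onOuter_iterate i

section Addable

variable (hN : N.IsNearTriangulation)
include hN

theorem φM_φM_root_ne (hadj : ¬ N.VertexAdj b s) : M.φ (M.φ M.root) ≠ M.root := by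
  have hs : N.φ s ≠ b := fun e =>
    hadj (e ▸ φ_vertexAdj hN.α_involutive (hN.α_ne_of_onOuter c.onOuterN_s))
  rw [c.rootM, c.φM_x, c.φM_of_ne c.x_ne_s.symm c.y_ne_s.symm c.t_ne_s.symm hs]
  exact c.φN_ne_x c.x_ne_s.symm

variable (hadj : ∀ j < k, ¬ N.VertexAdj b (N.φ^[j + 2] b))
include hadj

theorem iterate_φN_ne_t (hj : j < k) : N.φ^[j + 2] b ≠ t := fun e => hadj j hj <| by
  rw [e, ← c.φN_b]
  exact vertexAdj_φ (hN.α_ne_of_onOuter c.onOuterN_b)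

theorem φN_iterate_φN_ne_b (hj : j < k) : N.φ (N.φ^[j + 2] b) ≠ b := fun e => hadj j hj <| by
  have hprev := φ_vertexAdj hN.α_involutive (hN.α_ne_of_onOuter (c.iterate_onOuterN (j + 2)))
  rwa [e] at hprev

theorem iterate_φM (hj : j ≤ k) : M.φ^[j + 1] x = N.φ^[j + 2] b := by
  induction j with
  | zero => simp [c.φM_x, c.φN_b, c.φN_t]
  | succ j ih =>
    obtain ⟨hx, hy⟩ := c.ne_of_onOuterN (c.iterate_onOuterN (j + 2))
    rw [Function.iterate_succ_apply', ih (by lia),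
      c.φM_of_ne hx hy (c.iterate_φN_ne_t hN hadj hj) (c.φN_iterate_φN_ne_b hN hadj hj),
      ← Function.iterate_succ_apply' (f := N.φ)]

theorem not_sameCycle_s_iterate (hsimple : N.OuterSimple) (hj : j < k) :
    ¬ N.σ.SameCycle s (N.φ^[j + 3] b) := fun hs => by
  have heq := hsimple _ _ c.onOuterN_s (c.iterate_onOuterN _) hs
  rw [← c.φN_t, Function.iterate_succ_apply'] at heq
  exact c.iterate_φN_ne_t hN hadj hj (N.φ.injective heq).symm

end Addable

theorem isFirstNeighbor (hN : N.IsDiskTriangulation) (hbs : ¬ N.σ.SameCycle b s)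
    (hk : N.IsFirstNeighbor (k + 1)) : M.IsFirstNeighbor k := by
  obtain ⟨hadj, hnot⟩ := hk
  rw [c.rootN] at hadj hnot
  have hiff : ∀ j ≤ k, M.VertexAdj x (M.φ^[j + 2] x) ↔ N.VertexAdj b (N.φ^[j + 3] b) := by
    intro j hj
    obtain ⟨hx, hy⟩ := c.ne_of_onOuterN (c.iterate_onOuterN (j + 3))
    rw [c.iterate_φM hN.1 hnot (by lia : j + 1 ≤ k + 1), c.vertexAdj_iff hbs hx hy
      (c.not_sameCycle_s_iterate hN.1 hnot hN.2 (by lia))]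
  rw [IsFirstNeighbor, c.rootM]
  exact ⟨(hiff k le_rfl).2 hadj, fun j hj => mt (hiff j hj.le).1 (hnot (j + 1) (by lia))⟩

end EdgeClosing

namespace Separates

variable {X : Type*} [DecidableEq X] [Finite X] {L : X → Prop} {A B M : DartMap X}
  {x y b t s d : X} {i j m n m' n' : ℕ} (w : Separates L A B)
include w

omit [Finite X] in
theorem wedge_α_ne_iff : (A.wedge B).α d ≠ d ↔ A.α d ≠ d ∨ B.α d ≠ d := by
  by_cases hd : L d
  · simp [w.wedge_α_left hd, w.unionα.right_fixed d hd]
  · simp [w.wedge_α_right hd, w.unionα.left_fixed d hd]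

theorem wedge_onOuter_iff : (A.wedge B).OnOuter d ↔ A.OnOuter d ∨ B.OnOuter d := by
  by_cases hd : L d
  · rw [w.onOuter_left hd, or_iff_left fun hB => w.not_mem_of_onOuter hB hd]
  · rw [w.onOuter_right hd, or_iff_right fun hA => hd (w.mem_of_onOuter hA)]

theorem outerDegree_wedge : (A.wedge B).outerDegree = A.outerDegree + B.outerDegree := by
  rw [outerDegree, outerDegree, outerDegree, ← Set.ncard_union_eq]
  · congr 1
    ext d
    exact w.wedge_onOuter_iff
  · exact Set.disjoint_left.2 fun d hA hB => w.not_mem_of_onOuter hB (w.mem_of_onOuter hA)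

theorem numDarts_wedge : (A.wedge B).numDarts = A.numDarts + B.numDarts := by
  rw [numDarts, numDarts, numDarts, ← Set.ncard_union_eq]
  · congr 1
    ext d
    exact w.wedge_α_ne_iff
  · exact Set.disjoint_left.2 fun d hA hB => w.not_mem_of_α_ne hB (w.mem_of_α_ne hA)

theorem numCycles_wedge_σ : numCycles (A.wedge B).σ + 1 + Nat.card X =
    numCycles A.σ + numCycles B.σ :=
  w.unionσ.numCycles_swap_mul w.root_left w.not_mem_φ_root

theorem hasSize (c : EdgeClosing (A.wedge B) M x y b t s) (hA : A.HasSize m n)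
    (hB : B.HasSize m' n') : M.HasSize (m + m' + 1) (n + n') := by
  obtain ⟨houterA, hcyclesA⟩ := hA
  obtain ⟨houterB, hcyclesB⟩ := hB
  have hdeg := c.outerDegree_eq
  have hdarts := c.numDarts_eq
  have hσ := c.numCycles_σM
  have hdegW := w.outerDegree_wedge
  have hdartsW := w.numDarts_wedge
  have hσW := w.numCycles_wedge_σ
  unfold HasSize
  lia

section Closing

variable (c : EdgeClosing (A.wedge B) M x y b t s) (hA : A.IsDiskTriangulation)
include c

omit [Finite X] in
theorem closing_t_eq : t = A.root := by
  rw [← c.φN_b, ← c.rootN]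
  exact w.wedge_φ_root

omit [DecidableEq X] [Finite X] c in
theorem mem_φ_root : L (A.φ A.root) := w.unionφ.left_mem_iff.2 w.root_left

omit [DecidableEq X] [Finite X] c in
theorem iterate_mem (i : ℕ) : L (A.φ^[i] A.root) := w.mem_of_onOuter (A.onOuter_iterate i)

theorem iterate_ne_closing (i : ℕ) : A.φ^[i] A.root ≠ x ∧ A.φ^[i] A.root ≠ y :=
  c.ne_of_onOuterN ((w.onOuter_left (w.iterate_mem i)).2 (A.onOuter_iterate i))

include hA

omit [Finite X] in
theorem closing_s_eq : s = A.φ A.root := by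
  rw [← c.φN_t, w.closing_t_eq c, w.wedge_φ_left w.root_left (φ_ne hA.1.no_loop hA.1.α_root_ne)]

theorem iterate_closing (hj : j + 1 < A.outerDegree) : M.φ^[j + 1] x = A.φ^[j + 1] A.root := by
  induction j with
  | zero => simp [c.φM_x, w.closing_s_eq c hA]
  | succ j ih =>
    have hφ : (A.wedge B).φ (A.φ^[j + 1] A.root) = A.φ^[j + 2] A.root := by
      rw [w.wedge_φ_left (w.iterate_mem _), ← Function.iterate_succ_apply' (f := A.φ)]
      rw [← Function.iterate_succ_apply' (f := A.φ)]
      exact iterate_φ_ne_root (by lia) hj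
    obtain ⟨hx, hy⟩ := w.iterate_ne_closing c (j + 1)
    rw [Function.iterate_succ_apply', ih (by lia), c.φM_of_ne hx hy, hφ]
    · rw [w.closing_t_eq c]
      exact iterate_φ_ne_root (by lia) (by lia)
    · rw [hφ, ← c.rootN]
      exact fun e => w.root_right (e ▸ w.iterate_mem _)

theorem iterate_closing_last (hB : B.IsDiskTriangulation) (hm : A.outerDegree = m + 2) :
    M.φ^[m + 2] x = B.φ B.root := by
  have hlast : A.φ (A.φ^[m + 1] A.root) = A.root := by
    have hperiod := A.iterate_φ_outerDegree
    rwa [hm, Function.iterate_succ_apply'] at hperiod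
  obtain ⟨hx, hy⟩ := w.iterate_ne_closing c (m + 1)
  rw [Function.iterate_succ_apply', w.iterate_closing c hA (by lia), c.φM_of_ne hx hy,
    w.wedge_φ_last hlast]
  · rw [w.closing_t_eq c]
    exact iterate_φ_ne_root (by lia) (by lia)
  · rw [w.wedge_φ_last hlast, ← c.rootN]
    exact φ_ne hB.1.no_loop hB.1.α_root_ne

theorem not_sameCycle_closing (hj : j + 1 < A.outerDegree) :
    ¬ (A.wedge B).σ.SameCycle s (A.φ^[j + 2] A.root) := by
  rw [w.closing_s_eq c hA, w.sameCycle_left w.mem_φ_root (w.iterate_mem _)]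
  intro h
  have heq := hA.2 _ _ (A.onOuter_iterate 1) (A.onOuter_iterate (j + 2)) h
  rw [Function.iterate_succ_apply' A.φ (j + 1)] at heq
  exact iterate_φ_ne_root (by lia) hj (A.φ.injective heq).symm

theorem not_sameCycle_closing_right (hd : ¬ L d) : ¬ (A.wedge B).σ.SameCycle s d := by
  rw [w.closing_s_eq c hA, w.sameCycle_left_right w.mem_φ_root hd]
  rintro ⟨h, -⟩
  exact φ_ne hA.1.no_loop hA.1.α_root_ne
    (hA.2 _ _ (A.onOuter_iterate 1) A.onOuter_root h)

theorem vertexAdj_closing_last (hB : B.IsDiskTriangulation) : M.VertexAdj x (B.φ B.root) := by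
  have houter : (A.wedge B).OnOuter (B.φ B.root) :=
    (w.onOuter_right w.not_mem_φ_root).2 (onOuter_φ.2 B.onOuter_root)
  obtain ⟨hx, hy⟩ := c.ne_of_onOuterN houter
  have hbs : ¬ (A.wedge B).σ.SameCycle b s := fun h =>
    w.not_sameCycle_closing_right c hA w.root_right (c.rootN ▸ h.symm)
  rw [c.vertexAdj_iff hbs hx hy (w.not_sameCycle_closing_right c hA w.not_mem_φ_root), ← c.rootN]
  refine ⟨B.root, ?_, SameCycle.refl _ _, ?_⟩
  · exact w.wedge_α_ne_iff.2 (Or.inr hB.1.α_root_ne)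
  · have hα : ¬ L (B.α B.root) := mt w.unionα.right_mem_iff.1 w.root_right
    rw [w.wedge_α_right w.root_right, w.sameCycle_right w.not_mem_φ_root hα]
    exact (sameCycle_self_apply _ _).symm

omit c in
theorem not_vertexAdj_iterate (hB : B.IsDiskTriangulation) (hj : j + 1 < A.outerDegree) :
    ¬ (A.wedge B).VertexAdj B.root (A.φ^[j + 1] A.root) := by
  rintro ⟨e, -, htail, hhead⟩
  by_cases he : L e
  · have h := ((w.sameCycle_left_right he w.root_right).1 htail.symm).2
    exact φ_ne hB.1.no_loop hB.1.α_root_ne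
      (hB.2 _ _ (onOuter_φ.2 B.onOuter_root) B.onOuter_root h)
  · have h := ((w.sameCycle_left_right (w.iterate_mem _) (mt w.mem_wedge_α_iff.1 he)).1 hhead).1
    exact iterate_φ_ne_root (by lia) hj (hA.2 _ _ (A.onOuter_iterate _) A.onOuter_root h)

theorem isFirstNeighbor (hB : B.IsDiskTriangulation) (hm : A.outerDegree = m + 2) :
    M.IsFirstNeighbor m := by
  rw [IsFirstNeighbor, c.rootM]
  refine ⟨?_, fun j hj => ?_⟩
  · rw [w.iterate_closing_last c hA hB hm]
    exact w.vertexAdj_closing_last c hA hB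
  · have hbs : ¬ (A.wedge B).σ.SameCycle b s := fun h =>
      w.not_sameCycle_closing_right c hA w.root_right (c.rootN ▸ h.symm)
    obtain ⟨hx, hy⟩ := w.iterate_ne_closing c (j + 2)
    rw [w.iterate_closing c hA (by lia : (j + 1) + 1 < A.outerDegree),
      c.vertexAdj_iff hbs hx hy (w.not_sameCycle_closing c hA (by lia)), ← c.rootN]
    exact w.not_vertexAdj_iterate hA hB (by lia)

end Closing

end Separates

end DartMap

/-- The ways to build a disk triangulation from single edges: `wedge S T` joins two triangulations
at a vertex and closes a triangle between them, and `add T` closes a triangle over two consecutive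
outer edges. -/
inductive Code : Type
  | edge : Code
  | wedge : Code → Code → Code
  | add : Code → Code

namespace Code

/-- The number of outer edges in excess of two. -/
def outer : Code → ℕ
  | edge => 0
  | wedge S T => S.outer + T.outer + 1
  | add T => T.outer - 1

/-- The number of inner vertices. -/
def inner : Code → ℕ
  | edge => 0
  | wedge S T => S.inner + T.inner
  | add T => T.inner + 1

/-- The index for which the triangulation satisfies `DartMap.IsFirstNeighbor`; it is a junk value
for `edge`. -/
def neighbor : Code → ℕ
  | edge => 0
  | wedge S _ => S.outer
  | add T => T.neighbor - 1

/-- A triangle is only closed by `add` where this creates neither a loop nor a double edge. -/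
def Valid : Code → Prop
  | edge => True
  | wedge S T => S.Valid ∧ T.Valid
  | add T => T.Valid ∧ 1 ≤ T.neighbor

/-- The number of darts, as given by Euler's formula. -/
def numDarts (c : Code) : ℕ := 2 * (3 * c.inner + 2 * c.outer + 1)

theorem Valid.neighbor_lt_outer {c : Code} (h : c.Valid) : c = edge ∨ c.neighbor < c.outer := by
  induction c with
  | edge => exact Or.inl rfl
  | wedge S T => right; simp only [neighbor, outer]; lia
  | add T ih =>
    right
    obtain ⟨hT, hk⟩ := h
    rcases ih hT with rfl | hlt
    · simp [neighbor] at hk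
    · simp only [neighbor, outer]; lia

theorem Valid.neighbor_lt_outer_of_add {T : Code} (h : (add T).Valid) : T.neighbor < T.outer :=
  h.1.neighbor_lt_outer.resolve_left fun e => by
    obtain ⟨-, hk⟩ := h
    simp [e, neighbor] at hk

end Code

section SingleEdge

variable {X : Type*} [DecidableEq X] {x y d : X}

/-- The map with a single edge, whose darts are `x` and `y`. -/
def singleEdge (x y : X) : DartMap X := ⟨1, swap x y, x⟩

theorem φ_singleEdge : (singleEdge x y).φ = swap x y := one_mul _

theorem singleEdge_φ_φ_root :
    (singleEdge x y).φ ((singleEdge x y).φ (singleEdge x y).root) = (singleEdge x y).root := by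
  rw [φ_singleEdge]
  exact swap_apply_self x y x

theorem singleEdge_α_ne_iff (hxy : x ≠ y) : (singleEdge x y).α d ≠ d ↔ d = x ∨ d = y :=
  swap_apply_ne_self_iff.trans (and_iff_right hxy)

theorem outerSimple_singleEdge : (singleEdge x y).OuterSimple :=
  fun _ _ _ _ h => sameCycle_one.1 h

variable [Finite X]

theorem onOuter_singleEdge : (singleEdge x y).OnOuter d ↔ d = x ∨ d = y := by
  constructor
  · intro h
    refine sameCycle_induction h (fun d => d = x ∨ d = y) (Or.inl rfl) ?_
    rw [φ_singleEdge]
    rintro e (rfl | rfl)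
    · exact Or.inr (swap_apply_left _ _)
    · exact Or.inl (swap_apply_right _ _)
  · have hx : (singleEdge x y).OnOuter x := DartMap.onOuter_root _
    rintro (rfl | rfl)
    · exact hx
    · simpa only [φ_singleEdge, swap_apply_left] using DartMap.onOuter_φ.2 hx

theorem euler_singleEdge (hxy : x ≠ y) : numCycles (1 : Perm X) + numCycles (swap x y) +
    numCycles (swap x y) = Nat.card X + 2 * numComponents 1 (swap x y) := by
  have hcycle : ¬ (1 : Perm X).SameCycle x y := mt sameCycle_one.1 hxy
  have hswap := numCycles_swap_mul_add_one hcycle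
  have hcomp := (mergesAt_edge (s := 1) (a := 1) (x := x) (y := y) rfl).numComponents_add_one
    (mt linked_one_right.1 hcycle)
  rw [numComponents_one_right] at hcomp
  rw [mul_one, numCycles_one] at hswap hcomp
  rw [numCycles_one]
  lia

theorem isDiskTriangulation_singleEdge (hxy : x ≠ y) : (singleEdge x y).IsDiskTriangulation where
  left :=
  { α_involutive := fun _ => swap_apply_self _ _ _
    σ_ghost := fun _ _ => rfl
    α_root_ne := (singleEdge_α_ne_iff hxy).2 (Or.inl rfl)
    linked_root := fun d hd => by
      rcases (singleEdge_α_ne_iff hxy).1 hd with rfl | rfl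
      · exact Linked.refl _ _ _
      · have hswap := linked_apply_right_perm 1 (swap x d) x
        rw [swap_apply_left] at hswap
        exact hswap
    inner_face := fun d hd houter =>
      (houter (onOuter_singleEdge.2 ((singleEdge_α_ne_iff hxy).1 hd))).elim
    no_loop := fun _ hd h => hd (sameCycle_one.1 h).symm
    no_parallel := fun _ _ _ _ h _ => sameCycle_one.1 h
    euler := by
      rw [φ_singleEdge]
      exact euler_singleEdge hxy
    outer_simple_off_head := fun _ _ _ _ h _ _ => sameCycle_one.1 h }
  right := outerSimple_singleEdge

theorem hasSize_singleEdge (hxy : x ≠ y) : (singleEdge x y).HasSize 0 0 := by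
  have houter : {d | (singleEdge x y).OnOuter d} = {x, y} := Set.ext fun _ => onOuter_singleEdge
  have hdarts : {d | (singleEdge x y).α d ≠ d} = {x, y} :=
    Set.ext fun _ => singleEdge_α_ne_iff hxy
  have hσ : numCycles (singleEdge x y).σ = Nat.card X := numCycles_one
  rw [DartMap.HasSize, DartMap.outerDegree, DartMap.numDarts, houter, hdarts, Set.ncard_pair hxy,
    hσ]
  lia

namespace DartMap.IsNearTriangulation

variable {M : DartMap X} (hM : M.IsNearTriangulation) (hroot : M.φ (M.φ M.root) = M.root)
include hM hroot

omit [DecidableEq X] [Finite X] in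
theorem φ_root_eq_α_root : M.φ M.root = M.α M.root := by
  have hφ : M.α (M.φ M.root) ≠ M.φ M.root := α_φ_ne hM.σ_ghost hM.α_root_ne
  have heq : M.root = M.α (M.φ M.root) := by
    apply hM.no_parallel _ _ hM.α_root_ne (α_α_ne hφ)
    · have hnext := sameCycle_self_apply M.σ (M.α (M.φ M.root))
      rw [← φ_apply, hroot] at hnext
      exact hnext.symm
    · rw [hM.α_involutive]
      exact sameCycle_self_apply _ _
  rw [heq, hM.α_involutive, ← heq]

omit [DecidableEq X] [Finite X] in
theorem σ_root_eq : M.σ M.root = M.root := by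
  have h := hroot
  rwa [hM.φ_root_eq_α_root hroot, φ_apply, hM.α_involutive] at h

omit [DecidableEq X] in
theorem eq_root_or_eq_α_root {d : X} (hd : M.α d ≠ d) : d = M.root ∨ d = M.α M.root := by
  let S : X → Prop := fun d => d = M.root ∨ d = M.α M.root
  refine (hM.linked_root d hd S
    ⟨apply_iff_of_apply_imp (S := S) ?_, apply_iff_of_apply_imp (S := S) ?_⟩).1 (Or.inl rfl)
  · rintro e (rfl | rfl)
    · exact Or.inl (hM.σ_root_eq hroot)
    · exact Or.inr (hM.φ_root_eq_α_root hroot)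
  · rintro e (rfl | rfl)
    · exact Or.inr rfl
    · exact Or.inl (hM.α_involutive _)

theorem eq_singleEdge : M = singleEdge M.root (M.α M.root) := by
  have hσ : M.σ = 1 := by
    ext d
    by_cases hd : M.α d = d
    · exact hM.σ_ghost d hd
    · rcases hM.eq_root_or_eq_α_root hroot hd with rfl | rfl
      · exact hM.σ_root_eq hroot
      · exact hM.φ_root_eq_α_root hroot
  have hα : M.α = swap M.root (M.α M.root) := by
    ext d
    rw [eq_comm, swap_apply_eq_iff]
    by_cases hd : M.α d = d
    · rw [hd, swap_apply_of_ne_of_ne]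
      · exact fun e => hM.α_root_ne (e ▸ hd)
      · exact fun e => α_α_ne hM.α_root_ne (e ▸ hd)
    · rcases hM.eq_root_or_eq_α_root hroot hd with rfl | rfl
      · rw [swap_apply_right]
      · rw [hM.α_involutive, swap_apply_left]
  rw [singleEdge, ← hα, ← hσ]

end DartMap.IsNearTriangulation

end SingleEdge

section Realizes

variable {X : Type*} [DecidableEq X]

/-- `M` can be built in the way described by the code. -/
inductive Realizes : Code → DartMap X → Prop
  | edge {x y : X} (hxy : x ≠ y) : Realizes .edge (singleEdge x y)
  | wedge {S T : Code} {A B : DartMap X} {x y : X} (hA : Realizes S A) (hB : Realizes T B)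
      (hAB : ∀ d, A.α d ≠ d → B.α d = d) (hxy : x ≠ y) (hx : (A.wedge B).α x = x)
      (hy : (A.wedge B).α y = y) : Realizes (.wedge S T) ((A.wedge B).addEdge x y)
  | add {T : Code} {N : DartMap X} {x y : X} (hk : 1 ≤ T.neighbor) (hN : Realizes T N)
      (hxy : x ≠ y) (hx : N.α x = x) (hy : N.α y = y) : Realizes (.add T) (N.addEdge x y)

namespace DartMap

variable {A B M : DartMap X} {x y : X} {k : ℕ}

omit [DecidableEq X] in
theorem isAddable_iff_of_isFirstNeighbor (hM : M.OuterSimple) (hk : M.IsFirstNeighbor k)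
    (hroot : M.φ (M.φ M.root) ≠ M.root) : M.IsAddable ↔ 1 ≤ k := by
  constructor
  · rintro ⟨-, hadj⟩
    exact Nat.pos_of_ne_zero fun h => hadj (h ▸ hk).1
  · intro hpos
    refine ⟨fun h => hroot ?_, hk.2 0 hpos⟩
    exact (hM _ _ M.onOuter_root (onOuter_φ.2 (onOuter_φ.2 M.onOuter_root)) h).symm

variable [Finite X]

theorem edgeClosing_wedge (hA : A.IsDiskTriangulation) (hB : B.IsDiskTriangulation)
    (hAB : ∀ d, A.α d ≠ d → B.α d = d) (hxy : x ≠ y) (hx : (A.wedge B).α x = x)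
    (hy : (A.wedge B).α y = y) : EdgeClosing (A.wedge B) ((A.wedge B).addEdge x y) x y B.root
      ((A.wedge B).φ B.root) ((A.wedge B).φ ((A.wedge B).φ B.root)) := by
  have w := separates_of_ghost hA.1 hB.1 hAB
  exact edgeClosing_addEdge (w.isNearTriangulation_wedge_iff.2 ⟨hA, hB⟩) (w.isAddable_wedge hA hB)
    hxy hx hy

end DartMap

namespace Realizes

variable [Finite X] {c T : Code} {M N : DartMap X} {x y : X}

theorem invariants (h : Realizes c M) : M.IsDiskTriangulation ∧ M.HasSize c.outer c.inner ∧
    (c = .edge ∨ M.IsFirstNeighbor c.neighbor ∧ M.φ (M.φ M.root) ≠ M.root) := by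
  induction h with
  | edge hxy => exact ⟨isDiskTriangulation_singleEdge hxy, hasSize_singleEdge hxy, Or.inl rfl⟩
  | wedge _ _ hAB hxy hx hy ihA ihB =>
    obtain ⟨hA, hsizeA, -⟩ := ihA
    obtain ⟨hB, hsizeB, -⟩ := ihB
    have w := DartMap.separates_of_ghost hA.1 hB.1 hAB
    have hadd := w.isAddable_wedge hA hB
    have hwedge := w.isNearTriangulation_wedge_iff.2 ⟨hA, hB⟩
    have e := DartMap.edgeClosing_wedge hA hB hAB hxy hx hy
    exact ⟨e.isDiskTriangulation hwedge hadd, w.hasSize e hsizeA hsizeB,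
      Or.inr ⟨w.isFirstNeighbor e hA hB hsizeA.1, e.φM_φM_root_ne hwedge hadd.2⟩⟩
  | @add T N x y hk hN hxy hx hy ih =>
    obtain ⟨hN, hsize, rfl | ⟨hfirst, hroot⟩⟩ := ih
    · simp [Code.neighbor] at hk
    · have hadd := (DartMap.isAddable_iff_of_isFirstNeighbor hN.2 hfirst hroot).2 hk
      have e := DartMap.edgeClosing_addEdge hN.1 hadd hxy hx hy
      have hM := e.isDiskTriangulation hN.1 hadd
      rw [← Nat.sub_add_cancel hk] at hfirst
      exact ⟨hM, (e.hasSize hsize hM.1).2,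
        Or.inr ⟨e.isFirstNeighbor hN hadd.1 hfirst, e.φM_φM_root_ne hN.1 hadd.2⟩⟩

theorem isDiskTriangulation (h : Realizes c M) : M.IsDiskTriangulation := h.invariants.1

theorem hasSize (h : Realizes c M) : M.HasSize c.outer c.inner := h.invariants.2.1

theorem isAddable_iff (h : Realizes c M) : M.IsAddable ↔ 1 ≤ c.neighbor := by
  obtain ⟨hM, -, rfl | ⟨hfirst, hroot⟩⟩ := h.invariants
  · cases h
    refine ⟨fun hadd => (hadd.1 ?_).elim, fun hk => absurd hk (by simp [Code.neighbor])⟩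
    rw [singleEdge_φ_φ_root]
  · exact DartMap.isAddable_iff_of_isFirstNeighbor hM.2 hfirst hroot

theorem edgeClosing_add (h : Realizes T N) (hk : 1 ≤ T.neighbor) (hxy : x ≠ y) (hx : N.α x = x)
    (hy : N.α y = y) : DartMap.EdgeClosing N (N.addEdge x y) x y N.root (N.φ N.root)
      (N.φ (N.φ N.root)) :=
  DartMap.edgeClosing_addEdge h.isDiskTriangulation.1 (h.isAddable_iff.2 hk) hxy hx hy

omit [Finite X] in
theorem valid (h : Realizes c M) : c.Valid := by
  induction h with
  | edge => trivial
  | wedge _ _ _ _ _ _ ihA ihB => exact ⟨ihA, ihB⟩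
  | add hk _ _ _ _ ih => exact ⟨ih, hk⟩

end Realizes

variable [Finite X]

theorem DartMap.IsDiskTriangulation.exists_realizes {M : DartMap X} (hM : M.IsDiskTriangulation) :
    ∃ c, Realizes c M := by
  induction h : M.numDarts using Nat.strong_induction_on generalizing M with
  | _ l ih =>
    by_cases hroot : M.φ (M.φ M.root) = M.root
    · exact ⟨.edge, hM.1.eq_singleEdge hroot ▸ .edge hM.1.α_root_ne.symm⟩
    have e := DartMap.edgeClosing_deleteRoot hM hroot
    have hN := e.isNearTriangulation hM
    have hcard := e.numDarts_eq
    by_cases houter : M.deleteRoot.OuterSimple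
    · obtain ⟨T, hT⟩ := ih _ (by lia) ⟨hN, houter⟩ rfl
      have hk := hT.isAddable_iff.1 (e.isAddable hM)
      exact ⟨.add T, e.eq_addEdge ▸ .add hk hT e.x_ne_y e.αN_x e.αN_y⟩
    · obtain ⟨L, A, B, w, hW⟩ := hN.exists_eq_wedge houter
      rw [hW] at hN e hcard
      obtain ⟨hA, hB⟩ := w.isNearTriangulation_wedge_iff.1 hN
      have hdarts := w.numDarts_wedge
      obtain ⟨S, hS⟩ := ih _ (by lia) hA rfl
      obtain ⟨T, hT⟩ := ih _ (by lia) hB rfl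
      exact ⟨.wedge S T, e.eq_addEdge ▸ .wedge hS hT
        (fun d hd => w.unionα.right_fixed d (w.mem_of_α_ne hd)) e.x_ne_y e.αN_x e.αN_y⟩

theorem exists_realizes_add {T : Code} (hk : 1 ≤ T.neighbor) {D : Finset X} {k : ℕ}
    (hD : D.card = k + 2)
    (hT : ∀ D' : Finset X, D'.card = k → ∃ N, Realizes T N ∧ ∀ d, N.α d ≠ d ↔ d ∈ D') :
    ∃ M, Realizes (.add T) M ∧ ∀ d, M.α d ≠ d ↔ d ∈ D := by
  obtain ⟨x, D₁, hxD, rfl, hD₁⟩ := Finset.card_eq_succ.1 hD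
  obtain ⟨y, D₂, hyD, rfl, hD₂⟩ := Finset.card_eq_succ.1 hD₁
  obtain ⟨hxy, hxD⟩ := not_or.1 (mt Finset.mem_insert.2 hxD)
  obtain ⟨N, hN, hghost⟩ := hT D₂ hD₂
  have hx : N.α x = x := not_not.1 (mt (hghost x).1 hxD)
  have hy : N.α y = y := not_not.1 (mt (hghost y).1 hyD)
  refine ⟨N.addEdge x y, .add hk hN hxy hx hy, fun d => ?_⟩
  rw [(hN.edgeClosing_add hk hxy hx hy).αM_ne_iff, hghost, Finset.mem_insert, Finset.mem_insert]

theorem exists_realizes_wedge {S T : Code} {D : Finset X} {k l : ℕ} (hD : D.card = k + l + 2)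
    (hS : ∀ D' : Finset X, D'.card = k → ∃ A, Realizes S A ∧ ∀ d, A.α d ≠ d ↔ d ∈ D')
    (hT : ∀ D' : Finset X, D'.card = l → ∃ B, Realizes T B ∧ ∀ d, B.α d ≠ d ↔ d ∈ D') :
    ∃ M, Realizes (.wedge S T) M ∧ ∀ d, M.α d ≠ d ↔ d ∈ D := by
  obtain ⟨x, D₁, hxD, rfl, hD₁⟩ := Finset.card_eq_succ.1 hD
  obtain ⟨y, D₂, hyD, rfl, hD₂⟩ := Finset.card_eq_succ.1 hD₁
  obtain ⟨hxy, hxD⟩ := not_or.1 (mt Finset.mem_insert.2 hxD)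
  obtain ⟨E, hE, hcardE⟩ := Finset.exists_subset_card_eq (s := D₂) (n := k) (by lia)
  obtain ⟨A, hA, hghostA⟩ := hS E hcardE
  obtain ⟨B, hB, hghostB⟩ := hT (D₂ \ E) (by rw [Finset.card_sdiff_of_subset hE]; lia)
  have hAB : ∀ d, A.α d ≠ d → B.α d = d := fun d hd => not_not.1 fun h =>
    (Finset.mem_sdiff.1 ((hghostB d).1 h)).2 ((hghostA d).1 hd)
  have w := DartMap.separates_of_ghost hA.isDiskTriangulation.1 hB.isDiskTriangulation.1 hAB
  have hghost : ∀ d, (A.wedge B).α d ≠ d ↔ d ∈ D₂ := fun d => by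
    rw [w.wedge_α_ne_iff, hghostA, hghostB, ← Finset.mem_union, Finset.union_sdiff_of_subset hE]
  have hx : (A.wedge B).α x = x := not_not.1 (mt (hghost x).1 hxD)
  have hy : (A.wedge B).α y = y := not_not.1 (mt (hghost y).1 hyD)
  have e := DartMap.edgeClosing_wedge hA.isDiskTriangulation hB.isDiskTriangulation hAB hxy hx hy
  refine ⟨_, .wedge hA hB hAB hxy hx hy, fun d => ?_⟩
  rw [e.αM_ne_iff, hghost, Finset.mem_insert, Finset.mem_insert]

theorem Code.Valid.exists_realizes {c : Code} (hc : c.Valid) {D : Finset X}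
    (hD : D.card = c.numDarts) : ∃ M, Realizes c M ∧ ∀ d, M.α d ≠ d ↔ d ∈ D := by
  induction c generalizing D with
  | edge =>
    obtain ⟨x, y, hxy, rfl⟩ := Finset.card_eq_two.1 hD
    refine ⟨singleEdge x y, .edge hxy, fun d => ?_⟩
    rw [singleEdge_α_ne_iff hxy, Finset.mem_insert, Finset.mem_singleton]
  | wedge S T ihS ihT =>
    refine exists_realizes_wedge (k := S.numDarts) (l := T.numDarts) ?_ (fun _ => ihS hc.1)
      (fun _ => ihT hc.2)
    rw [hD]
    simp only [numDarts, inner, outer]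
    ring
  | add T ih =>
    refine exists_realizes_add (k := T.numDarts) hc.2 ?_ (fun _ => ih hc.1)
    have := hc.neighbor_lt_outer_of_add
    rw [hD]
    simp only [numDarts, inner, outer]
    lia

end Realizes

section Uniqueness

variable {X : Type*} [DecidableEq X] {A B A' B' M N : DartMap X} {x y b t s d : X} {S T c c' : Code}

omit [DecidableEq X] in
theorem IsUnionOn.left_unique {L : X → Prop} {f g g' h h' : Perm X} (u : IsUnionOn L f g h)
    (u' : IsUnionOn L f g' h') : g = g' := by
  ext d
  by_cases hd : L d
  · rw [← u.eq_left d hd, u'.eq_left d hd]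
  · rw [u.left_fixed d hd, u'.left_fixed d hd]

namespace DartMap

theorem EdgeClosing.eq_deleteRoot (e : EdgeClosing N M x y b t s) : N = M.deleteRoot := by
  rw [deleteRoot, e.rootM, e.αM_x, e.σM_x, e.φM_x, e.σM_eq, e.αM_eq, mul_assoc (swap x b),
    swap_mul_self_mul, swap_mul_self_mul, swap_mul_self_mul, ← e.rootN]

omit [DecidableEq X] in
theorem α_ne_iff_linked (hA : A.IsNearTriangulation) (w : Separates (fun d => A.α d ≠ d) A B) :
    A.α d ≠ d ↔ Linked (A.σ * B.σ) (A.α * B.α) A.root d :=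
  ⟨fun hd => (w.unionσ.linked_iff_left w.unionα hA.α_root_ne).2 (hA.linked_root d hd),
    fun h => w.unionσ.mem_of_linked w.unionα h hA.α_root_ne⟩

variable [Finite X]

theorem head_unique_of_wedge_eq {L L' : X → Prop} (w : Separates L A B) (w' : Separates L' A' B')
    (hW : (A.wedge B).IsNearTriangulation) (h : A.wedge B = A'.wedge B')
    (hroot : A.root = A'.root) : B.φ B.root = B'.φ B'.root := by
  have houter := (w.onOuter_right w.not_mem_φ_root).2 (onOuter_φ.2 B.onOuter_root)
  have houter' := (w'.onOuter_right w'.not_mem_φ_root).2 (onOuter_φ.2 B'.onOuter_root)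
  have hcycle := (w.sameCycle_left_right w.root_left w.not_mem_φ_root).2
    ⟨SameCycle.refl _ _, SameCycle.refl _ _⟩
  have hcycle' := (w'.sameCycle_left_right w'.root_left w'.not_mem_φ_root).2
    ⟨SameCycle.refl _ _, SameCycle.refl _ _⟩
  have hhead : (A.wedge B).φ (A.wedge B).root = A.root := w.wedge_φ_root
  rw [← h] at houter' hcycle'
  rw [← hroot] at hcycle'
  refine hW.outer_simple_off_head _ _ houter houter' (hcycle.symm.trans hcycle') ?_ ?_
  · rw [hhead]
    exact w.root_ne_φ_root.symm
  · rw [hhead, hroot]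
    exact w'.root_ne_φ_root.symm

theorem wedge_injective (hA : A.IsDiskTriangulation) (hB : B.IsDiskTriangulation)
    (hAB : ∀ d, A.α d ≠ d → B.α d = d) (hA' : A'.IsDiskTriangulation)
    (hB' : B'.IsDiskTriangulation) (hAB' : ∀ d, A'.α d ≠ d → B'.α d = d)
    (h : A.wedge B = A'.wedge B') : A = A' ∧ B = B' := by
  have w := separates_of_ghost hA.1 hB.1 hAB
  have w' := separates_of_ghost hA'.1 hB'.1 hAB'
  have hrootB : (A.wedge B).root = (A'.wedge B').root := by rw [h]
  change B.root = B'.root at hrootB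
  have hrootA : A.root = A'.root := by rw [← w.wedge_φ_root, ← w'.wedge_φ_root, h, hrootB]
  have hhead := head_unique_of_wedge_eq w w' (w.isNearTriangulation_wedge_iff.2 ⟨hA, hB⟩) h hrootA
  have hα : (A.wedge B).α = (A'.wedge B').α := by rw [h]
  change A.α * B.α = A'.α * B'.α at hα
  have hσ : A.σ * B.σ = A'.σ * B'.σ := by
    have hσ : (A.wedge B).σ = (A'.wedge B').σ := by rw [h]
    rwa [wedge, wedge, ← hrootA, ← hhead, mul_right_inj] at hσ
  have hghost : (fun d => A.α d ≠ d) = fun d => A'.α d ≠ d := by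
    ext d
    rw [α_ne_iff_linked hA.1 w, α_ne_iff_linked hA'.1 w', hσ, hα, hrootA]
  have unionσ := w.unionσ
  have unionα := w.unionα
  rw [hghost, hσ] at unionσ
  rw [hghost, hα] at unionα
  exact ⟨DartMap.ext (unionσ.left_unique w'.unionσ) (unionα.left_unique w'.unionα) hrootA,
    DartMap.ext (unionσ.symm.left_unique w'.unionσ.symm)
      (unionα.symm.left_unique w'.unionα.symm) hrootB⟩

end DartMap

namespace Realizes

variable [Finite X]

theorem of_add (h : Realizes (.add T) M) : Realizes T M.deleteRoot ∧ M.deleteRoot.OuterSimple := by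
  cases h with
  | add hk hN hxy hx hy =>
    rw [← (hN.edgeClosing_add hk hxy hx hy).eq_deleteRoot]
    exact ⟨hN, hN.isDiskTriangulation.2⟩

theorem of_wedge (h : Realizes (.wedge S T) M) : ∃ A B, Realizes S A ∧ Realizes T B ∧
    (∀ d, A.α d ≠ d → B.α d = d) ∧ M.deleteRoot = A.wedge B ∧ ¬ M.deleteRoot.OuterSimple := by
  cases h with
  | @wedge _ _ A B _ _ hA hB hAB hxy hx hy =>
    have e := DartMap.edgeClosing_wedge hA.isDiskTriangulation hB.isDiskTriangulation hAB hxy hx hy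
    have w := DartMap.separates_of_ghost hA.isDiskTriangulation.1 hB.isDiskTriangulation.1 hAB
    rw [← e.eq_deleteRoot]
    exact ⟨A, B, hA, hB, hAB, rfl, w.not_outerSimple_wedge⟩

theorem eq_edge_iff (h : Realizes c M) : c = .edge ↔ M.φ (M.φ M.root) = M.root := by
  constructor
  · rintro rfl
    cases h
    exact singleEdge_φ_φ_root
  · intro hroot
    exact h.invariants.2.2.resolve_right fun h => h.2 hroot

theorem unique (h : Realizes c M) (h' : Realizes c' M) : c = c' := by
  induction c generalizing M c' with
  | edge => exact (h'.eq_edge_iff.2 (h.eq_edge_iff.1 rfl)).symm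
  | add T ih =>
    obtain ⟨hT, houter⟩ := h.of_add
    cases c' with
    | edge => exact h.eq_edge_iff.2 (h'.eq_edge_iff.1 rfl)
    | add T' => rw [ih hT h'.of_add.1]
    | wedge S' T' =>
      obtain ⟨_, _, _, _, _, _, hnot⟩ := h'.of_wedge
      exact (hnot houter).elim
  | wedge S T ihS ihT =>
    obtain ⟨A, B, hA, hB, hAB, hW, hnot⟩ := h.of_wedge
    cases c' with
    | edge => exact h.eq_edge_iff.2 (h'.eq_edge_iff.1 rfl)
    | add T' => exact (hnot h'.of_add.2).elim
    | wedge S' T' =>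
      obtain ⟨A', B', hA', hB', hAB', hW', -⟩ := h'.of_wedge
      obtain ⟨rfl, rfl⟩ := DartMap.wedge_injective hA.isDiskTriangulation hB.isDiskTriangulation
        hAB hA'.isDiskTriangulation hB'.isDiskTriangulation hAB' (hW.symm.trans hW')
      rw [ihS hA hA', ihT hB hB']

end Realizes

end Uniqueness

section Relabel

variable {X : Type*} {A B A' B' M N N' : DartMap X} {f g h : Perm X} {x y x' y' d : X} {c : Code}

theorem exists_perm_eqOn [Finite X] {D E : Set X} (hDE : Disjoint D E)
    (himage : Disjoint (g '' D) (h '' E)) : ∃ f : Perm X, Set.EqOn f g D ∧ Set.EqOn f h E := by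
  classical
  have := Fintype.ofFinite X
  have hg : Set.EqOn (D.piecewise g h) g D := D.piecewise_eqOn g h
  have hh : Set.EqOn (D.piecewise g h) h E := (D.piecewise_eqOn_compl g h).mono
    (Set.subset_compl_iff_disjoint_left.2 hDE)
  have hinj : Set.InjOn (D.piecewise g h) (D ∪ E) := by
    rw [Set.injOn_union hDE]
    refine ⟨hg.injOn_iff.2 g.injective.injOn, hh.injOn_iff.2 h.injective.injOn,
      fun d hd e he heq => ?_⟩
    rw [hg hd, hh he] at heq
    exact Set.disjoint_left.1 himage ⟨d, hd, rfl⟩ ⟨e, he, heq.symm⟩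
  have hmaps : Set.MapsTo (D.piecewise g h) (D ∪ E) (Finset.univ : Finset X) :=
    fun _ _ => Finset.mem_coe.2 (Finset.mem_univ _)
  obtain ⟨f, hf⟩ := hmaps.exists_equiv_extend_of_card_eq Finset.card_univ.symm hinj
  exact ⟨f.trans (Equiv.subtypeUnivEquiv fun _ => Finset.mem_univ _),
    fun d hd => (hf d (Or.inl hd)).trans (hg hd), fun d hd => (hf d (Or.inr hd)).trans (hh hd)⟩

theorem exists_perm_apply_eq_and (hxy : x ≠ y) (hxy' : x' ≠ y') :
    ∃ f : Perm X, f x = x' ∧ f y = y' :=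
  MulAction.is_two_pretransitive_iff.1 (Equiv.Perm.isMultiplyPretransitive X 2) hxy hxy'

theorem conj_eq_conj_of_eqOn {s : Perm X} (h : ∀ d, s d ≠ d → f d = g d) :
    f * s * f⁻¹ = g * s * g⁻¹ := by
  have hdisj : Disjoint (g⁻¹ * f) s := fun d => by
    by_cases hd : s d = d
    · exact Or.inr hd
    · exact Or.inl (by rw [mul_apply, h d hd, inv_eq_iff_eq])
  rw [mul_inv_eq_iff_eq_mul, mul_assoc (g * s), mul_assoc g, ← hdisj.commute.eq, ← mul_assoc,
    mul_inv_cancel_left]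

namespace DartMap

/-- The map obtained from `M` by renaming the darts. -/
def relabel (f : Perm X) (M : DartMap X) : DartMap X := ⟨f * M.σ * f⁻¹, f * M.α * f⁻¹, f M.root⟩

theorem relabel_α_apply : (M.relabel f).α (f d) = f (M.α d) := by simp [relabel]

theorem relabel_φ_apply : (M.relabel f).φ (f d) = f (M.φ d) := by simp [relabel, φ]

theorem relabel_root : (M.relabel f).root = f M.root := rfl

theorem α_apply_eq_iff_of_relabel_eq (hf : M.relabel f = N) : N.α (f d) = f d ↔ M.α d = d := by
  rw [← hf, relabel_α_apply, f.injective.eq_iff]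

theorem relabel_congr (hM : M.IsNearTriangulation) (h : ∀ d, M.α d ≠ d → f d = g d) :
    M.relabel f = M.relabel g := by
  rw [relabel, relabel, conj_eq_conj_of_eqOn fun d hd => h d (mt (hM.σ_ghost d) hd),
    conj_eq_conj_of_eqOn h, h _ hM.α_root_ne]

variable [DecidableEq X]

theorem relabel_singleEdge : (singleEdge x y).relabel f = singleEdge (f x) (f y) := by
  rw [singleEdge, singleEdge, relabel, swap_apply_apply, mul_one, mul_inv_cancel]

theorem relabel_addEdge : (N.addEdge x y).relabel f = (N.relabel f).addEdge (f x) (f y) := by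
  have hφ : (N.relabel f).φ ((N.relabel f).φ (N.relabel f).root) = f (N.φ (N.φ N.root)) := by
    rw [relabel_root, relabel_φ_apply, relabel_φ_apply]
  rw [addEdge, addEdge, hφ]
  simp only [relabel, swap_apply_apply]
  congr 1 <;> group

theorem relabel_wedge : (A.wedge B).relabel f = (A.relabel f).wedge (B.relabel f) := by
  have hφ : (B.relabel f).φ (B.relabel f).root = f (B.φ B.root) := relabel_φ_apply
  rw [wedge, wedge, hφ]
  simp only [relabel, swap_apply_apply]
  congr 1 <;> group

theorem exists_relabel_addEdge_eq [Finite X] (hN : N.IsNearTriangulation) (hg : N.relabel g = N')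
    (hxy : x ≠ y) (hx : N.α x = x) (hy : N.α y = y) (hxy' : x' ≠ y') (hx' : N'.α x' = x')
    (hy' : N'.α y' = y') : ∃ f, (N.addEdge x y).relabel f = N'.addEdge x' y' := by
  obtain ⟨h, rfl, rfl⟩ := exists_perm_apply_eq_and hxy hxy'
  obtain ⟨f, hf, hfh⟩ := exists_perm_eqOn (g := g) (h := h) (D := {d | N.α d ≠ d}) (E := {x, y})
    (by
      rw [Set.disjoint_right]
      rintro _ (rfl | rfl)
      exacts [not_not.2 hx, not_not.2 hy])
    (by
      rw [Set.disjoint_right]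
      rintro _ ⟨_, rfl | rfl, rfl⟩ ⟨d, hd, heq⟩ <;>
        refine hd ((α_apply_eq_iff_of_relabel_eq hg).1 ?_)
      exacts [by rw [heq, hx'], by rw [heq, hy']])
  refine ⟨f, ?_⟩
  rw [relabel_addEdge, relabel_congr hN hf, hg, hfh (Set.mem_insert _ _),
    hfh (Set.mem_insert_of_mem _ rfl)]

theorem exists_relabel_wedge_eq [Finite X] (hA : A.IsNearTriangulation)
    (hB : B.IsNearTriangulation) (hAB : ∀ d, A.α d ≠ d → B.α d = d) (hg : A.relabel g = A')
    (hh : B.relabel h = B') (hAB' : ∀ d, A'.α d ≠ d → B'.α d = d) :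
    ∃ f, (A.wedge B).relabel f = A'.wedge B' := by
  obtain ⟨f, hfg, hfh⟩ := exists_perm_eqOn (g := g) (h := h) (D := {d | A.α d ≠ d})
    (E := {d | B.α d ≠ d}) (Set.disjoint_left.2 fun d hA hB => hB (hAB d hA))
    (by
      rw [Set.disjoint_left]
      rintro _ ⟨d, hd, rfl⟩ ⟨e, he, heq⟩
      refine he ((α_apply_eq_iff_of_relabel_eq hh).1 ?_)
      rw [heq]
      exact hAB' _ (mt (α_apply_eq_iff_of_relabel_eq hg).1 hd))
  exact ⟨f, by rw [relabel_wedge, relabel_congr hA hfg, relabel_congr hB hfh, hg, hh]⟩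

end DartMap

namespace Realizes

variable [DecidableEq X]

theorem relabel (h : Realizes c M) (f : Perm X) : Realizes c (M.relabel f) := by
  have ghost_iff : ∀ (M : DartMap X) {d}, (M.relabel f).α (f d) = f d ↔ M.α d = d :=
    fun _ _ => DartMap.α_apply_eq_iff_of_relabel_eq rfl
  induction h with
  | edge hxy =>
    rw [DartMap.relabel_singleEdge]
    exact .edge (f.injective.ne hxy)
  | wedge _ _ hAB hxy hx hy ihA ihB =>
    rw [DartMap.relabel_addEdge, DartMap.relabel_wedge]
    refine .wedge ihA ihB (fun d hd => ?_) (f.injective.ne hxy) ?_ ?_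
    · obtain ⟨d, rfl⟩ := f.surjective d
      exact (ghost_iff _).2 (hAB d (mt (ghost_iff _).2 hd))
    · rw [← DartMap.relabel_wedge]
      exact (ghost_iff _).2 hx
    · rw [← DartMap.relabel_wedge]
      exact (ghost_iff _).2 hy
  | add hk _ hxy hx hy ih =>
    rw [DartMap.relabel_addEdge]
    exact .add hk ih (f.injective.ne hxy) ((ghost_iff _).2 hx)
      ((ghost_iff _).2 hy)

variable [Finite X]

theorem exists_relabel_eq (h : Realizes c M) (h' : Realizes c N) :
    ∃ f : Perm X, M.relabel f = N := by
  induction h generalizing N with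
  | edge hxy =>
    obtain ⟨hxy'⟩ := h'
    obtain ⟨f, rfl, rfl⟩ := exists_perm_apply_eq_and hxy hxy'
    exact ⟨f, DartMap.relabel_singleEdge⟩
  | wedge hA hB hAB hxy hx hy ihA ihB =>
    obtain - | ⟨hA', hB', hAB', hxy', hx', hy'⟩ := h'
    obtain ⟨g, hg⟩ := ihA hA'
    obtain ⟨h, hh⟩ := ihB hB'
    have hA := hA.isDiskTriangulation
    have hB := hB.isDiskTriangulation
    obtain ⟨f, hf⟩ := DartMap.exists_relabel_wedge_eq hA.1 hB.1 hAB hg hh hAB'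
    exact DartMap.exists_relabel_addEdge_eq ((DartMap.separates_of_ghost hA.1 hB.1
      hAB).isNearTriangulation_wedge_iff.2 ⟨hA, hB⟩) hf hxy hx hy hxy' hx' hy'
  | add _ hN hxy hx hy ih =>
    obtain - | - | ⟨-, hN', hxy', hx', hy'⟩ := h'
    obtain ⟨g, hg⟩ := ih hN'
    exact DartMap.exists_relabel_addEdge_eq hN.isDiskTriangulation.1 hg hxy hx hy hxy' hx' hy'

end Realizes

end Relabel

section Cycles

variable {X : Type*}

theorem numCycles_eq_ncard_range {Y : Type*} {g : Perm X} {f : X → Y}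
    (hf : ∀ x y, f x = f y ↔ g.SameCycle x y) : numCycles g = (Set.range f).ncard := by
  have hker : SameCycle.setoid g = Setoid.ker f := Setoid.ext fun x y => (hf x y).symm
  rw [numCycles, hker, ← Nat.card_coe_set_eq]
  exact Nat.card_congr (Setoid.quotientKerEquivRange f)

theorem setOf_sameCycle_eq_iff {g : Perm X} {x y : X} :
    {z | g.SameCycle x z} = {z | g.SameCycle y z} ↔ g.SameCycle x y :=
  ⟨fun h => (Set.ext_iff.1 h y).2 SameCycle.rfl,
    fun h => Set.ext fun _ => ⟨h.symm.trans, h.trans⟩⟩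

section FixedPointFree

variable [Fintype X] [DecidableEq X] {g : Perm X} {x y : X} (hg : ∀ d, g d ≠ d)
include hg

theorem support_eq_univ : g.support = Finset.univ :=
  Finset.eq_univ_iff_forall.2 fun d => mem_support.2 (hg d)

theorem card_support_cycleOf (x : X) :
    (g.cycleOf x).support.card = Function.minimalPeriod g x := by
  rw [← ncard_sameCycle_eq_minimalPeriod, ← Set.ncard_coe_finset]
  congr 1
  ext y
  rw [Finset.mem_coe, mem_support_cycleOf_iff' (hg x), Set.mem_ofPred_eq]

theorem cycleOf_eq_cycleOf_iff : g.cycleOf x = g.cycleOf y ↔ g.SameCycle x y :=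
  (sameCycle_iff_cycleOf_eq_of_mem_support (mem_support.2 (hg x)) (mem_support.2 (hg y))).symm

theorem coe_cycleFactorsFinset : (g.cycleFactorsFinset : Set (Perm X)) = Set.range g.cycleOf := by
  ext c
  constructor
  · intro hc
    obtain ⟨d, hd⟩ := (mem_cycleFactorsFinset_iff.1 hc).1.nonempty_support
    exact ⟨d, (cycle_is_cycleOf hd hc).symm⟩
  · rintro ⟨d, rfl⟩
    exact cycleOf_mem_cycleFactorsFinset_iff.2 (mem_support.2 (hg d))

theorem numCycles_eq_card_cycleType : numCycles g = Multiset.card g.cycleType := by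
  rw [numCycles_eq_ncard_range fun _ _ => cycleOf_eq_cycleOf_iff hg, ← coe_cycleFactorsFinset hg,
    Set.ncard_coe_finset, cycleType_def, Multiset.card_map, Finset.card_def]

theorem cycleType_eq_cons (r : X) : g.cycleType = (g.cycleOf r).support.card ::ₘ
    (g.cycleFactorsFinset.erase (g.cycleOf r)).1.map (Finset.card ∘ support) := by
  have hmem : g.cycleOf r ∈ g.cycleFactorsFinset.1 :=
    cycleOf_mem_cycleFactorsFinset_iff.2 (mem_support.2 (hg r))
  conv_lhs => rw [cycleType_def, ← Multiset.cons_erase hmem, Multiset.map_cons]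
  rw [Finset.erase_val, Function.comp_apply]

theorem mem_erase_cycleOf_iff {r : X} {c : Perm X} :
    c ∈ g.cycleFactorsFinset.erase (g.cycleOf r) ↔ ∃ d, ¬ g.SameCycle r d ∧ g.cycleOf d = c := by
  rw [Finset.mem_erase, ← Finset.mem_coe (s := g.cycleFactorsFinset), coe_cycleFactorsFinset hg]
  constructor
  · rintro ⟨hc, d, rfl⟩
    exact ⟨d, fun h => hc ((cycleOf_eq_cycleOf_iff hg).2 h.symm), rfl⟩
  · rintro ⟨d, hd, rfl⟩
    exact ⟨fun h => hd ((cycleOf_eq_cycleOf_iff hg).1 h).symm, d, rfl⟩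

theorem cycleType_eq_cons_replicate_iff {r : X} {p q k : ℕ} (hq : 0 < q)
    (hr : (g.cycleOf r).support.card = p) (hcard : Fintype.card X = p + k * q) :
    g.cycleType = p ::ₘ Multiset.replicate k q ↔
      ∀ d, ¬ g.SameCycle r d → Function.minimalPeriod g d = q := by
  rw [cycleType_eq_cons hg r, hr, Multiset.cons_inj_right, Multiset.eq_replicate,
    and_iff_right_of_imp]
  · simp only [Multiset.mem_map, Finset.mem_val, mem_erase_cycleOf_iff hg,
      ← card_support_cycleOf hg]
    exact ⟨fun h d hd => h _ ⟨_, ⟨d, hd, rfl⟩, rfl⟩,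
      fun h _ ⟨_, ⟨d, hd, hc⟩, hcard⟩ => hcard ▸ hc ▸ h d hd⟩
  · intro h
    have hsum := sum_cycleType g
    rw [cycleType_eq_cons hg r, hr, Multiset.sum_cons, Multiset.eq_replicate_card.2 h,
      Multiset.sum_replicate, smul_eq_mul, support_eq_univ hg, Finset.card_univ, hcard] at hsum
    exact Nat.eq_of_mul_eq_mul_right hq (Nat.add_left_cancel hsum)

end FixedPointFree

theorem numCycles_mul_two_of_involutive [Finite X] {g : Perm X} (hg : ∀ d, g d ≠ d)
    (hinv : ∀ d, g (g d) = d) : numCycles g * 2 = Nat.card X := by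
  have := Fintype.ofFinite X
  classical
  have hpow : g ^ 2 = 1 := Equiv.ext fun d => by rw [pow_two, mul_apply, hinv, one_apply]
  have hsum := sum_cycleType g
  rwa [cycleType_of_pow_prime_eq_one hpow, Multiset.sum_replicate, smul_eq_mul,
    ← numCycles_eq_card_cycleType hg, support_eq_univ hg, Finset.card_univ,
    ← Nat.card_eq_fintype_card] at hsum

theorem minimalPeriod_eq_three_iff {Y : Type*} {f : Y → Y} {x : Y} (hx : f x ≠ x) :
    Function.minimalPeriod f x = 3 ↔ f (f (f x)) = x := by
  rw [Function.minimalPeriod_eq_prime_iff (p := 3)]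
  exact and_iff_left hx

end Cycles

namespace DartMap

section Connectivity

variable {X : Type*} {M : DartMap X} {v x y : X}

/-- A step from a dart to the next one at its vertex or to the other dart of its edge, avoiding the
vertex of `v`. -/
def StepAvoiding (M : DartMap X) (v x y : X) : Prop :=
  ¬ M.σ.SameCycle v x ∧ ¬ M.σ.SameCycle v y ∧ (y = M.σ x ∨ y = M.α x)

/-- There is a walk between the darts `x` and `y` which avoids the vertex of `v`. -/
def ReachesAvoiding (M : DartMap X) (v : X) : X → X → Prop :=
  Relation.ReflTransGen (M.StepAvoiding v)

/-- `M` stays connected when any one vertex is deleted. -/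
def TwoConnected (M : DartMap X) : Prop :=
  ∀ v d d', ¬ M.σ.SameCycle v d → ¬ M.σ.SameCycle v d' → M.ReachesAvoiding v d d'

theorem ReachesAvoiding.linked_swap_mul [DecidableEq X] {a b : X} (hab : M.σ.SameCycle a b)
    (h : M.ReachesAvoiding a x y) : Linked (swap a b * M.σ) M.α x y := by
  induction h with
  | refl => exact Linked.refl _ _ _
  | tail _ hstep ih =>
    refine ih.trans ?_
    obtain ⟨-, hz, rfl | rfl⟩ := hstep
    · convert linked_apply_left_perm (swap a b * M.σ) M.α _ using 1
      rw [mul_apply, swap_apply_of_ne_of_ne]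
      · exact fun e => hz (by rw [e])
      · exact fun e => hz (by rwa [e])
    · exact linked_apply_right_perm _ _ _

theorem TwoConnected.outerSimple [Finite X] (two : M.TwoConnected)
    (hα : Function.Involutive M.α) (no_loop : ∀ d, ¬ M.σ.SameCycle d (M.α d))
    (euler : numCycles M.σ + numCycles M.α + numCycles M.φ =
      Nat.card X + 2 * numComponents M.σ M.α) : M.OuterSimple := by
  classical
  intro a b ha hb hσ
  by_contra hne
  refine not_linked_swap_mul hα euler hne hσ (ha.symm.trans hb) ?_
  have hwalk : M.ReachesAvoiding a (M.α a) (M.α b) :=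
    two _ _ _ (no_loop a) fun h => no_loop b (hσ.symm.trans h)
  exact ((linked_apply_right_perm _ _ a).trans (hwalk.linked_swap_mul hσ)).trans
    (linked_apply_right_perm _ _ b).symm

section Walks

variable [Finite X]

theorem reachesAvoiding_of_sameCycle (hx : ¬ M.σ.SameCycle v x) (hxy : M.σ.SameCycle x y) :
    M.ReachesAvoiding v x y := by
  refine (sameCycle_induction hxy (fun z => ¬ M.σ.SameCycle v z ∧ M.ReachesAvoiding v x z)
    ⟨hx, .refl⟩ ?_).2
  rintro z ⟨hz, hwalk⟩
  have hσz : ¬ M.σ.SameCycle v (M.σ z) := mt sameCycle_apply_right.1 hz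
  exact ⟨hσz, hwalk.tail ⟨hz, hσz, Or.inl rfl⟩⟩

theorem ReachesAvoiding.symm (hα : Function.Involutive M.α) (h : M.ReachesAvoiding v x y) :
    M.ReachesAvoiding v y x := by
  induction h with
  | refl => exact .refl
  | tail _ hstep ih =>
    obtain ⟨hz, hz', rfl | rfl⟩ := hstep
    · exact (reachesAvoiding_of_sameCycle hz' (sameCycle_self_apply _ _).symm).trans ih
    · exact .head ⟨hz', hz, Or.inr (hα _).symm⟩ ih

/-- Crosses the triangle between two consecutive edges at `v` along its side opposite to `v`. -/
theorem IsNearTriangulation.reachesAvoiding_α_σ (hM : M.IsNearTriangulation)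
    (live : ∀ d, M.α d ≠ d) (hx : M.σ.SameCycle v x) (hinner : ¬ M.OnOuter (M.σ x)) :
    M.ReachesAvoiding v (M.α (M.σ x)) (M.α x) := by
  have not_at_α : ∀ w, M.σ.SameCycle v w → ¬ M.σ.SameCycle v (M.α w) := fun w hw h =>
    hM.no_loop w (live w) (hw.symm.trans h)
  have hαx : ¬ M.σ.SameCycle v (M.α x) := not_at_α _ hx
  have hασx : ¬ M.σ.SameCycle v (M.α (M.σ x)) := not_at_α _ (sameCycle_apply_right.2 hx)
  have hφαx : M.φ (M.α x) = M.σ x := by rw [φ_apply, hM.α_involutive]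
  have htriangle : M.φ (M.φ (M.σ x)) = M.α x :=
    M.φ.injective ((hM.inner_face _ (live _) hinner).trans hφαx.symm)
  set z := M.φ (M.σ x)
  have hz : M.σ.SameCycle (M.α (M.σ x)) z := sameCycle_self_apply _ _
  have hαz : M.σ.SameCycle (M.α z) (M.α x) := htriangle ▸ sameCycle_self_apply _ _
  have hvz : ¬ M.σ.SameCycle v z := fun h => hασx (h.trans hz.symm)
  have hvαz : ¬ M.σ.SameCycle v (M.α z) := fun h => hαx (h.trans hαz)
  exact ((reachesAvoiding_of_sameCycle hασx hz).tail ⟨hvz, hvαz, Or.inr rfl⟩).trans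
    (reachesAvoiding_of_sameCycle hvαz hαz)

variable (hM : M.IsDiskTriangulation) (live : ∀ d, M.α d ≠ d)
include hM live

theorem IsDiskTriangulation.reachesAvoiding_neighbors (hx : M.σ.SameCycle v x)
    (hy : M.σ.SameCycle v y) : M.ReachesAvoiding v (M.α x) (M.α y) := by
  obtain ⟨w, hw, hw_unique⟩ : ∃ w, M.σ.SameCycle v w ∧
      ∀ x, M.σ.SameCycle v x → M.OnOuter x → x = w := by
    by_cases h : ∃ w, M.σ.SameCycle v w ∧ M.OnOuter w
    · obtain ⟨w, hw, hw_outer⟩ := h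
      exact ⟨w, hw, fun x hx hx_outer => hM.2 _ _ hx_outer hw_outer (hx.symm.trans hw)⟩
    · exact ⟨v, SameCycle.rfl, fun x hx hx_outer => (h ⟨x, hx, hx_outer⟩).elim⟩
  have to_w : ∀ z, M.σ.SameCycle v z → M.ReachesAvoiding v (M.α z) (M.α w) := by
    intro z hz
    refine (sameCycle_induction (hw.symm.trans hz)
      (fun z => M.σ.SameCycle v z ∧ M.ReachesAvoiding v (M.α z) (M.α w)) ⟨hw, .refl⟩ ?_).2
    rintro z ⟨hz, hwalk⟩
    have hσz : M.σ.SameCycle v (M.σ z) := sameCycle_apply_right.2 hz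
    refine ⟨hσz, ?_⟩
    by_cases hzw : M.σ z = w
    · rw [hzw]
      exact .refl
    · exact (hM.1.reachesAvoiding_α_σ live hz fun h => hzw (hw_unique _ hσz h)).trans hwalk
  exact (to_w x hx).trans ((to_w y hy).symm hM.1.α_involutive)

/-- The darts reachable from `d` while avoiding `v`, together with the darts at `v` pointing to
them, form a set closed under both permutations. -/
theorem IsDiskTriangulation.twoConnected : M.TwoConnected := by
  intro v d d' hd hd'
  let S : X → Prop := fun x => (M.σ.SameCycle v x ∧ M.ReachesAvoiding v d (M.α x)) ∨
    (¬ M.σ.SameCycle v x ∧ M.ReachesAvoiding v d x)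
  have hS : Invariant M.σ M.α S := by
    refine ⟨apply_iff_of_apply_imp (S := S) ?_, apply_iff_of_apply_imp (S := S) ?_⟩
    · rintro x (⟨hx, hwalk⟩ | ⟨hx, hwalk⟩)
      · have hσx : M.σ.SameCycle v (M.σ x) := sameCycle_apply_right.2 hx
        exact Or.inl ⟨hσx, hwalk.trans (hM.reachesAvoiding_neighbors live hx hσx)⟩
      · exact Or.inr ⟨mt sameCycle_apply_right.1 hx,
          hwalk.trans (reachesAvoiding_of_sameCycle hx (sameCycle_self_apply _ _))⟩
    · rintro x (⟨hx, hwalk⟩ | ⟨hx, hwalk⟩)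
      · exact Or.inr ⟨fun h => hM.1.no_loop x (live x) (hx.symm.trans h), hwalk⟩
      · by_cases hαx : M.σ.SameCycle v (M.α x)
        · exact Or.inl ⟨hαx, by rwa [hM.1.α_involutive]⟩
        · exact Or.inr ⟨hαx, hwalk.tail ⟨hx, hαx, Or.inr rfl⟩⟩
  have hlinked : Linked M.σ M.α d d' :=
    (hM.1.linked_root d (live d)).symm.trans (hM.1.linked_root d' (live d'))
  rcases (hlinked S hS).1 (Or.inr ⟨hd, .refl⟩) with ⟨h, -⟩ | ⟨-, hwalk⟩
  · exact (hd' h).elim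
  · exact hwalk

end Walks

end Connectivity

end DartMap

section Translation

open DartMap

theorem numOrbits_eq_numCycles {X : Type} (g : Perm X) : numOrbits g = numCycles g :=
  (numCycles_eq_ncard_range fun _ _ => setOf_sameCycle_eq_iff).symm

theorem numComponents_eq_one {X : Type*} [Nonempty X] {s a : Perm X}
    (h : ∀ x y, Linked s a x y) : numComponents s a = 1 :=
  Nat.card_eq_one_iff_unique.2
    ⟨⟨fun p q => Quotient.inductionOn₂ p q fun x y => Quotient.sound (h x y)⟩,
      ⟨Quotient.mk _ (Classical.arbitrary X)⟩⟩

theorem DartMap.numDarts_eq_card {X : Type*} {M : DartMap X} (live : ∀ d, M.α d ≠ d) :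
    M.numDarts = Nat.card X := by
  rw [numDarts, Set.eq_univ_of_forall (s := {d | M.α d ≠ d}) live, Set.ncard_univ]

variable {m n : ℕ}

/-- The dart map of a rooted map, which has no ghosts. -/
def toDartMap (T : RootedMapData m n) : DartMap (Fin (2 * (3 * n + 2 * m + 1))) :=
  ⟨T.σ, T.α, T.root⟩

theorem card_fin_darts (m n : ℕ) :
    Fintype.card (Fin (2 * (3 * n + 2 * m + 1))) = (m + 2) + (2 * n + m) * 3 := by
  rw [Fintype.card_fin]
  ring

theorem φ_toDartMap_ne {T : RootedMapData m n} (live : ∀ d, T.α d ≠ d)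
    (no_loop : ∀ d, ¬ SameOrbit T.σ d (T.α d)) (d : Fin (2 * (3 * n + 2 * m + 1))) :
    (toDartMap T).φ d ≠ d :=
  φ_ne (fun d _ => no_loop d) (live d)

theorem outerDegree_toDartMap {T : RootedMapData m n} (h : IsRootedTriangulation T) :
    (toDartMap T).outerDegree = m + 2 := by
  obtain ⟨live, -, -, -, -, card_root, no_loop, -, -⟩ := h
  rw [outerDegree_eq_minimalPeriod, ← card_support_cycleOf (φ_toDartMap_ne live no_loop)]
  exact card_root

theorem linked_toDartMap {T : RootedMapData m n} (h : IsRootedTriangulation T)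
    (d d' : Fin (2 * (3 * n + 2 * m + 1))) : Linked T.σ T.α d d' :=
  linked_iff_exists_mem_closure.2 (h.2.2.1 d d')

theorem euler_toDartMap {T : RootedMapData m n} (h : IsRootedTriangulation T) :
    numCycles T.σ + numCycles T.α + numCycles T.φ =
      Nat.card (Fin (2 * (3 * n + 2 * m + 1))) + 2 * numComponents T.σ T.α := by
  have : Nonempty (Fin (2 * (3 * n + 2 * m + 1))) := ⟨T.root⟩
  have hcomponents := numComponents_eq_one (linked_toDartMap h)
  obtain ⟨live, hα, -, hσ, hφ, -, no_loop, -, -⟩ := h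
  have hface := numCycles_eq_card_cycleType (g := T.φ) (φ_toDartMap_ne live no_loop)
  have hedge := numCycles_mul_two_of_involutive live hα
  rw [hφ, Multiset.card_cons, Multiset.card_replicate] at hface
  rw [numOrbits_eq_numCycles] at hσ
  rw [Nat.card_fin] at hedge ⊢
  omega

theorem inner_face_toDartMap {T : RootedMapData m n} (h : IsRootedTriangulation T)
    {d : Fin (2 * (3 * n + 2 * m + 1))} (hd : ¬ (toDartMap T).OnOuter d) :
    T.φ (T.φ (T.φ d)) = d := by
  obtain ⟨live, -, -, -, hφ, card_root, no_loop, -, -⟩ := h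
  have hne := φ_toDartMap_ne live no_loop
  refine (minimalPeriod_eq_three_iff (hne d)).1 ?_
  exact (cycleType_eq_cons_replicate_iff hne three_pos card_root (card_fin_darts m n)).1 hφ d hd

theorem isDiskTriangulation_toDartMap {T : RootedMapData m n} (h : IsRootedTriangulation T) :
    (toDartMap T).IsDiskTriangulation := by
  have inner_face := fun d => inner_face_toDartMap (d := d) h
  have linked := linked_toDartMap h
  have euler := euler_toDartMap h
  obtain ⟨live, hα, -, -, -, -, no_loop, no_parallel, two⟩ := h
  have outer_simple : (toDartMap T).OuterSimple :=
    TwoConnected.outerSimple (M := toDartMap T) two hα no_loop euler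
  refine ⟨⟨hα, fun d hd => (live d hd).elim, live _, fun d _ => linked _ d,
    fun d _ => inner_face d, fun d _ => no_loop d, fun d d' _ _ hσ hσα => ?_, euler,
    fun d d' hd hd' hσ _ _ => outer_simple d d' hd hd' hσ⟩, outer_simple⟩
  rcases no_parallel d d' hσ hσα with rfl | rfl
  · rfl
  · exact (no_loop d hσ).elim

theorem hasSize_toDartMap {T : RootedMapData m n} (h : IsRootedTriangulation T) :
    (toDartMap T).HasSize m n := by
  refine ⟨outerDegree_toDartMap h, ?_⟩
  have hσ : numCycles (toDartMap T).σ = n + m + 2 := numOrbits_eq_numCycles T.σ ▸ h.2.2.2.1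
  rw [numDarts_eq_card (M := toDartMap T) h.1, hσ]
  rfl

theorem isRootedTriangulation_of_isDiskTriangulation {T : RootedMapData m n}
    (hT : (toDartMap T).IsDiskTriangulation) (hsize : (toDartMap T).HasSize m n)
    (live : ∀ d, T.α d ≠ d) : IsRootedTriangulation T := by
  have no_loop : ∀ d, ¬ SameOrbit T.σ d (T.α d) := fun d => hT.1.no_loop d (live d)
  have hne := φ_toDartMap_ne live no_loop
  have card_root : (T.φ.cycleOf T.root).support.card = m + 2 := by
    rw [card_support_cycleOf (g := T.φ) hne, ← hsize.1]
    exact ((toDartMap T).outerDegree_eq_minimalPeriod).symm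
  refine ⟨live, hT.1.α_involutive, fun d d' => linked_iff_exists_mem_closure.1 ?_, ?_,
    (cycleType_eq_cons_replicate_iff hne three_pos card_root (card_fin_darts m n)).2
      fun d hd => (minimalPeriod_eq_three_iff (hne d)).2 (hT.1.inner_face d (live d) hd),
    card_root, no_loop,
    fun d d' hσ hσα => Or.inl (hT.1.no_parallel d d' (live d) (live d') hσ hσα).symm,
    hT.twoConnected live⟩
  · exact (hT.1.linked_root d (live d)).symm.trans (hT.1.linked_root d' (live d'))
  · have hcount := hsize.2
    rw [numDarts_eq_card (M := toDartMap T) live] at hcount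
    rw [numOrbits_eq_numCycles]
    change numCycles T.σ + _ = _ at hcount
    omega

theorem mapIso_iff_exists_relabel {T T' : RootedMapData m n} :
    MapIso T T' ↔ ∃ f, (toDartMap T).relabel f = toDartMap T' := by
  refine exists_congr fun f => ?_
  rw [relabel, toDartMap, toDartMap, DartMap.mk.injEq, mul_inv_eq_iff_eq_mul,
    mul_inv_eq_iff_eq_mul, Equiv.ext_iff, Equiv.ext_iff]
  rfl

/-- The type of triangulations counted by `φ_{m,n}`, before identifying isomorphic ones. -/
abbrev RootedTriangulation (m n : ℕ) : Type := {T : RootedMapData m n // IsRootedTriangulation T}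

theorem exists_realizes_toDartMap (T : RootedTriangulation m n) :
    ∃ c, Realizes c (toDartMap T.1) :=
  (isDiskTriangulation_toDartMap T.2).exists_realizes

/-- The code of a triangulation, which determines it up to isomorphism. -/
noncomputable def code (T : RootedTriangulation m n) : Code := (exists_realizes_toDartMap T).choose

theorem realizes_code (T : RootedTriangulation m n) : Realizes (code T) (toDartMap T.1) :=
  (exists_realizes_toDartMap T).choose_spec

theorem mapIso_iff_code_eq (T T' : RootedTriangulation m n) :
    MapIso T.1 T'.1 ↔ code T = code T' := by
  rw [mapIso_iff_exists_relabel]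
  constructor
  · rintro ⟨f, hf⟩
    exact (hf ▸ (realizes_code T).relabel f).unique (realizes_code T')
  · intro h
    exact (h ▸ realizes_code T).exists_relabel_eq (realizes_code T')

/-- The codes of the triangulations of an `(m+2)`-gon with `n` interior vertices. -/
def codes (m n : ℕ) : Set Code := {c | c.Valid ∧ c.outer = m ∧ c.inner = n}

theorem code_mem_codes (T : RootedTriangulation m n) : code T ∈ codes m n := by
  have h := realizes_code T
  exact ⟨h.valid, h.hasSize.unique (hasSize_toDartMap T.2)⟩

theorem exists_code_eq {c : Code} (hc : c ∈ codes m n) :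
    ∃ T : RootedTriangulation m n, code T = c := by
  obtain ⟨hvalid, houter, hinner⟩ := hc
  obtain ⟨M, hM, hlive⟩ := hvalid.exists_realizes
    (D := (Finset.univ : Finset (Fin (2 * (3 * n + 2 * m + 1))))) (by
      rw [Finset.card_univ, Fintype.card_fin, Code.numDarts, houter, hinner])
  have hsize := hM.hasSize
  rw [houter, hinner] at hsize
  let T : RootedTriangulation m n := ⟨⟨M.σ, M.α, M.root⟩,
    isRootedTriangulation_of_isDiskTriangulation hM.isDiskTriangulation hsize
      fun d => (hlive d).2 (Finset.mem_univ d)⟩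
  exact ⟨T, (realizes_code T).unique hM⟩

theorem card_quot_mapIso (m n : ℕ) :
    Nat.card (Quot fun T T' : RootedTriangulation m n => MapIso T.1 T'.1) = (codes m n).ncard := by
  have hker : (fun T T' : RootedTriangulation m n => MapIso T.1 T'.1) = Setoid.ker code :=
    funext₂ fun T T' => propext (mapIso_iff_code_eq T T')
  have hrange : Set.range (code (m := m) (n := n)) = codes m n :=
    Set.Subset.antisymm (Set.range_subset_iff.2 code_mem_codes) fun _ => exists_code_eq
  rw [hker, ← hrange, ← Nat.card_coe_set_eq]
  exact Nat.card_congr (Setoid.quotientKerEquivRange code)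

end Translation

section CodeCounting

open Finset

theorem finite_codes (m n : ℕ) : (codes m n).Finite := by
  have : Finite (RootedMapData m n) :=
    Finite.of_injective (fun T => (T.σ, T.α, T.root)) fun ⟨_, _, _⟩ ⟨_, _, _⟩ h => by
      simp only [Prod.mk.injEq] at h
      obtain ⟨rfl, rfl, rfl⟩ := h
      rfl
  exact (Set.finite_range (code (m := m) (n := n))).subset fun _ => exists_code_eq

/-- `codes m n` as a finset. -/
noncomputable def codeFinset (m n : ℕ) : Finset Code := (finite_codes m n).toFinset

theorem ncard_codes (m n : ℕ) : (codes m n).ncard = #(codeFinset m n) :=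
  Set.ncard_eq_toFinset_card _ (finite_codes m n)

variable {k l m n : ℕ} {c S T : Code}

theorem mem_codeFinset : c ∈ codeFinset m n ↔ c.Valid ∧ c.outer = m ∧ c.inner = n :=
  (finite_codes m n).mem_toFinset

open scoped Classical in
/-- The codes of the triangulations of an `(m+2)`-gon with `n` interior vertices that satisfy
`DartMap.IsFirstNeighbor k`. -/
noncomputable def codesWithNeighbor (k m n : ℕ) : Finset Code :=
  {c ∈ codeFinset m n | c ≠ .edge ∧ c.neighbor = k}

theorem mem_codesWithNeighbor : c ∈ codesWithNeighbor k m n ↔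
    (c.Valid ∧ c.outer = m ∧ c.inner = n) ∧ c ≠ .edge ∧ c.neighbor = k := by
  simp only [codesWithNeighbor, mem_filter, mem_codeFinset]

theorem add_mem_codesWithNeighbor : .add T ∈ codesWithNeighbor k m (n + 1) ↔
    T ∈ codesWithNeighbor (k + 1) (m + 1) n := by
  simp only [mem_codesWithNeighbor, Code.outer, Code.inner, Code.neighbor]
  constructor
  · rintro ⟨⟨hT, houter, hinner⟩, -, hneighbor⟩
    have hlt := hT.neighbor_lt_outer_of_add
    obtain ⟨hT, hpos⟩ := hT
    refine ⟨⟨hT, by lia, by lia⟩, ?_, by lia⟩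
    rintro rfl
    exact absurd hlt (lt_irrefl _)
  · rintro ⟨⟨hT, houter, hinner⟩, -, hneighbor⟩
    exact ⟨⟨⟨hT, by lia⟩, by lia, by lia⟩, by simp, by lia⟩

theorem card_codeFinset_eq_sum (hm : 1 ≤ m) :
    #(codeFinset m n) = ∑ k ∈ range m, #(codesWithNeighbor k m n) := by
  have hne : ∀ c ∈ codeFinset m n, c ≠ .edge := by
    rintro _ hc rfl
    exact absurd (mem_codeFinset.1 hc).2.1 (by simp only [Code.outer]; lia)
  classical
  rw [card_eq_sum_card_fiberwise (f := Code.neighbor) (t := range m)]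
  · refine sum_congr rfl fun k _ => congrArg card (filter_congr fun c hc => ?_)
    exact (and_iff_right (hne c hc)).symm
  · intro c hc
    have hlt := (mem_codeFinset.1 hc).1.neighbor_lt_outer.resolve_left (hne c hc)
    rw [(mem_codeFinset.1 hc).2.1] at hlt
    exact mem_coe.2 (mem_range.2 hlt)

theorem eq_edge_of_mem_codeFinset (hc : c ∈ codeFinset 0 n) : c = .edge := by
  obtain ⟨hvalid, houter, -⟩ := mem_codeFinset.1 hc
  exact hvalid.neighbor_lt_outer.resolve_right (by lia)

theorem card_codeFinset_zero_zero : #(codeFinset 0 0) = 1 :=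
  card_eq_one.2 ⟨.edge, eq_singleton_iff_unique_mem.2
    ⟨mem_codeFinset.2 ⟨trivial, rfl, rfl⟩, fun _ => eq_edge_of_mem_codeFinset⟩⟩

theorem codeFinset_zero_succ : codeFinset 0 (n + 1) = ∅ := by
  refine eq_empty_of_forall_notMem fun c hc => ?_
  obtain rfl := eq_edge_of_mem_codeFinset hc
  exact absurd (mem_codeFinset.1 hc).2.2 (Nat.succ_ne_zero n).symm

open scoped Classical in
/-- The wedges of a triangulation of a `(k+2)`-gon with one of an `(l+2)`-gon that have `n` interior
vertices in total. -/
noncomputable def wedges (k l n : ℕ) : Finset Code :=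
  (antidiagonal n).biUnion fun p => image₂ .wedge (codeFinset k p.1) (codeFinset l p.2)

theorem mem_wedges : c ∈ wedges k l n ↔ ∃ S T, (S.Valid ∧ S.outer = k) ∧ (T.Valid ∧ T.outer = l) ∧
    S.inner + T.inner = n ∧ .wedge S T = c := by
  simp only [wedges, mem_biUnion, mem_image₂, HasAntidiagonal.mem_antidiagonal, mem_codeFinset]
  constructor
  · rintro ⟨p, hp, S, ⟨hS, hSo, hSi⟩, T, ⟨hT, hTo, hTi⟩, rfl⟩
    exact ⟨S, T, ⟨hS, hSo⟩, ⟨hT, hTo⟩, by rw [hSi, hTi, hp], rfl⟩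
  · rintro ⟨S, T, ⟨hS, hSo⟩, ⟨hT, hTo⟩, hn, rfl⟩
    exact ⟨(S.inner, T.inner), hn, S, ⟨hS, hSo, rfl⟩, T, ⟨hT, hTo, rfl⟩, rfl⟩

theorem card_wedges (k l n : ℕ) :
    #(wedges k l n) = ∑ p ∈ antidiagonal n, #(codeFinset k p.1) * #(codeFinset l p.2) := by
  classical
  rw [wedges, card_biUnion]
  · refine sum_congr rfl fun p _ => card_image₂ (fun S T S' T' h => ?_) _ _
    exact Code.wedge.inj h
  · rintro ⟨a, b⟩ - ⟨a', b'⟩ - hne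
    refine disjoint_left.2 fun c hc hc' => hne ?_
    obtain ⟨S, hS, T, hT, rfl⟩ := mem_image₂.1 hc
    obtain ⟨S', hS', T', hT', h⟩ := mem_image₂.1 hc'
    obtain ⟨rfl, rfl⟩ := Code.wedge.inj h
    exact Prod.ext ((mem_codeFinset.1 hS).2.2.symm.trans (mem_codeFinset.1 hS').2.2)
      ((mem_codeFinset.1 hT).2.2.symm.trans (mem_codeFinset.1 hT').2.2)

theorem wedge_mem_codesWithNeighbor : .wedge S T ∈ codesWithNeighbor k (k + l + 1) n ↔
    .wedge S T ∈ wedges k l n := by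
  simp only [mem_codesWithNeighbor, mem_wedges, Code.Valid, Code.outer, Code.inner, Code.neighbor,
    Code.wedge.injEq]
  constructor
  · rintro ⟨⟨⟨hS, hT⟩, houter, hinner⟩, -, rfl⟩
    exact ⟨S, T, ⟨hS, rfl⟩, ⟨hT, by lia⟩, hinner, rfl, rfl⟩
  · rintro ⟨S, T, ⟨hS, rfl⟩, ⟨hT, rfl⟩, hinner, rfl, rfl⟩
    exact ⟨⟨⟨hS, hT⟩, rfl, hinner⟩, by simp, rfl⟩

theorem codesWithNeighbor_zero : codesWithNeighbor k (k + l + 1) 0 = wedges k l 0 := by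
  ext c
  cases c with
  | edge => simp [mem_codesWithNeighbor, mem_wedges]
  | wedge S T => exact wedge_mem_codesWithNeighbor
  | add T => simp [mem_codesWithNeighbor, mem_wedges, Code.inner]

theorem card_codesWithNeighbor_succ : #(codesWithNeighbor k (k + l + 1) (n + 1)) =
    #(wedges k l (n + 1)) + #(codesWithNeighbor (k + 1) (k + l + 2) n) := by
  classical
  have hunion : codesWithNeighbor k (k + l + 1) (n + 1) =
      wedges k l (n + 1) ∪ (codesWithNeighbor (k + 1) (k + l + 2) n).image .add := by
    ext c
    rw [mem_union]
    cases c with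
    | edge => simp [mem_codesWithNeighbor, mem_wedges]
    | wedge S T => simp [wedge_mem_codesWithNeighbor]
    | add T => simp [add_mem_codesWithNeighbor, mem_wedges]
  have hdisjoint : Disjoint (wedges k l (n + 1))
      ((codesWithNeighbor (k + 1) (k + l + 2) n).image .add) := by
    refine disjoint_left.2 fun c hc hc' => ?_
    obtain ⟨S, T, -, -, -, rfl⟩ := mem_wedges.1 hc
    simp at hc'
  rw [hunion, card_union_of_disjoint hdisjoint, card_image_of_injective _ fun _ _ => Code.add.inj]

end CodeCounting

section GeneratingSeries

open Finset PowerSeries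

/-- The recursion satisfied by the generating series `S m`, by number of interior vertices, of the
triangulations of an `(m+2)`-gon. The subtracted term accounts for the triangulations that satisfy
`DartMap.IsFirstNeighbor 0`, over which no further triangle can be closed. -/
structure IsPolygonSeries {R : Type*} [CommRing R] (S : ℕ → R⟦X⟧) : Prop where
  zero : S 0 = 1
  succ : ∀ m, S (m + 1) = ∑ p ∈ antidiagonal m, S p.1 * S p.2 + X * S (m + 2)
    - X * (S 1 * S (m + 1))

theorem IsPolygonSeries.unique {R : Type*} [CommRing R] {S T : ℕ → R⟦X⟧}
    (hS : IsPolygonSeries S) (hT : IsPolygonSeries T) : S = T := by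
  suffices h : ∀ t m n, 2 * n + m ≤ t → coeff n (S m) = coeff n (T m) from
    funext fun m => PowerSeries.ext fun n => h _ m n le_rfl
  intro t
  induction t with
  | zero =>
    intro m n h
    obtain rfl : m = 0 := by lia
    rw [hS.zero, hT.zero]
  | succ t ih =>
    intro m n h
    rcases m with _ | m
    · rw [hS.zero, hT.zero]
    have coeff_mul_congr {a b i : ℕ} (hi : 2 * i + max a b ≤ t) :
        coeff i (S a * S b) = coeff i (T a * T b) := by
      rw [coeff_mul, coeff_mul]
      refine sum_congr rfl fun q hq => ?_
      have hq := HasAntidiagonal.mem_antidiagonal.1 hq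
      rw [ih _ _ (by lia), ih _ _ (by lia)]
    have hsum : ∑ p ∈ antidiagonal m, coeff n (S p.1 * S p.2) =
        ∑ p ∈ antidiagonal m, coeff n (T p.1 * T p.2) :=
      sum_congr rfl fun p hp => coeff_mul_congr <| by
        have := HasAntidiagonal.mem_antidiagonal.1 hp
        lia
    rw [hS.succ, hT.succ]
    simp only [map_sub, _root_.map_add, map_sum, hsum]
    rcases n with _ | n
    · simp only [coeff_zero_X_mul]
    · simp only [coeff_succ_X_mul]
      rw [ih _ _ (by lia), coeff_mul_congr (by lia)]

/-- The generating series, by number of interior vertices, of the triangulations of an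
`(m+2)`-gon. -/
noncomputable def polygonSeries (m : ℕ) : ℚ⟦X⟧ := .mk fun n => (#(codeFinset m n) : ℚ)

/-- The part of `polygonSeries m` contributed by `codesWithNeighbor k m`. -/
noncomputable def neighborSeries (k m : ℕ) : ℚ⟦X⟧ := .mk fun n => (#(codesWithNeighbor k m n) : ℚ)

theorem polygonSeries_zero : polygonSeries 0 = 1 := by
  ext n
  rcases n with _ | n
  · simp [polygonSeries, card_codeFinset_zero_zero]
  · simp [polygonSeries, codeFinset_zero_succ, coeff_one]

theorem polygonSeries_eq_sum {m : ℕ} (hm : 1 ≤ m) :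
    polygonSeries m = ∑ k ∈ range m, neighborSeries k m := by
  ext n
  simp only [polygonSeries, neighborSeries, map_sum, coeff_mk, card_codeFinset_eq_sum hm,
    Nat.cast_sum]

theorem neighborSeries_eq (k l : ℕ) : neighborSeries k (k + l + 1) =
    polygonSeries k * polygonSeries l + X * neighborSeries (k + 1) (k + l + 2) := by
  ext n
  rw [_root_.map_add, coeff_mul]
  rcases n with _ | n
  · simp [neighborSeries, polygonSeries, codesWithNeighbor_zero, card_wedges]
  · simp [neighborSeries, polygonSeries, coeff_succ_X_mul, card_codesWithNeighbor_succ, card_wedges]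

theorem neighborSeries_eq_mul (k l : ℕ) :
    neighborSeries k (k + l + 1) = neighborSeries k (k + 1) * polygonSeries l := by
  let D k := neighborSeries k (k + l + 1) - neighborSeries k (k + 1) * polygonSeries l
  have hD : ∀ k, D k = X * D (k + 1) := by
    intro k
    have h := neighborSeries_eq k 0
    rw [polygonSeries_zero, mul_one, add_zero] at h
    simp only [D, neighborSeries_eq k l, h, show k + 1 + l + 1 = k + l + 2 by ring]
    ring
  suffices h : ∀ n k, coeff n (D k) = 0 from
    sub_eq_zero.1 (PowerSeries.ext fun n => (h n k).trans (map_zero _).symm)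
  intro n
  induction n with
  | zero => intro k; rw [hD, coeff_zero_X_mul]
  | succ n ih => intro k; rw [hD, coeff_succ_X_mul, ih]

theorem polygonSeries_succ (m : ℕ) : polygonSeries (m + 1) =
    ∑ p ∈ antidiagonal m, polygonSeries p.1 * polygonSeries p.2 + X * polygonSeries (m + 2)
      - X * (polygonSeries 1 * polygonSeries (m + 1)) := by
  have hfirst : neighborSeries 0 (m + 2) = polygonSeries 1 * polygonSeries (m + 1) := by
    have h := neighborSeries_eq_mul 0 (m + 1)
    rw [zero_add, zero_add] at h
    rw [h, polygonSeries_eq_sum le_rfl, sum_range_one]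
  have hrest : polygonSeries (m + 2) - polygonSeries 1 * polygonSeries (m + 1) =
      ∑ k ∈ range (m + 1), neighborSeries (k + 1) (m + 2) := by
    rw [polygonSeries_eq_sum (Nat.le_add_left 1 (m + 1)), sum_range_succ', hfirst,
      add_sub_cancel_right]
  rw [add_sub_assoc, ← mul_sub, hrest, mul_sum, Nat.sum_antidiagonal_eq_sum_range_succ_mk,
    ← sum_add_distrib, polygonSeries_eq_sum (Nat.le_add_left 1 m)]
  refine sum_congr rfl fun k hk => ?_
  have hk := mem_range.1 hk
  have h := neighborSeries_eq k (m - k)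
  rwa [show k + (m - k) + 1 = m + 1 by lia, show k + (m - k) + 2 = m + 2 by lia] at h

theorem isPolygonSeries_polygonSeries : IsPolygonSeries polygonSeries :=
  ⟨polygonSeries_zero, polygonSeries_succ⟩

end GeneratingSeries

section Catalan

open Finset

theorem succ_succ_mul_catalan_succ (m : ℕ) :
    (m + 2) * catalan (m + 1) = 2 * (2 * m + 1) * catalan m := by
  refine Nat.eq_of_mul_eq_mul_left (Nat.add_one_pos m) ?_
  have h := Nat.succ_mul_centralBinom_succ m
  rw [← succ_mul_catalan_eq_centralBinom, ← succ_mul_catalan_eq_centralBinom] at h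
  linear_combination h

theorem catalan_mul_factorial_mul_factorial (m : ℕ) :
    catalan m * (m.factorial * (m + 1).factorial) = (2 * m).factorial := by
  have h := Nat.choose_mul_factorial_mul_factorial (Nat.le_mul_of_pos_left m two_pos)
  rw [← Nat.centralBinom_eq_two_mul_choose, ← succ_mul_catalan_eq_centralBinom,
    show 2 * m - m = m by lia] at h
  rw [Nat.factorial_succ, ← h]
  ring

variable {R : Type*} [CommRing R]

theorem sum_catalan_mul_catalan (m : ℕ) :
    ∑ p ∈ antidiagonal m, (catalan p.1 * catalan p.2 : R) = catalan (m + 1) := by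
  rw [catalan_succ']
  push_cast
  rfl

theorem sum_catalan_succ_mul_catalan (m : ℕ) :
    ∑ p ∈ antidiagonal m, (catalan (p.1 + 1) * catalan p.2 : R) =
      catalan (m + 2) - catalan (m + 1) := by
  rw [← sum_catalan_mul_catalan (m + 1), Nat.sum_antidiagonal_succ, catalan_zero, Nat.cast_one,
    one_mul, add_sub_cancel_left]

theorem sum_catalan_mul_catalan_succ (m : ℕ) :
    ∑ p ∈ antidiagonal m, (catalan p.1 * catalan (p.2 + 1) : R) =
      catalan (m + 2) - catalan (m + 1) := by
  rw [← sum_catalan_mul_catalan (m + 1), Nat.sum_antidiagonal_succ', catalan_zero, Nat.cast_one,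
    mul_one, add_sub_cancel_left]

theorem sum_catalan_succ_mul_catalan_succ (m : ℕ) :
    ∑ p ∈ antidiagonal m, (catalan (p.1 + 1) * catalan (p.2 + 1) : R) =
      catalan (m + 3) - 2 * catalan (m + 2) := by
  have h := sum_catalan_succ_mul_catalan (R := R) (m + 1)
  rw [Nat.sum_antidiagonal_succ', catalan_zero] at h
  linear_combination h

end Catalan

section Solution

open Finset PowerSeries

variable {R : Type*} [CommRing R]

/-- The solution of the recursion `IsPolygonSeries` in terms of a series with `B = 1 + X * B ^ 4`,
the generating series of quaternary trees. -/
noncomputable def polygonSolution (B : R⟦X⟧) (m : ℕ) : R⟦X⟧ :=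
  B ^ (2 * m) * (catalan (m + 1) - (catalan (m + 1) - catalan m) * B)

theorem sum_polygonSolution_mul (B : R⟦X⟧) (m : ℕ) :
    ∑ p ∈ antidiagonal m, polygonSolution B p.1 * polygonSolution B p.2 =
      B ^ (2 * m) * ((1 - B) ^ 2 * (catalan (m + 3) - 2 * catalan (m + 2)) +
        2 * B * (1 - B) * (catalan (m + 2) - catalan (m + 1)) + B ^ 2 * catalan (m + 1)) := by
  have hterm : ∀ p ∈ antidiagonal m, polygonSolution B p.1 * polygonSolution B p.2 =
      B ^ (2 * m) * ((1 - B) ^ 2 * (catalan (p.1 + 1) * catalan (p.2 + 1)) +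
        B * (1 - B) * (catalan (p.1 + 1) * catalan p.2) +
        B * (1 - B) * (catalan p.1 * catalan (p.2 + 1)) + B ^ 2 * (catalan p.1 * catalan p.2)) := by
    intro p hp
    rw [← HasAntidiagonal.mem_antidiagonal.1 hp]
    simp only [polygonSolution]
    ring
  rw [sum_congr rfl hterm]
  simp only [← mul_sum, sum_add_distrib, sum_catalan_mul_catalan, sum_catalan_succ_mul_catalan,
    sum_catalan_mul_catalan_succ, sum_catalan_succ_mul_catalan_succ]
  ring

theorem isPolygonSeries_polygonSolution {B : R⟦X⟧} (hB : X * B ^ 4 = B - 1) :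
    IsPolygonSeries (polygonSolution B) where
  zero := by simp [polygonSolution]
  succ m := by
    have hunit : IsUnit B := .of_mul_eq_one (1 - X * B ^ 3) (by linear_combination -hB)
    refine (hunit.pow 2).mul_left_cancel ?_
    have hnext : B ^ 2 * (X * polygonSolution B (m + 2)) = (B - 1) * B ^ (2 * m + 2) *
        (catalan (m + 3) - (catalan (m + 3) - catalan (m + 2)) * B : R⟦X⟧) := by
      rw [← hB, polygonSolution]
      ring
    have hfirst : B ^ 2 * (X * (polygonSolution B 1 * polygonSolution B (m + 1))) =
        (B - 1) * (2 - B) * polygonSolution B (m + 1) := by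
      rw [← hB, polygonSolution, catalan_one, catalan_two]
      push_cast
      ring
    rw [sum_polygonSolution_mul, mul_sub, mul_add, hnext, hfirst]
    simp only [polygonSolution]
    ring

end Solution

section QuaternaryForests

open Finset PowerSeries

/-- The number of ordered forests of `r` quaternary trees with `n` inner nodes in total. -/
def forestCount : ℕ → ℕ → ℚ
  | 0, n => if n = 0 then 1 else 0
  | r + 1, n => (r + 1) * (4 * n + r).factorial / (n.factorial * (3 * n + r + 1).factorial)

theorem forestCount_succ_mul (r n : ℕ) :
    forestCount (r + 1) n * (n.factorial * (3 * n + r + 1).factorial) =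
      (r + 1) * (4 * n + r).factorial :=
  div_mul_cancel₀ _ (by positivity)

theorem forestCount_zero_right (r : ℕ) : forestCount r 0 = 1 := by
  rcases r with _ | r
  · rfl
  · have h := forestCount_succ_mul r 0
    rw [mul_zero, mul_zero, zero_add, Nat.factorial_zero, Nat.cast_one, one_mul,
      Nat.factorial_succ, Nat.cast_mul, Nat.cast_succ] at h
    exact (mul_eq_right₀ (by positivity)).1 h

theorem mul_forestCount_succ (r n : ℕ) : (3 * n + r + 1) * r * forestCount (r + 1) n =
    (r + 1) * (4 * n + r) * forestCount r n := by
  rcases r with _ | r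
  · rcases n with _ | n <;> simp [forestCount]
  · simp only [forestCount, ← add_assoc, Nat.factorial_succ (4 * n + r),
      Nat.factorial_succ (3 * n + r + 1)]
    push_cast
    field_simp
    ring

theorem forestCount_succ_succ (r n : ℕ) :
    forestCount (r + 1) (n + 1) = forestCount r (n + 1) + forestCount (r + 4) n := by
  rcases r with _ | r
  · simp only [forestCount, n.succ_ne_zero, if_false, zero_add]
    rw [show 4 * (n + 1) + 0 = 4 * n + 3 + 1 by ring, show 3 * (n + 1) + 1 = 3 * n + 3 + 1 by ring,
      Nat.factorial_succ (4 * n + 3), Nat.factorial_succ n]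
    push_cast
    field_simp
    ring
  · simp only [forestCount]
    rw [show 4 * (n + 1) + (r + 1) = 4 * n + r + 4 + 1 by ring,
      show 3 * (n + 1) + (r + 1) + 1 = 3 * n + r + 4 + 1 by ring,
      show 4 * (n + 1) + r = 4 * n + r + 4 by ring,
      show 3 * (n + 1) + r + 1 = 3 * n + r + 4 by ring,
      show 4 * n + (r + 1 + 3) = 4 * n + r + 4 by ring,
      show 3 * n + (r + 1 + 3) + 1 = 3 * n + r + 4 + 1 by ring,
      Nat.factorial_succ (4 * n + r + 4), Nat.factorial_succ n, Nat.factorial_succ (3 * n + r + 4)]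
    push_cast
    field_simp
    ring

/-- The generating series of ordered forests of `r` quaternary trees, by number of inner nodes. -/
def forestSeries (r : ℕ) : ℚ⟦X⟧ := .mk (forestCount r)

theorem forestSeries_zero : forestSeries 0 = 1 := by
  ext n
  simp [forestSeries, forestCount, coeff_one]

theorem forestSeries_succ (r : ℕ) :
    forestSeries (r + 1) = forestSeries r + X * forestSeries (r + 4) := by
  ext n
  rw [_root_.map_add]
  rcases n with _ | n
  · simp [forestSeries, forestCount_zero_right]
  · simp only [forestSeries, coeff_succ_X_mul, coeff_mk, forestCount_succ_succ]

theorem forestSeries_mul (r s : ℕ) : forestSeries r * forestSeries s = forestSeries (r + s) := by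
  let D r := forestSeries r * forestSeries s - forestSeries (r + s)
  have hzero : D 0 = 0 := by simp only [D, forestSeries_zero, one_mul, zero_add, sub_self]
  have hsucc : ∀ r, D (r + 1) = D r + X * D (r + 4) := by
    intro r
    simp only [D, forestSeries_succ r, forestSeries_succ (r + s),
      show r + 1 + s = r + s + 1 by ring, show r + 4 + s = r + s + 4 by ring]
    ring
  suffices h : ∀ n r, coeff n (D r) = 0 from
    sub_eq_zero.1 (PowerSeries.ext fun n => (h n r).trans (map_zero _).symm)
  intro n
  induction n with
  | zero =>
    intro r
    induction r with
    | zero => rw [hzero, map_zero]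
    | succ r ih => rw [hsucc, _root_.map_add, ih, coeff_zero_X_mul, add_zero]
  | succ n ihn =>
    intro r
    induction r with
    | zero => rw [hzero, map_zero]
    | succ r ih => rw [hsucc, _root_.map_add, ih, coeff_succ_X_mul, ihn, add_zero]

theorem forestSeries_eq_pow (r : ℕ) : forestSeries r = forestSeries 1 ^ r := by
  induction r with
  | zero => rw [forestSeries_zero, pow_zero]
  | succ r ih => rw [← forestSeries_mul, ih, pow_succ]

theorem X_mul_forestSeries_one_pow : X * forestSeries 1 ^ 4 = forestSeries 1 - 1 := by
  have h := forestSeries_succ 0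
  rw [forestSeries_zero, forestSeries_eq_pow (0 + 4)] at h
  linear_combination -h

end QuaternaryForests

section Enumeration

open Finset PowerSeries

theorem polygonSeries_eq_polygonSolution : polygonSeries = polygonSolution (forestSeries 1) :=
  isPolygonSeries_polygonSeries.unique (isPolygonSeries_polygonSolution X_mul_forestSeries_one_pow)

theorem card_codeFinset (m n : ℕ) : (#(codeFinset m n) : ℚ) =
    catalan (m + 1) * forestCount (2 * m) n -
      (catalan (m + 1) - catalan m) * forestCount (2 * m + 1) n := by
  have hseries : polygonSeries m = C (catalan (m + 1) : ℚ) * forestSeries (2 * m) -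
      C (catalan (m + 1) - catalan m : ℚ) * forestSeries (2 * m + 1) := by
    rw [polygonSeries_eq_polygonSolution, polygonSolution, forestSeries_eq_pow (2 * m),
      forestSeries_eq_pow (2 * m + 1), map_sub, map_natCast, map_natCast]
    ring
  have h := congrArg (coeff n) hseries
  rw [map_sub, coeff_C_mul, coeff_C_mul] at h
  simpa only [polygonSeries, forestSeries, coeff_mk] using h

theorem mul_card_codeFinset (m n : ℕ) : (3 * n + 2 * m + 1) * (#(codeFinset m n) : ℚ) =
    (2 * m + 1) * catalan m * forestCount (2 * m) n := by
  have hcatalan : ((m : ℚ) + 2) * catalan (m + 1) = 2 * (2 * m + 1) * catalan m := by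
    exact_mod_cast succ_succ_mul_catalan_succ m
  have hforest := mul_forestCount_succ (2 * m) n
  push_cast at hforest
  have hm : (m : ℚ) + 2 ≠ 0 := by positivity
  refine mul_left_cancel₀ hm ?_
  rw [card_codeFinset]
  linear_combination (3 * n + 2 * m + 1) * (forestCount (2 * m) n - forestCount (2 * m + 1) n) *
    hcatalan - 3 / 2 * (catalan m : ℚ) * hforest

theorem card_codeFinset_mul_factorials {m : ℕ} (hm : 1 ≤ m) (n : ℕ) :
    (#(codeFinset m n) : ℚ) * ((m - 1).factorial * (m + 1).factorial * n.factorial *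
      (3 * n + 2 * m + 1).factorial) =
    2 * (2 * m + 1).factorial * (4 * n + 2 * m - 1).factorial := by
  have hm' : (m.factorial : ℚ) = m * (m - 1).factorial := by
    exact_mod_cast (Nat.mul_factorial_pred (by lia)).symm
  have hcatalan : (catalan m : ℚ) * (m.factorial * (m + 1).factorial) = (2 * m).factorial := by
    exact_mod_cast catalan_mul_factorial_mul_factorial m
  have hforest : forestCount (2 * m) n * (n.factorial * (3 * n + 2 * m).factorial) =
      2 * m * (4 * n + 2 * m - 1).factorial := by
    have h := forestCount_succ_mul (2 * m - 1) n
    rw [show 2 * m - 1 + 1 = 2 * m by lia, show 3 * n + (2 * m - 1) + 1 = 3 * n + 2 * m by lia,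
      show 4 * n + (2 * m - 1) = 4 * n + 2 * m - 1 by lia] at h
    rw [h, Nat.cast_sub (by lia)]
    push_cast
    ring
  rw [Nat.factorial_succ (3 * n + 2 * m), Nat.factorial_succ (2 * m)]
  push_cast
  rw [← hcatalan, hm']
  linear_combination ((m - 1).factorial * (m + 1).factorial * n.factorial *
      (3 * n + 2 * m).factorial : ℚ) * mul_card_codeFinset m n +
    ((m - 1).factorial * (m + 1).factorial * (2 * m + 1) * catalan m : ℚ) * hforest

end Enumeration

end BrownFormula

theorem stmt_3 (m n : ℕ) (hm : 1 ≤ m) :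
    (Nat.card (Quot fun T T' : {T : RootedMapData m n // IsRootedTriangulation T} =>
        MapIso T.1 T'.1) : ℚ)
      * ((Nat.factorial (m - 1) : ℚ) * (Nat.factorial (m + 1)) * (Nat.factorial n) *
          (Nat.factorial (3 * n + 2 * m + 1)))
    = 2 * (Nat.factorial (2 * m + 1) : ℚ) * (Nat.factorial (4 * n + 2 * m - 1)) := by
  rw [BrownFormula.card_quot_mapIso, BrownFormula.ncard_codes]
  exact BrownFormula.card_codeFinset_mul_factorials hm n
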